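/- There is a constant C > 0 such that for all T ≥ 10 and all parameters y with 2 ≤ y ≤ T, ∫_T^{2T} |R₂(x)|² dx ≤ C·T^{3/2}·y^{−1/2}·(log T)³. -/

import Mathlib

open MeasureTheory

/-- The divisor function `d(n)`. -/
def divfun (n : ℕ) : ℕ := n.divisors.card

/-- The error term in the Dirichlet divisor problem. -/
noncomputable def DirichletDelta (x : ℝ) : ℝ :=
  (∑ n ∈ Finset.Icc 1 ⌊x⌋₊, (divfun n : ℝ)) - x * Real.log x -
    (2 * Real.eulerMascheroniConstant - 1) * x

/-- The truncated Voronoï sum `R₁(x)` with truncation parameter `y`. -/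
noncomputable def R1 (y x : ℝ) : ℝ :=
  (1 / (Real.sqrt 2 * Real.pi)) * ∑ n ∈ Finset.Icc 1 ⌊y⌋₊,
    (divfun n : ℝ) / (n : ℝ) ^ ((3 : ℝ) / 4) * x ^ ((1 : ℝ) / 4) *
      Real.cos (4 * Real.pi * Real.sqrt (n * x) - Real.pi / 4)

/-- The tail `R₂(x) = Δ(x) - R₁(x)`. -/
noncomputable def R2 (y x : ℝ) : ℝ := DirichletDelta x - R1 y x

/-!
Put `u = √x` and average `Δ` over a window of width `δ ≍ T^(-1/2)` in `u`. The window meets no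
integers `n = u²` other than `⌊x⌋` and `⌊x⌋ + 1`, so `Δ` differs from its average by at most
`d(⌊x⌋) + d(⌊x⌋ + 1) + O(log x)`, and these terms contribute `O(T log³ T)` to the mean square.

The average is an absolutely convergent Voronoï series. To obtain it, `Δ` is written through the
sawtooth as a sum over `a` of `{x/a} - 1/2`; Euler-Maclaurin summation in `a` produces a cosine
transform of `F(1/a)`, where `F` is the sine transform of the weight, and the kernel
`∫₀^Y sin(z/t) cos(zt) dt` is evaluated asymptotically by Fresnel integrals. Averaging multiplies
the `m`-th term of the Voronoï series by a factor which is `1 + O(√(m/T))` and decays for `m > T`.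

Subtracting `R₁` leaves coefficients `c(m)` with `∑ c(m)² (1 + √(m/T)) ≪ y^(-1/2) log³ T`, by the
bound `∑_{n ≤ x} d(n)² ≪ x log³ x`. Against a Gaussian weight the frequencies `√m` are nearly
orthogonal, and Schur's test turns this coefficient sum into the mean square.
-/

section OscillatoryIntegrals

open Set Filter Topology
open scoped Interval Real

theorem norm_integral_ofReal_mul_le {a b B : ℝ} (hab : a ≤ b) {f f' : ℝ → ℝ} {E e : ℝ → ℂ}
    (hf : ∀ x ∈ [[a, b]], HasDerivAt f (f' x) x) (hE : ∀ x ∈ [[a, b]], HasDerivAt E (e x) x)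
    (hf' : ContinuousOn f' [[a, b]]) (he : ContinuousOn e [[a, b]])
    (hB : ∀ x ∈ [[a, b]], ‖E x‖ ≤ B) :
    ‖∫ x in a..b, (f x : ℂ) * e x‖ ≤ B * (|f a| + |f b| + ∫ x in a..b, |f' x|) := by
  have hpart := intervalIntegral.integral_mul_deriv_eq_deriv_mul (u := fun x ↦ (f x : ℂ))
    (u' := fun x ↦ (f' x : ℂ)) (fun x hx ↦ (hf x hx).ofReal_comp) hE
    (ContinuousOn.intervalIntegrable (by fun_prop)) he.intervalIntegrable
  have hpoint : ∀ c ∈ [[a, b]], ∀ t : ℝ, ‖(t : ℂ) * E c‖ ≤ B * |t| := fun c hc t ↦ by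
    rw [norm_mul, Complex.norm_real, Real.norm_eq_abs, mul_comm]
    exact mul_le_mul_of_nonneg_right (hB c hc) (abs_nonneg _)
  have hint : ‖∫ x in a..b, (f' x : ℂ) * E x‖ ≤ B * ∫ x in a..b, |f' x| := by
    rw [← intervalIntegral.integral_const_mul]
    refine intervalIntegral.norm_integral_le_of_norm_le hab (Eventually.of_forall fun x hx ↦
      hpoint x (Ioc_subset_Icc_self.trans Icc_subset_uIcc hx) (f' x)) ?_
    exact (hf'.abs.const_smul B).intervalIntegrable
  calc ‖∫ x in a..b, (f x : ℂ) * e x‖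
      = ‖(f b : ℂ) * E b - (f a : ℂ) * E a - ∫ x in a..b, (f' x : ℂ) * E x‖ := by rw [hpart]
    _ ≤ B * |f b| + B * |f a| + B * ∫ x in a..b, |f' x| :=
        (norm_sub_le _ _).trans (add_le_add ((norm_sub_le _ _).trans
          (add_le_add (hpoint b right_mem_uIcc _) (hpoint a left_mem_uIcc _))) hint)
    _ = _ := by ring

theorem norm_integral_ofReal_mul_le_of_deriv_le {a b A B C : ℝ} (hab : a ≤ b) {f f' : ℝ → ℝ}
    {E e : ℝ → ℂ} (hf : ∀ x ∈ [[a, b]], HasDerivAt f (f' x) x)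
    (hE : ∀ x ∈ [[a, b]], HasDerivAt E (e x) x) (hf' : ContinuousOn f' [[a, b]])
    (he : ContinuousOn e [[a, b]]) (hB : ∀ x ∈ [[a, b]], ‖E x‖ ≤ B)
    (hA : ∀ x ∈ [[a, b]], |f x| ≤ A) (hC : ∀ x ∈ [[a, b]], |f' x| ≤ C / (1 + x ^ 2)) :
    ‖∫ x in a..b, (f x : ℂ) * e x‖ ≤ B * (2 * A + 4 * C) := by
  have hB0 : 0 ≤ B := (norm_nonneg _).trans (hB a left_mem_uIcc)
  have hC0 : 0 ≤ C := by
    have := (abs_nonneg _).trans (hC a left_mem_uIcc)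
    rwa [le_div_iff₀ (by positivity), zero_mul] at this
  have hvar : ∫ x in a..b, |f' x| ≤ 4 * C := by
    calc ∫ x in a..b, |f' x| ≤ ∫ x in a..b, C * (1 / (1 + x ^ 2)) := by
          refine intervalIntegral.integral_mono_on hab hf'.abs.intervalIntegrable
            (Continuous.intervalIntegrable ?_ _ _) fun x hx ↦ ?_
          · exact continuous_const.mul
              (continuous_const.div (by fun_prop) fun x ↦ by positivity)
          · rw [mul_one_div]; exact hC x (Icc_subset_uIcc hx)
      _ = C * (Real.arctan b - Real.arctan a) := by
          rw [intervalIntegral.integral_const_mul, integral_one_div_one_add_sq]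
      _ ≤ C * 4 := by
          gcongr
          linarith [Real.arctan_lt_pi_div_two b, Real.neg_pi_div_two_lt_arctan a, Real.pi_le_four]
      _ = 4 * C := mul_comm _ _
  refine (norm_integral_ofReal_mul_le hab hf hE hf' he hB).trans ?_
  gcongr
  linarith [hA a left_mem_uIcc, hA b right_mem_uIcc]

/-- The oscillating exponential `e^{izu}` with frequency `z` and phase `u`. -/
noncomputable def wave (z u : ℝ) : ℂ := Complex.exp (Complex.I * (z * u : ℝ))

@[simp]
theorem norm_wave (z u : ℝ) : ‖wave z u‖ = 1 := Complex.norm_exp_I_mul_ofReal _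

theorem wave_add (z u v : ℝ) : wave z (u + v) = wave z u * wave z v := by
  simp only [wave, ← Complex.exp_add]
  push_cast
  ring_nf

theorem wave_im (z u : ℝ) : (wave z u).im = Real.sin (z * u) := by
  rw [wave, mul_comm, Complex.exp_ofReal_mul_I_im]

@[fun_prop]
theorem continuous_wave (z : ℝ) : Continuous (wave z) := by
  unfold wave
  fun_prop

theorem hasDerivAt_wave_comp (z : ℝ) {φ : ℝ → ℝ} {φ' s : ℝ} (hφ : HasDerivAt φ φ' s) :
    HasDerivAt (fun s ↦ wave z (φ s)) (Complex.I * z * (φ' * wave z (φ s))) s := by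
  convert! ((hφ.const_mul z).ofReal_comp.const_mul Complex.I).cexp using 1
  rw [wave]
  push_cast
  ring

theorem integral_amplitude_mul_deriv_phase {z a b : ℝ} (hz : z ≠ 0) {K K' φ φ' : ℝ → ℝ}
    (hK : ∀ x ∈ [[a, b]], HasDerivAt K (K' x) x) (hφ : ∀ x ∈ [[a, b]], HasDerivAt φ (φ' x) x)
    (hK' : ContinuousOn K' [[a, b]]) (hφ' : ContinuousOn φ' [[a, b]]) :
    ∫ x in a..b, (K x : ℂ) * (φ' x * wave z (φ x)) =
      (K b * wave z (φ b) - K a * wave z (φ a)) / (Complex.I * z)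
        - (∫ x in a..b, (K' x : ℂ) * wave z (φ x)) / (Complex.I * z) := by
  have hIz : Complex.I * (z : ℂ) ≠ 0 := by simp [hz]
  have hφc : ContinuousOn φ [[a, b]] := fun x hx ↦ (hφ x hx).continuousAt.continuousWithinAt
  have hwave : ContinuousOn (fun x ↦ wave z (φ x)) [[a, b]] :=
    (continuous_wave z).comp_continuousOn hφc
  have hpart := intervalIntegral.integral_mul_deriv_eq_deriv_mul (u := fun x ↦ (K x : ℂ))
    (u' := fun x ↦ (K' x : ℂ)) (v := fun x ↦ wave z (φ x) / (Complex.I * z))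
    (v' := fun x ↦ φ' x * wave z (φ x)) (fun x hx ↦ (hK x hx).ofReal_comp)
    (fun x hx ↦ by simpa [hIz] using (hasDerivAt_wave_comp z (hφ x hx)).div_const (Complex.I * z))
    (ContinuousOn.intervalIntegrable (by fun_prop)) (ContinuousOn.intervalIntegrable (by fun_prop))
  simp only [mul_div_assoc'] at hpart
  rw [hpart, intervalIntegral.integral_div]
  ring

theorem hasDerivAt_cexp_neg_mul_sq_div {w : ℂ} (hw0 : w ≠ 0) (x : ℝ) :
    HasDerivAt (fun σ : ℝ ↦ Complex.exp (-w * (σ : ℂ) ^ 2) / -w)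
      (2 * x * Complex.exp (-w * (x : ℂ) ^ 2)) x := by
  have h := (((hasDerivAt_pow 2 (x : ℂ)).const_mul (-w)).cexp.div_const (-w)).comp_ofReal
  convert! h using 1
  push_cast
  field_simp

theorem norm_cexp_neg_mul_sq_div_le {w : ℂ} (hw : 0 ≤ w.re) (x : ℝ) :
    ‖Complex.exp (-w * (x : ℂ) ^ 2) / -w‖ ≤ 1 / ‖w‖ := by
  rw [norm_div, norm_neg]
  gcongr
  rw [Complex.norm_exp, Real.exp_le_one_iff, ← Complex.ofReal_pow, Complex.re_mul_ofReal,
    Complex.neg_re, neg_mul, neg_nonpos]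
  positivity

theorem norm_integral_cexp_neg_mul_sq_le {w : ℂ} (hw : 0 ≤ w.re) (hw0 : w ≠ 0) {S T : ℝ}
    (hS : 0 < S) (hST : S ≤ T) :
    ‖∫ σ in S..T, Complex.exp (-w * (σ : ℂ) ^ 2)‖ ≤ 1 / (‖w‖ * S) := by
  have hT : 0 < T := hS.trans_le hST
  have hpos : ∀ x ∈ [[S, T]], 0 < x := fun x hx ↦ ordConnected_Ioi.uIcc_subset hS hT hx
  have hinv : ∀ x ∈ [[S, T]], HasDerivAt (fun σ : ℝ ↦ (2 * σ)⁻¹) (-(2 * x ^ 2)⁻¹) x :=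
    fun x hx ↦ by
      have := hpos x hx
      convert! ((hasDerivAt_id x).const_mul 2).inv (by simp [this.ne']) using 1
      simp only [id]
      field_simp
  have hcont : ContinuousOn (fun x : ℝ ↦ -(2 * x ^ 2)⁻¹) [[S, T]] :=
    (ContinuousOn.inv₀ (by fun_prop) fun x hx ↦ by have := hpos x hx; positivity).neg
  have hvar : ∫ x in S..T, |-(2 * x ^ 2)⁻¹| = (2 * S)⁻¹ - (2 * T)⁻¹ := by
    have habs : ∀ x : ℝ, |-(2 * x ^ 2)⁻¹| = -(-(2 * x ^ 2)⁻¹) := fun x ↦ by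
      rw [abs_neg, neg_neg, abs_of_nonneg (by positivity)]
    simp only [habs]
    rw [intervalIntegral.integral_neg,
      intervalIntegral.integral_eq_sub_of_hasDerivAt hinv hcont.intervalIntegrable, neg_sub]
  have hcongr : ∫ σ in S..T, Complex.exp (-w * (σ : ℂ) ^ 2) =
      ∫ σ in S..T, ((2 * σ)⁻¹ : ℝ) * (2 * σ * Complex.exp (-w * (σ : ℂ) ^ 2)) := by
    refine intervalIntegral.integral_congr fun x hx ↦ ?_
    have hx0 : (x : ℂ) ≠ 0 := by exact_mod_cast (hpos x hx).ne'
    push_cast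
    field_simp
  rw [hcongr]
  refine (norm_integral_ofReal_mul_le hST hinv (fun x _ ↦ hasDerivAt_cexp_neg_mul_sq_div hw0 x)
    hcont (by fun_prop) fun x _ ↦ norm_cexp_neg_mul_sq_div_le hw x).trans (le_of_eq ?_)
  rw [hvar, abs_of_pos (by positivity), abs_of_pos (by positivity)]
  field_simp
  ring

theorem norm_integral_cexp_neg_mul_sq_sub_le {w : ℂ} (hw : 0 < w.re) {S : ℝ} (hS : 0 < S) :
    ‖(∫ σ in (0 : ℝ)..S, Complex.exp (-w * (σ : ℂ) ^ 2)) - (π / w) ^ (1 / 2 : ℂ) / 2‖ ≤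
      1 / (‖w‖ * S) := by
  have hw0 : w ≠ 0 := fun h ↦ by simp [h] at hw
  have hii : ∀ a b : ℝ,
      IntervalIntegrable (fun x : ℝ ↦ Complex.exp (-w * (x : ℂ) ^ 2)) volume a b :=
    fun a b ↦ Continuous.intervalIntegrable (by fun_prop) a b
  rw [← integral_gaussian_complex_Ioi hw]
  refine le_of_tendsto (tendsto_const_nhds.sub (intervalIntegral_tendsto_integral_Ioi 0
    (integrable_cexp_neg_mul_sq hw).integrableOn tendsto_id)).norm ?_
  filter_upwards [eventually_ge_atTop S] with T hT
  rw [id, intervalIntegral.integral_interval_sub_left (hii _ _) (hii _ _),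
    intervalIntegral.integral_symm, norm_neg]
  exact norm_integral_cexp_neg_mul_sq_le hw.le hw0 hS hT

/-- The Fresnel integral `∫₀^S e^{izσ²} dσ`. -/
noncomputable def fresnelIntegral (z S : ℝ) : ℂ := ∫ σ in (0 : ℝ)..S, wave z (σ ^ 2)

theorem mul_I_cpow_one_half {c : ℝ} (hc : 0 < c) :
    ((c : ℂ) * Complex.I) ^ (1 / 2 : ℂ) = √c * wave 1 (π / 4) := by
  have hexp : ((Real.log c : ℝ) + (π : ℂ) / 2 * Complex.I) * (1 / 2 : ℂ) =
      ((Real.log c / 2 : ℝ) : ℂ) + Complex.I * ((1 * (π / 4) : ℝ) : ℂ) := by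
    push_cast
    ring
  rw [Complex.cpow_def_of_ne_zero (mul_ne_zero (by exact_mod_cast hc.ne') Complex.I_ne_zero),
    Complex.log_ofReal_mul hc Complex.I_ne_zero, Complex.log_I, hexp, Complex.exp_add,
    ← Complex.ofReal_exp, Real.exp_half, Real.exp_log hc, wave]

theorem norm_fresnelIntegral_sub_le {z S : ℝ} (hz : 0 < z) (hS : 0 < S) :
    ‖fresnelIntegral z S - 1 / 2 * √(π / z) * wave 1 (π / 4)‖ ≤ 1 / (z * S) := by
  have hw : Tendsto (fun ε : ℝ ↦ (ε : ℂ) - Complex.I * z) (𝓝[>] 0) (𝓝 (-(Complex.I * z))) := by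
    have : Continuous fun ε : ℝ ↦ (ε : ℂ) - Complex.I * z := by fun_prop
    simpa using (this.tendsto 0).mono_left nhdsWithin_le_nhds
  have hint : Tendsto
      (fun ε : ℝ ↦ ∫ σ in (0 : ℝ)..S, Complex.exp (-((ε : ℂ) - Complex.I * z) * (σ : ℂ) ^ 2))
      (𝓝[>] 0) (𝓝 (fresnelIntegral z S)) := by
    have : Continuous fun ε : ℝ ↦
        ∫ σ in (0 : ℝ)..S, Complex.exp (-((ε : ℂ) - Complex.I * z) * (σ : ℂ) ^ 2) :=
      intervalIntegral.continuous_parametric_intervalIntegral_of_continuous' (by fun_prop) _ _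
    simpa [fresnelIntegral, wave, mul_assoc] using (this.tendsto 0).mono_left nhdsWithin_le_nhds
  have hdiv : (π : ℂ) / -(Complex.I * z) = ((π / z : ℝ) : ℂ) * Complex.I := by
    have : (z : ℂ) ≠ 0 := by exact_mod_cast hz.ne'
    push_cast
    field_simp
    simp [Complex.I_sq]
  have hmain : Tendsto (fun ε : ℝ ↦ ((π : ℂ) / ((ε : ℂ) - Complex.I * z)) ^ (1 / 2 : ℂ) / 2)
      (𝓝[>] 0) (𝓝 (1 / 2 * √(π / z) * wave 1 (π / 4))) := by
    have hslit : ((π / z : ℝ) : ℂ) * Complex.I ∈ Complex.slitPlane := by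
      right
      simp [Real.pi_ne_zero, hz.ne']
    have hlim := (continuousAt_cpow_const (b := (1 / 2 : ℂ)) hslit).tendsto.comp
      (hdiv ▸ tendsto_const_nhds.div hw (by simp [hz.ne']))
    have hval : (1 / 2 * √(π / z) * wave 1 (π / 4) : ℂ) =
        (((π / z : ℝ) : ℂ) * Complex.I) ^ (1 / 2 : ℂ) / 2 := by
      rw [mul_I_cpow_one_half (by positivity)]
      ring
    rw [hval]
    exact hlim.div_const 2
  have hbound : Tendsto (fun ε : ℝ ↦ 1 / (‖(ε : ℂ) - Complex.I * z‖ * S)) (𝓝[>] 0)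
      (𝓝 (1 / (z * S))) := by
    have hnorm : ‖-(Complex.I * (z : ℂ))‖ = z := by simp [abs_of_pos hz]
    have hlim := hw.norm.mul_const S
    rw [hnorm] at hlim
    exact tendsto_const_nhds.div hlim (by positivity)
  refine le_of_tendsto_of_tendsto (hint.sub hmain).norm hbound ?_
  filter_upwards [self_mem_nhdsWithin] with ε hε
  exact norm_integral_cexp_neg_mul_sq_sub_le (by simpa using hε) hS

theorem fresnelIntegral_neg (z S : ℝ) : fresnelIntegral z (-S) = -fresnelIntegral z S := by
  have h := intervalIntegral.integral_comp_neg (a := 0) (b := S) fun x ↦ wave z (x ^ 2)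
  rw [neg_zero] at h
  simp only [even_two.neg_pow] at h
  rw [fresnelIntegral, intervalIntegral.integral_symm, ← h, fresnelIntegral]

theorem norm_fresnelIntegral_le {z : ℝ} (hz : 0 < z) (S : ℝ) :
    ‖fresnelIntegral z S‖ ≤ 2 / √z := by
  wlog hS : 0 ≤ S generalizing S
  · rw [← neg_neg S, fresnelIntegral_neg, norm_neg]
    exact this (-S) (by linarith)
  have hz' : 0 < √z := Real.sqrt_pos.mpr hz
  rcases le_or_gt S (2 / √z) with h | h
  · refine le_trans ?_ h
    have := intervalIntegral.norm_integral_le_of_norm_le_const (a := 0) (b := S)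
      (f := fun x ↦ wave z (x ^ 2)) fun x _ ↦ (norm_wave z _).le
    simpa [fresnelIntegral, abs_of_nonneg hS] using this
  · have hmain : ‖(1 / 2 * √(π / z) * wave 1 (π / 4) : ℂ)‖ ≤ 1 / √z := by
      have hpi : √π ≤ 2 := Real.sqrt_le_iff.mpr ⟨by norm_num, by linarith [Real.pi_le_four]⟩
      have : ‖(1 / 2 * √(π / z) * wave 1 (π / 4) : ℂ)‖ = √π / 2 / √z := by
        simp [abs_of_nonneg, Real.sqrt_div' _ hz.le]
        ring
      rw [this]
      gcongr
      linarith
    have herr : 1 / (z * S) ≤ 1 / √z := by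
      rw [div_lt_iff₀ hz'] at h
      refine one_div_le_one_div_of_le hz' ?_
      nlinarith [Real.mul_self_sqrt hz.le]
    have hS0 : 0 < S := lt_trans (by positivity) h
    calc ‖fresnelIntegral z S‖
        ≤ ‖(1 / 2 * √(π / z) * wave 1 (π / 4) : ℂ)‖
          + ‖fresnelIntegral z S - 1 / 2 * √(π / z) * wave 1 (π / 4)‖ :=
          norm_le_norm_add_norm_sub' _ _
      _ ≤ 1 / √z + 1 / √z :=
          add_le_add hmain ((norm_fresnelIntegral_sub_le hz hS0).trans herr)
      _ = 2 / √z := by ring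

theorem hasDerivAt_fresnelIntegral (z S : ℝ) :
    HasDerivAt (fresnelIntegral z) (wave z (S ^ 2)) S := by
  have hc : Continuous fun x ↦ wave z (x ^ 2) := by fun_prop
  exact intervalIntegral.integral_hasDerivAt_right (hc.intervalIntegrable _ _)
    (hc.stronglyMeasurableAtFilter _ _) hc.continuousAt

end OscillatoryIntegrals

section DivisorKernel

open Set Filter Topology
open scoped Interval Real

theorem hasDerivAt_two_mul_cube_div (s : ℝ) :
    HasDerivAt (fun s : ℝ ↦ 2 * s ^ 3 / (s ^ 2 + 1) ^ 3)
      (6 * s ^ 2 * (1 - s ^ 2) / (s ^ 2 + 1) ^ 4) s := by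
  have hden : s ^ 2 + 1 ≠ 0 := by positivity
  convert! ((hasDerivAt_pow 3 s).const_mul 2).div (((hasDerivAt_pow 2 s).add_const 1).pow 3)
    (pow_ne_zero 3 hden) using 1
  field_simp
  norm_num
  ring

theorem abs_two_mul_cube_div_le_one {s : ℝ} (hs : 0 ≤ s) :
    |2 * s ^ 3 / (s ^ 2 + 1) ^ 3| ≤ 1 := by
  have hamgm : 2 * s ≤ s ^ 2 + 1 := by nlinarith [sq_nonneg (s - 1)]
  rw [abs_of_nonneg (by positivity), div_le_one (by positivity)]
  calc 2 * s ^ 3 = 2 * s * s ^ 2 := by ring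
    _ ≤ (s ^ 2 + 1) * (s ^ 2 + 1) ^ 2 := by
        gcongr
        nlinarith [sq_nonneg (s ^ 2)]
    _ = _ := by ring

theorem abs_deriv_two_mul_cube_div_le (s : ℝ) :
    |6 * s ^ 2 * (1 - s ^ 2) / (s ^ 2 + 1) ^ 4| ≤ 6 / (1 + s ^ 2) := by
  have hdiff : |1 - s ^ 2| ≤ 1 + s ^ 2 := by
    rw [abs_le]
    constructor <;> nlinarith [sq_nonneg s]
  rw [abs_div, abs_mul, abs_of_nonneg (by positivity : (0 : ℝ) ≤ 6 * s ^ 2),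
    abs_of_nonneg (by positivity : (0 : ℝ) ≤ (s ^ 2 + 1) ^ 4),
    div_le_div_iff₀ (by positivity) (by positivity)]
  calc 6 * s ^ 2 * |1 - s ^ 2| * (1 + s ^ 2)
      ≤ 6 * (s ^ 2 + 1) ^ 2 * (1 + s ^ 2) * (1 + s ^ 2) := by
        gcongr 6 * ?_ * ?_ * _
        nlinarith [sq_nonneg (s ^ 2), sq_nonneg s]
    _ = _ := by ring

theorem hasDerivAt_sq_div {s : ℝ} (hs : 0 < s) :
    HasDerivAt (fun s : ℝ ↦ s ^ 2 / ((s + 1) ^ 2 * (s ^ 2 + 1)))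
      (2 * s * (1 - s ^ 3) / ((s + 1) ^ 3 * (s ^ 2 + 1) ^ 2)) s := by
  have hden : HasDerivAt (fun s : ℝ ↦ (s + 1) ^ 2 * (s ^ 2 + 1))
      (2 * (s + 1) * (s ^ 2 + 1) + (s + 1) ^ 2 * (2 * s)) s := by
    convert! (((hasDerivAt_id' s).add_const 1).pow 2).mul ((hasDerivAt_pow 2 s).add_const 1)
      using 1
    simp
  convert! (hasDerivAt_pow 2 s).div hden (by positivity) using 1
  push_cast
  field_simp
  ring

theorem abs_sq_div_le_one {s : ℝ} (hs : 0 < s) : |s ^ 2 / ((s + 1) ^ 2 * (s ^ 2 + 1))| ≤ 1 := by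
  rw [abs_of_nonneg (by positivity), div_le_one (by positivity)]
  calc s ^ 2 = s ^ 2 * 1 := (mul_one _).symm
    _ ≤ (s + 1) ^ 2 * (s ^ 2 + 1) := by
        gcongr
        · linarith
        · nlinarith

theorem abs_deriv_sq_div_le {s : ℝ} (hs : 0 < s) :
    |2 * s * (1 - s ^ 3) / ((s + 1) ^ 3 * (s ^ 2 + 1) ^ 2)| ≤ 2 / (1 + s ^ 2) := by
  have hdiff : |1 - s ^ 3| ≤ (s + 1) ^ 3 := by
    rw [abs_le]
    constructor <;> nlinarith [sq_nonneg s, pow_pos hs 3]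
  rw [abs_div, abs_mul, abs_of_pos (by positivity : 0 < 2 * s),
    abs_of_pos (by positivity : 0 < (s + 1) ^ 3 * (s ^ 2 + 1) ^ 2),
    div_le_div_iff₀ (by positivity) (by positivity)]
  calc 2 * s * |1 - s ^ 3| * (1 + s ^ 2)
      ≤ 2 * (s ^ 2 + 1) * (s + 1) ^ 3 * (1 + s ^ 2) := by
        gcongr
        nlinarith [sq_nonneg (s - 1)]
    _ = _ := by ring

theorem hasDerivAt_sub_inv {s : ℝ} (hs : s ≠ 0) :
    HasDerivAt (fun s : ℝ ↦ s - s⁻¹) (1 + (s ^ 2)⁻¹) s := by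
  convert! (hasDerivAt_id s).sub (hasDerivAt_inv hs) using 1
  ring

theorem hasDerivAt_sq_add_inv {s : ℝ} (hs : s ≠ 0) :
    HasDerivAt (fun s : ℝ ↦ s ^ 2 + (s ^ 2)⁻¹) (2 * s - 2 * (s ^ 3)⁻¹) s := by
  convert! (hasDerivAt_pow 2 s).add ((hasDerivAt_pow 2 s).inv (pow_ne_zero 2 hs)) using 1
  push_cast
  field_simp
  ring

theorem continuousOn_add_inv_pow {a b : ℝ} (ha : 0 < a) (hb : 0 < b) (c d : ℝ) (n : ℕ) :
    ContinuousOn (fun s : ℝ ↦ c + d * (s ^ n)⁻¹) [[a, b]] :=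
  continuousOn_const.add (continuousOn_const.mul ((continuousOn_pow n).inv₀ fun _ hx ↦
    pow_ne_zero n (ordConnected_Ioi.uIcc_subset ha hb hx).ne'))

theorem norm_integral_mul_wave_sub_inv_le {z a b : ℝ} (hz : 0 < z) (ha : 0 < a) (hab : a ≤ b) :
    ‖∫ t in a..b, (2 * t / (t ^ 2 + 1) ^ 2 : ℝ) * wave z (t - t⁻¹)‖ ≤ 26 / z := by
  have hpos : ∀ t ∈ [[a, b]], 0 < t := fun t ht ↦
    ordConnected_Ioi.uIcc_subset ha (ha.trans_le hab) ht
  have hIz : Complex.I * (z : ℂ) ≠ 0 := by simp [hz.ne']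
  have hphase : ContinuousOn (fun t : ℝ ↦ 1 + (t ^ 2)⁻¹) [[a, b]] := by
    simpa using continuousOn_add_inv_pow ha (ha.trans_le hab) 1 1 2
  have hsub : ContinuousOn (fun t : ℝ ↦ t - t⁻¹) [[a, b]] := fun t ht ↦
    (hasDerivAt_sub_inv (hpos t ht).ne').continuousAt.continuousWithinAt
  have hcongr : ∫ t in a..b, (2 * t / (t ^ 2 + 1) ^ 2 : ℝ) * wave z (t - t⁻¹) =
      ∫ t in a..b, (2 * t ^ 3 / (t ^ 2 + 1) ^ 3 : ℝ) *
        ((1 + (t ^ 2)⁻¹ : ℝ) * wave z (t - t⁻¹)) := by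
    refine intervalIntegral.integral_congr fun t ht ↦ ?_
    have := hpos t ht
    rw [← mul_assoc, ← Complex.ofReal_mul]
    congr 2
    field_simp
  rw [hcongr]
  calc _ ≤ 1 / z * (2 * 1 + 4 * 6) := norm_integral_ofReal_mul_le_of_deriv_le hab
        (E := fun t ↦ wave z (t - t⁻¹) / (Complex.I * z))
        (fun t _ ↦ hasDerivAt_two_mul_cube_div t)
        (fun t ht ↦ by
          simpa [hIz] using (hasDerivAt_wave_comp z (hasDerivAt_sub_inv (hpos t ht).ne')).div_const
            (Complex.I * z))
        (ContinuousOn.div (by fun_prop) (by fun_prop) fun t _ ↦ by positivity)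
        ((Complex.continuous_ofReal.comp_continuousOn hphase).mul
          ((continuous_wave z).comp_continuousOn hsub))
        (fun t _ ↦ by simp [abs_of_pos hz])
        (fun t ht ↦ abs_two_mul_cube_div_le_one (hpos t ht).le)
        (fun t _ ↦ abs_deriv_two_mul_cube_div_le t)
    _ = 26 / z := by ring

/- The identity `s² + s⁻² = (s - s⁻¹)² + 2` makes `1 + s⁻²` the amplitude with an explicit
primitive. -/
theorem hasDerivAt_fresnelIntegral_sub_inv (z : ℝ) {s : ℝ} (hs : s ≠ 0) :
    HasDerivAt (fun s ↦ wave z 2 * fresnelIntegral z (s - s⁻¹))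
      ((1 + (s ^ 2)⁻¹ : ℝ) * wave z (s ^ 2 + (s ^ 2)⁻¹)) s := by
  have hsq : s ^ 2 + (s ^ 2)⁻¹ = 2 + (s - s⁻¹) ^ 2 := by
    field_simp
    ring
  convert! ((hasDerivAt_fresnelIntegral z (s - s⁻¹)).scomp s (hasDerivAt_sub_inv hs)).const_mul
    (wave z 2) using 1
  rw [hsq, wave_add, Complex.real_smul]
  ring

theorem integral_mul_wave_sq_add_inv_eq (z : ℝ) {a b : ℝ} (ha : 0 < a) (hab : a ≤ b) :
    ∫ s in a..b, ((((s + 1) ^ 2)⁻¹ + 2 * s / (s ^ 2 + 1) ^ 2) / 2 : ℝ) *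
        wave z (s ^ 2 + (s ^ 2)⁻¹) =
      ∫ s in a..b, ((s ^ 2 / ((s + 1) ^ 2 * (s ^ 2 + 1)) + 2 * s ^ 3 / (s ^ 2 + 1) ^ 3) / 2 : ℝ) *
        ((1 + (s ^ 2)⁻¹ : ℝ) * wave z (s ^ 2 + (s ^ 2)⁻¹)) := by
  refine intervalIntegral.integral_congr fun s hs ↦ ?_
  have : 0 < s := ordConnected_Ioi.uIcc_subset ha (ha.trans_le hab) hs
  rw [← mul_assoc, ← Complex.ofReal_mul]
  congr 2
  field_simp

theorem norm_integral_mul_wave_sq_add_inv_le {z a b : ℝ} (hz : 0 < z) (ha : 0 < a)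
    (hab : a ≤ b) :
    ‖∫ s in a..b, ((((s + 1) ^ 2)⁻¹ + 2 * s / (s ^ 2 + 1) ^ 2) / 2 : ℝ) *
      wave z (s ^ 2 + (s ^ 2)⁻¹)‖ ≤ 36 / √z := by
  have hpos : ∀ s ∈ [[a, b]], 0 < s := fun s hs ↦
    ordConnected_Ioi.uIcc_subset ha (ha.trans_le hab) hs
  have hphase : ContinuousOn (fun s : ℝ ↦ 1 + (s ^ 2)⁻¹) [[a, b]] := by
    simpa using continuousOn_add_inv_pow ha (ha.trans_le hab) 1 1 2
  have hadd : ContinuousOn (fun s : ℝ ↦ s ^ 2 + (s ^ 2)⁻¹) [[a, b]] := fun s hs ↦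
    (hasDerivAt_sq_add_inv (hpos s hs).ne').continuousAt.continuousWithinAt
  have hcont : ContinuousOn (fun s : ℝ ↦ (2 * s * (1 - s ^ 3) / ((s + 1) ^ 3 * (s ^ 2 + 1) ^ 2) +
      6 * s ^ 2 * (1 - s ^ 2) / (s ^ 2 + 1) ^ 4) / 2) [[a, b]] := by
    refine ((ContinuousOn.div (by fun_prop) (by fun_prop) fun s hs ↦ ?_).add
      (ContinuousOn.div (by fun_prop) (by fun_prop) fun s _ ↦ by positivity)).div_const 2
    have := hpos s hs
    positivity
  rw [integral_mul_wave_sq_add_inv_eq z ha hab]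
  calc _ ≤ 2 / √z * (2 * 1 + 4 * 4) := norm_integral_ofReal_mul_le_of_deriv_le hab
        (f := fun s ↦ (s ^ 2 / ((s + 1) ^ 2 * (s ^ 2 + 1)) + 2 * s ^ 3 / (s ^ 2 + 1) ^ 3) / 2)
        (fun s hs ↦
          ((hasDerivAt_sq_div (hpos s hs)).add (hasDerivAt_two_mul_cube_div s)).div_const 2)
        (fun s hs ↦ hasDerivAt_fresnelIntegral_sub_inv z (hpos s hs).ne') hcont
        ((Complex.continuous_ofReal.comp_continuousOn hphase).mul
          ((continuous_wave z).comp_continuousOn hadd))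
        (fun s _ ↦ by simpa using norm_fresnelIntegral_le hz (s - s⁻¹))
        (fun s hs ↦ by
          have h₁ := abs_le.mp (abs_sq_div_le_one (hpos s hs))
          have h₂ := abs_le.mp (abs_two_mul_cube_div_le_one (hpos s hs).le)
          exact abs_le.mpr ⟨by linarith, by linarith⟩)
        (fun s hs ↦ by
          have h₁ := abs_le.mp (abs_deriv_sq_div_le (hpos s hs))
          have h₂ := abs_le.mp (abs_deriv_two_mul_cube_div_le s)
          have hsum : 4 / (1 + s ^ 2) = (2 / (1 + s ^ 2) + 6 / (1 + s ^ 2)) / 2 := by ring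
          rw [hsum]
          exact abs_le.mpr ⟨by linarith, by linarith⟩)
    _ = 36 / √z := by ring

end DivisorKernel

section DivisorKernelAsymptotics

open Set Filter Topology
open scoped Interval Real

theorem norm_wave_sub_wave_le (z u v : ℝ) : ‖wave z u - wave z v‖ ≤ |z * (u - v)| := by
  have h : wave z u - wave z v =
      wave z v * (Complex.exp (Complex.I * (z * (u - v) : ℝ)) - 1) := by
    rw [← wave, mul_sub_one, ← wave_add, add_sub_cancel]
  rw [h, norm_mul, norm_wave, one_mul]
  exact Real.norm_exp_I_mul_ofReal_sub_one_le

theorem intervalIntegrable_wave_comp {z a b : ℝ} {φ : ℝ → ℝ} (hφ : ContinuousOn φ [[a, b]]) :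
    IntervalIntegrable (fun t ↦ wave z (φ t)) volume a b :=
  ((continuous_wave z).comp_continuousOn hφ).intervalIntegrable

theorem norm_integral_amplitude_mul_deriv_phase_sub_le {z a b : ℝ} (hz : 0 < z)
    {K K' φ φ' : ℝ → ℝ} (hK : ∀ x ∈ [[a, b]], HasDerivAt K (K' x) x)
    (hφ : ∀ x ∈ [[a, b]], HasDerivAt φ (φ' x) x) (hK' : ContinuousOn K' [[a, b]])
    (hφ' : ContinuousOn φ' [[a, b]]) :
    ‖(∫ x in a..b, (K x : ℂ) * (φ' x * wave z (φ x))) - wave z (φ b) / (Complex.I * z)‖ ≤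
      (|1 - K b| + |K a| + ‖∫ x in a..b, (K' x : ℂ) * wave z (φ x)‖) / z := by
  have hsplit : (∫ x in a..b, (K x : ℂ) * (φ' x * wave z (φ x))) - wave z (φ b) / (Complex.I * z) =
      -(((1 - K b : ℝ) : ℂ) * wave z (φ b) + (K a : ℂ) * wave z (φ a) +
        ∫ x in a..b, (K' x : ℂ) * wave z (φ x)) / (Complex.I * z) := by
    rw [integral_amplitude_mul_deriv_phase hz.ne' hK hφ hK' hφ']
    push_cast
    ring
  have hnorm : ∀ r u : ℝ, ‖(r : ℂ) * wave z u‖ = |r| := fun r u ↦ by simp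
  rw [hsplit, norm_div, norm_neg, norm_mul, Complex.norm_I, one_mul, Complex.norm_real,
    Real.norm_of_nonneg hz.le]
  gcongr
  exact norm_add₃_le.trans_eq (by rw [hnorm, hnorm])

theorem norm_integral_wave_sub_inv_sub_le {z Y : ℝ} (hz : 1 ≤ z) (hY : 1 ≤ Y) :
    ‖(∫ t in Y⁻¹..Y, wave z (t - t⁻¹)) - wave z (Y - Y⁻¹) / (Complex.I * z)‖ ≤
      26 / z ^ 2 + 2 / Y := by
  have hY0 : 0 < Y := by linarith
  have hz0 : 0 < z := by linarith
  have hpos : ∀ t ∈ [[Y⁻¹, Y]], 0 < t := fun t ht ↦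
    ordConnected_Ioi.uIcc_subset (inv_pos.mpr hY0) hY0 ht
  have hM : ∀ t : ℝ,
      HasDerivAt (fun t : ℝ ↦ t ^ 2 / (t ^ 2 + 1)) (2 * t / (t ^ 2 + 1) ^ 2) t := fun t ↦ by
    convert! (hasDerivAt_pow 2 t).div ((hasDerivAt_pow 2 t).add_const 1) (by positivity) using 1
    push_cast
    ring
  have hparts := norm_integral_amplitude_mul_deriv_phase_sub_le hz0 (fun t _ ↦ hM t)
    (fun t ht ↦ hasDerivAt_sub_inv (hpos t ht).ne')
    (ContinuousOn.div (by fun_prop) (by fun_prop) fun t _ ↦ by positivity)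
    (by simpa using continuousOn_add_inv_pow (inv_pos.mpr hY0) hY0 1 1 2)
  have hcongr : ∫ t in Y⁻¹..Y, ((t ^ 2 / (t ^ 2 + 1) : ℝ) : ℂ) *
      ((1 + (t ^ 2)⁻¹ : ℝ) * wave z (t - t⁻¹)) = ∫ t in Y⁻¹..Y, wave z (t - t⁻¹) := by
    refine intervalIntegral.integral_congr fun t ht ↦ ?_
    have := (hpos t ht).ne'
    have hone : t ^ 2 / (t ^ 2 + 1) * (1 + (t ^ 2)⁻¹) = 1 := by field_simp
    rw [← mul_assoc, ← Complex.ofReal_mul, hone, Complex.ofReal_one, one_mul]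
  have hright : |1 - Y ^ 2 / (Y ^ 2 + 1)| ≤ 1 / Y := by
    rw [one_sub_div (by positivity), add_sub_cancel_left, abs_of_pos (by positivity)]
    exact one_div_le_one_div_of_le hY0 (by nlinarith)
  have hleft : |Y⁻¹ ^ 2 / (Y⁻¹ ^ 2 + 1)| ≤ 1 / Y := by
    convert! hright using 2
    field_simp
    ring
  have hmid := norm_integral_mul_wave_sub_inv_le hz0 (inv_pos.mpr hY0)
    ((inv_le_one_of_one_le₀ hY).trans hY)
  rw [hcongr] at hparts
  calc _ ≤ (1 / Y + 1 / Y + 26 / z) / z := hparts.trans (by gcongr)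
    _ = 26 / z ^ 2 + (2 / Y) / z := by
        field_simp
        ring
    _ ≤ 26 / z ^ 2 + 2 / Y := add_le_add_right (div_le_self (by positivity) hz) _

theorem hasDerivAt_one_sub_inv_add_inv {s : ℝ} (hs : 0 < s) :
    HasDerivAt (fun s : ℝ ↦ 1 - ((s + 1)⁻¹ + (s ^ 2 + 1)⁻¹) / 2)
      ((((s + 1) ^ 2)⁻¹ + 2 * s / (s ^ 2 + 1) ^ 2) / 2) s := by
  convert! (((((hasDerivAt_id' s).add_const 1).inv (by positivity)).add
    (((hasDerivAt_pow 2 s).add_const 1).inv (by positivity))).div_const 2).const_sub 1 using 1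
  push_cast
  ring

/- With `K = 1 - (1/(s+1) + 1/(s²+1))/2` one has `2s = (1 + s⁻²) + K(s) (2s - 2s⁻³)`: the first
term integrates to a Fresnel integral and the second is a multiple of the phase derivative. -/
theorem integral_two_mul_wave_sq_add_inv {z a b : ℝ} (ha : 0 < a) (hb : 0 < b) :
    ∫ s in a..b, (2 * s : ℝ) * wave z (s ^ 2 + (s ^ 2)⁻¹) =
      wave z 2 * (fresnelIntegral z (b - b⁻¹) - fresnelIntegral z (a - a⁻¹)) +
        ∫ s in a..b, ((1 - ((s + 1)⁻¹ + (s ^ 2 + 1)⁻¹) / 2 : ℝ) : ℂ) *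
          ((2 * s - 2 * (s ^ 3)⁻¹ : ℝ) * wave z (s ^ 2 + (s ^ 2)⁻¹)) := by
  have hpos : ∀ s ∈ [[a, b]], 0 < s := fun s hs ↦ ordConnected_Ioi.uIcc_subset ha hb hs
  have hwave : ContinuousOn (fun s : ℝ ↦ wave z (s ^ 2 + (s ^ 2)⁻¹)) [[a, b]] :=
    (continuous_wave z).comp_continuousOn fun s hs ↦
      (hasDerivAt_sq_add_inv (hpos s hs).ne').continuousAt.continuousWithinAt
  have hinv : ∀ n : ℕ, ContinuousOn (fun s : ℝ ↦ (s ^ n)⁻¹) [[a, b]] := fun n ↦ by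
    simpa using continuousOn_add_inv_pow ha hb 0 1 n
  have hprim := intervalIntegral.integral_eq_sub_of_hasDerivAt
    (fun s hs ↦ hasDerivAt_fresnelIntegral_sub_inv z (hpos s hs).ne')
    ((Complex.continuous_ofReal.comp_continuousOn
      (continuousOn_const.add (hinv 2))).mul hwave).intervalIntegrable
  rw [mul_sub, ← hprim, ← intervalIntegral.integral_add]
  · refine intervalIntegral.integral_congr fun s hs ↦ ?_
    have := hpos s hs
    have hamp : 2 * s = (1 + (s ^ 2)⁻¹) +
        (1 - ((s + 1)⁻¹ + (s ^ 2 + 1)⁻¹) / 2) * (2 * s - 2 * (s ^ 3)⁻¹) := by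
      field_simp
      ring
    conv_lhs => rw [hamp]
    push_cast
    ring
  · exact ((Complex.continuous_ofReal.comp_continuousOn
      (continuousOn_const.add (hinv 2))).mul hwave).intervalIntegrable
  · have hK : ContinuousOn (fun s : ℝ ↦ 1 - ((s + 1)⁻¹ + (s ^ 2 + 1)⁻¹) / 2) [[a, b]] := by
      refine continuousOn_const.sub (((ContinuousOn.inv₀ (by fun_prop) fun s hs ↦ ?_).add
        (ContinuousOn.inv₀ (by fun_prop) fun s _ ↦ by positivity)).div_const 2)
      have := hpos s hs
      positivity
    have hφ' : ContinuousOn (fun s : ℝ ↦ 2 * s - 2 * (s ^ 3)⁻¹) [[a, b]] :=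
      ContinuousOn.sub (by fun_prop) (continuousOn_const.mul (hinv 3))
    exact ((Complex.continuous_ofReal.comp_continuousOn hK).mul
      ((Complex.continuous_ofReal.comp_continuousOn hφ').mul hwave)).intervalIntegrable

theorem norm_integral_amplitude_wave_sq_add_inv_sub_le {z P : ℝ} (hz : 1 ≤ z) (hP : 1 ≤ P) :
    ‖(∫ s in P⁻¹..P, ((1 - ((s + 1)⁻¹ + (s ^ 2 + 1)⁻¹) / 2 : ℝ) : ℂ) *
          ((2 * s - 2 * (s ^ 3)⁻¹ : ℝ) * wave z (s ^ 2 + (s ^ 2)⁻¹))) -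
        wave z (P ^ 2 + (P ^ 2)⁻¹) / (Complex.I * z)‖ ≤ 36 / (z * √z) + 2 / P := by
  have hP0 : 0 < P := by linarith
  have hz0 : 0 < z := by linarith
  have hpos : ∀ s ∈ [[P⁻¹, P]], 0 < s := fun s hs ↦
    ordConnected_Ioi.uIcc_subset (inv_pos.mpr hP0) hP0 hs
  have hphase : ContinuousOn (fun s : ℝ ↦ 2 * s - 2 * (s ^ 3)⁻¹) [[P⁻¹, P]] := by
    have := continuousOn_add_inv_pow (inv_pos.mpr hP0) hP0 0 2 3
    simp only [zero_add] at this
    exact ContinuousOn.sub (by fun_prop) this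
  have hK' : ContinuousOn (fun s : ℝ ↦ (((s + 1) ^ 2)⁻¹ + 2 * s / (s ^ 2 + 1) ^ 2) / 2)
      [[P⁻¹, P]] := by
    refine ((ContinuousOn.inv₀ (by fun_prop) fun s hs ↦ ?_).add
      (ContinuousOn.div (by fun_prop) (by fun_prop) fun s _ ↦ by positivity)).div_const 2
    have := hpos s hs
    positivity
  have hparts := norm_integral_amplitude_mul_deriv_phase_sub_le hz0
    (fun s hs ↦ hasDerivAt_one_sub_inv_add_inv (hpos s hs))
    (fun s hs ↦ hasDerivAt_sq_add_inv (hpos s hs).ne') hK' hphase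
  have hsum : (P + 1)⁻¹ + (P ^ 2 + 1)⁻¹ ≤ P⁻¹ + P⁻¹ := by
    gcongr <;> nlinarith
  have hright : |1 - (1 - ((P + 1)⁻¹ + (P ^ 2 + 1)⁻¹) / 2)| ≤ 1 / P := by
    rw [sub_sub_cancel, abs_of_pos (by positivity), one_div]
    linarith
  have hleft : |1 - ((P⁻¹ + 1)⁻¹ + (P⁻¹ ^ 2 + 1)⁻¹) / 2| ≤ 1 / P := by
    convert! hright using 2
    field_simp
    ring
  have hmid := norm_integral_mul_wave_sq_add_inv_le hz0 (inv_pos.mpr hP0)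
    ((inv_le_one_of_one_le₀ hP).trans hP)
  calc _ ≤ (1 / P + 1 / P + 36 / √z) / z := hparts.trans (by gcongr)
    _ = 36 / (z * √z) + (2 / P) / z := by
        field_simp
        ring
    _ ≤ 36 / (z * √z) + 2 / P := add_le_add_right (div_le_self (by positivity) hz) _

theorem norm_integral_two_mul_wave_sq_add_inv_sub_le {z P : ℝ} (hz : 1 ≤ z) (hP : 2 ≤ P) :
    ‖(∫ s in P⁻¹..P, (2 * s : ℝ) * wave z (s ^ 2 + (s ^ 2)⁻¹)) -
        √(π / z) * (wave z 2 * wave 1 (π / 4)) -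
        wave z (P ^ 2 + (P ^ 2)⁻¹) / (Complex.I * z)‖ ≤ 36 / (z * √z) + 6 / P := by
  have hP0 : 0 < P := by linarith
  have hz0 : 0 < z := by linarith
  have hinv : P⁻¹ ≤ 2⁻¹ := by gcongr
  have hS : P / 2 ≤ P - P⁻¹ := by linarith
  have hfresnel : ‖2 * fresnelIntegral z (P - P⁻¹) - √(π / z) * wave 1 (π / 4)‖ ≤ 4 / P := by
    calc _ = 2 * ‖fresnelIntegral z (P - P⁻¹) - 1 / 2 * √(π / z) * wave 1 (π / 4)‖ := by
          rw [← Complex.norm_two, ← norm_mul]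
          congr 1
          ring
      _ ≤ 2 * (1 / (z * (P - P⁻¹))) := by
          gcongr
          exact norm_fresnelIntegral_sub_le hz0 (by linarith)
      _ ≤ 2 * (1 / (1 * (P / 2))) := by gcongr
      _ = 4 / P := by
          field_simp
          norm_num
  have hodd : fresnelIntegral z (P⁻¹ - P⁻¹⁻¹) = -fresnelIntegral z (P - P⁻¹) := by
    rw [inv_inv, ← fresnelIntegral_neg, neg_sub]
  rw [integral_two_mul_wave_sq_add_inv (inv_pos.mpr hP0) hP0, hodd]
  calc _ = ‖wave z 2 * (2 * fresnelIntegral z (P - P⁻¹) - √(π / z) * wave 1 (π / 4)) +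
          ((∫ s in P⁻¹..P, ((1 - ((s + 1)⁻¹ + (s ^ 2 + 1)⁻¹) / 2 : ℝ) : ℂ) *
            ((2 * s - 2 * (s ^ 3)⁻¹ : ℝ) * wave z (s ^ 2 + (s ^ 2)⁻¹))) -
          wave z (P ^ 2 + (P ^ 2)⁻¹) / (Complex.I * z))‖ := by
        congr 1
        ring
    _ ≤ 4 / P + (36 / (z * √z) + 2 / P) := by
        refine (norm_add_le _ _).trans (add_le_add ?_
          (norm_integral_amplitude_wave_sq_add_inv_sub_le hz (by linarith)))
        rwa [norm_mul, norm_wave, one_mul]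
    _ = 36 / (z * √z) + 6 / P := by ring

theorem integral_wave_add_inv (z : ℝ) {P : ℝ} (hP : 0 < P) :
    ∫ t in (P ^ 2)⁻¹..P ^ 2, wave z (t + t⁻¹) =
      ∫ s in P⁻¹..P, (2 * s : ℝ) * wave z (s ^ 2 + (s ^ 2)⁻¹) := by
  have hpos : ∀ s ∈ [[P⁻¹, P]], 0 < s := fun s hs ↦
    ordConnected_Ioi.uIcc_subset (inv_pos.mpr hP) hP hs
  have hsubst := intervalIntegral.integral_deriv_smul_comp' (a := P⁻¹) (b := P)
    (f := fun s ↦ s ^ 2) (f' := fun s ↦ 2 * s) (g := fun t ↦ wave z (t + t⁻¹))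
    (fun s _ ↦ by simpa using hasDerivAt_pow 2 s) (by fun_prop) ?_
  · simpa [inv_pow] using hsubst.symm
  · refine (continuous_wave z).comp_continuousOn (continuousOn_id.add
      (continuousOn_id.inv₀ ?_))
    rintro _ ⟨s, hs, rfl⟩
    exact pow_ne_zero 2 (hpos s hs).ne'

/-- The kernel `∫₀^Y sin(z/t) cos(zt) dt`, to which the cosine transform in Voronoï's formula
reduces after rescaling. -/
noncomputable def divisorKernel (z Y : ℝ) : ℝ :=
  ∫ t in (0 : ℝ)..Y, Real.sin (z / t) * Real.cos (z * t)

theorem abs_sin_mul_cos_le_one (a b : ℝ) : |Real.sin a * Real.cos b| ≤ 1 := by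
  rw [abs_mul]
  exact mul_le_one₀ (Real.abs_sin_le_one _) (abs_nonneg _) (Real.abs_cos_le_one _)

theorem intervalIntegrable_sin_div_mul_cos (z a b : ℝ) :
    IntervalIntegrable (fun t ↦ Real.sin (z / t) * Real.cos (z * t)) volume a b :=
  (intervalIntegrable_const (c := (1 : ℝ))).mono_fun
    (by fun_prop : Measurable fun t ↦ Real.sin (z / t) * Real.cos (z * t)).aestronglyMeasurable
    (Eventually.of_forall fun t ↦ by simpa using abs_sin_mul_cos_le_one (z / t) (z * t))

theorem integral_sin_div_mul_cos_eq_im (z : ℝ) {Y : ℝ} (hY : 0 < Y) :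
    ∫ t in Y⁻¹..Y, Real.sin (z / t) * Real.cos (z * t) =
      ((∫ t in Y⁻¹..Y, wave z (t + t⁻¹)) - ∫ t in Y⁻¹..Y, wave z (t - t⁻¹)).im / 2 := by
  have hinv : ContinuousOn (fun t : ℝ ↦ t⁻¹) [[Y⁻¹, Y]] := continuousOn_id.inv₀ fun t ht ↦
    (ordConnected_Ioi.uIcc_subset (inv_pos.mpr hY) hY ht).ne'
  have hadd := intervalIntegrable_wave_comp (z := z) (continuousOn_id.add hinv)
  have hsub := intervalIntegrable_wave_comp (z := z) (continuousOn_id.sub hinv)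
  simp only [id, Pi.add_apply, Pi.sub_apply] at hadd hsub
  rw [← intervalIntegral.integral_sub hadd hsub, ← Complex.imCLM_apply,
    ← ContinuousLinearMap.intervalIntegral_comp_comm _ (hadd.sub hsub),
    ← intervalIntegral.integral_div]
  refine intervalIntegral.integral_congr fun t _ ↦ ?_
  rw [Complex.imCLM_apply, Complex.sub_im, wave_im, wave_im, mul_add, mul_sub, Real.sin_add,
    Real.sin_sub, ← div_eq_mul_inv]
  ring

theorem norm_integral_wave_add_inv_sub_integral_wave_sub_inv_sub_le {z Y : ℝ} (hz : 1 ≤ z)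
    (hY : 4 ≤ Y) :
    ‖(∫ t in Y⁻¹..Y, wave z (t + t⁻¹)) - (∫ t in Y⁻¹..Y, wave z (t - t⁻¹)) -
        √(π / z) * (wave z 2 * wave 1 (π / 4))‖ ≤ 62 / (z * √z) + 10 / √Y := by
  have hY0 : 0 < Y := by linarith
  have hz0 : 0 < z := by linarith
  have hP : 2 ≤ √Y := Real.le_sqrt_of_sq_le (by linarith)
  have hYP : √Y ≤ Y := Real.sqrt_le_self_iff.mpr (.inr (by linarith))
  have hzz : z * √z ≤ z ^ 2 := by
    rw [sq]
    gcongr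
    exact Real.sqrt_le_self_iff.mpr (.inr hz)
  have hadd := norm_integral_two_mul_wave_sq_add_inv_sub_le hz hP
  rw [← integral_wave_add_inv z (by linarith), Real.sq_sqrt hY0.le] at hadd
  have hsub := norm_integral_wave_sub_inv_sub_le hz (Y := Y) (by linarith)
  have hends : ‖(wave z (Y + Y⁻¹) - wave z (Y - Y⁻¹)) / (Complex.I * z)‖ ≤ 2 / √Y := by
    rw [norm_div, norm_mul, Complex.norm_I, one_mul, Complex.norm_real, Real.norm_of_nonneg hz0.le,
      div_le_iff₀ hz0]
    refine (norm_wave_sub_wave_le _ _ _).trans ?_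
    have : z * (Y + Y⁻¹ - (Y - Y⁻¹)) = 2 / Y * z := by ring
    rw [this, abs_of_pos (by positivity)]
    gcongr
  set A := ∫ t in Y⁻¹..Y, wave z (t + t⁻¹)
  set B := ∫ t in Y⁻¹..Y, wave z (t - t⁻¹)
  calc _ = ‖(A - √(π / z) * (wave z 2 * wave 1 (π / 4)) - wave z (Y + Y⁻¹) / (Complex.I * z)) -
          (B - wave z (Y - Y⁻¹) / (Complex.I * z)) +
          (wave z (Y + Y⁻¹) - wave z (Y - Y⁻¹)) / (Complex.I * z)‖ := by
        congr 1
        ring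
    _ ≤ 36 / (z * √z) + 6 / √Y + (26 / z ^ 2 + 2 / Y) + 2 / √Y :=
        (norm_add_le _ _).trans (add_le_add ((norm_sub_le _ _).trans (add_le_add hadd hsub)) hends)
    _ ≤ 36 / (z * √z) + 6 / √Y + (26 / (z * √z) + 2 / √Y) + 2 / √Y := by gcongr
    _ = 62 / (z * √z) + 10 / √Y := by ring

theorem abs_divisorKernel_sub_le {z Y : ℝ} (hz : 1 ≤ z) (hY : 4 ≤ Y) :
    |divisorKernel z Y - 1 / 2 * √(π / z) * Real.cos (2 * z - π / 4)| ≤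
      31 / (z * √z) + 6 / √Y := by
  have hY0 : 0 < Y := by linarith
  have hsmall : |∫ t in (0 : ℝ)..Y⁻¹, Real.sin (z / t) * Real.cos (z * t)| ≤ 1 / √Y := by
    have := intervalIntegral.norm_integral_le_of_norm_le_const (a := 0) (b := Y⁻¹) (C := 1)
      (f := fun t ↦ Real.sin (z / t) * Real.cos (z * t)) fun t _ ↦ abs_sin_mul_cos_le_one _ _
    rw [Real.norm_eq_abs, sub_zero, one_mul, abs_of_pos (inv_pos.mpr hY0), inv_eq_one_div] at this
    rw [inv_eq_one_div]
    exact this.trans (one_div_le_one_div_of_le (by positivity)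
      (Real.sqrt_le_self_iff.mpr (.inr (by linarith))))
  have hmain : (√(π / z) * (wave z 2 * wave 1 (π / 4))).im =
      √(π / z) * Real.cos (2 * z - π / 4) := by
    have hphase : wave z 2 * wave 1 (π / 4) = wave 1 (2 * z + π / 4) := by
      rw [wave_add]
      simp [wave, mul_comm]
    rw [hphase, Complex.im_ofReal_mul, wave_im, one_mul, ← Real.cos_pi_div_two_sub, ← Real.cos_neg]
    ring_nf
  have him := (Complex.abs_im_le_norm _).trans
    (norm_integral_wave_add_inv_sub_integral_wave_sub_inv_sub_le hz hY)
  rw [Complex.sub_im, hmain] at him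
  rw [divisorKernel, ← intervalIntegral.integral_add_adjacent_intervals
    (intervalIntegrable_sin_div_mul_cos z 0 Y⁻¹) (intervalIntegrable_sin_div_mul_cos z Y⁻¹ Y),
    integral_sin_div_mul_cos_eq_im z hY0]
  have hbound : 31 / (z * √z) + 6 / √Y = 1 / √Y + (62 / (z * √z) + 10 / √Y) / 2 := by ring
  rw [hbound]
  rw [abs_le] at hsmall him ⊢
  constructor <;> linarith

end DivisorKernelAsymptotics

section Sawtooth

open Set Filter Topology
open scoped Real

/-- The sawtooth `{t} - 1/2`, the first periodized Bernoulli polynomial. -/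
noncomputable def sawtooth (t : ℝ) : ℝ := Int.fract t - 1 / 2

theorem abs_sawtooth_le (t : ℝ) : |sawtooth t| ≤ 1 / 2 := by
  rw [sawtooth, abs_le]
  constructor <;> linarith [Int.fract_nonneg t, Int.fract_lt_one t]

@[fun_prop]
theorem measurable_sawtooth : Measurable sawtooth := by
  unfold sawtooth
  fun_prop

theorem intervalIntegrable_sawtooth_comp {φ : ℝ → ℝ} (hφ : Measurable φ) (a b : ℝ) :
    IntervalIntegrable (fun t ↦ sawtooth (φ t)) volume a b :=
  (intervalIntegrable_const (c := (1 / 2 : ℝ))).mono_fun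
    (measurable_sawtooth.comp hφ).aestronglyMeasurable
    (Eventually.of_forall fun t ↦ by simpa using abs_sawtooth_le (φ t))

theorem sawtooth_eq_of_mem_Ico {n : ℕ} {t : ℝ} (ht : t ∈ Ico (n : ℝ) (n + 1)) :
    sawtooth t = t - n - 1 / 2 := by
  have : Int.fract t = t - n :=
    Int.fract_eq_iff.mpr ⟨by linarith [ht.1], by linarith [ht.2], n, by simp⟩
  rw [sawtooth, this]

theorem integral_sawtooth_div_of_mem_Ico {x p q : ℝ} (n : ℕ) (hp : 0 < p) (hpq : p ≤ q)
    (h : ∀ t ∈ Ioc p q, x / t ∈ Ico (n : ℝ) (n + 1)) :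
    ∫ t in p..q, sawtooth (x / t) = x * Real.log (q / p) - (n + 1 / 2) * (q - p) := by
  have h0 : (0 : ℝ) ∉ uIcc p q := notMem_uIcc_of_lt hp (hp.trans_le hpq)
  have hcongr : ∫ t in p..q, sawtooth (x / t) = ∫ t in p..q, (x * (1 / t) - (n + 1 / 2 : ℝ)) := by
    refine intervalIntegral.integral_congr_ae (Eventually.of_forall fun t ht ↦ ?_)
    rw [uIoc_of_le hpq] at ht
    rw [sawtooth_eq_of_mem_Ico (h t ht)]
    ring
  rw [hcongr, intervalIntegral.integral_sub
      ((intervalIntegral.intervalIntegrable_one_div (fun t ht h ↦ h0 (h ▸ ht))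
        continuousOn_id).const_mul x) intervalIntegrable_const,
    intervalIntegral.integral_const_mul, integral_one_div h0, intervalIntegral.integral_const,
    smul_eq_mul]
  ring

theorem integral_sawtooth_div_succ {x A : ℝ} (hx : 0 < x) (hA : x ≤ A) (n : ℕ) :
    ∫ t in x / (n + 1 : ℕ)..A, sawtooth (x / t) =
      x * Real.log (A * (n + 1 : ℕ) / x) - x * harmonic (n + 1) + x
        - 1 / 2 * (A - x / (n + 1 : ℕ)) := by
  have hA0 : 0 < A := hx.trans_le hA
  induction n with
  | zero =>
    have hmem : ∀ t ∈ Ioc x A, x / t ∈ Ico ((0 : ℕ) : ℝ) ((0 : ℕ) + 1) := fun t ht ↦ by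
      have ht0 : 0 < t := hx.trans ht.1
      simpa [div_lt_one ht0, ht.1] using (div_pos hx ht0).le
    have hstep := integral_sawtooth_div_of_mem_Ico 0 hx hA hmem
    simp only [zero_add, Nat.cast_one, Nat.cast_zero, div_one, mul_one] at hstep ⊢
    rw [hstep]
    simp [harmonic_succ]
  | succ n ih =>
    have hn : (0 : ℝ) < (n + 1 : ℕ) := by positivity
    have hn' : (0 : ℝ) < (n + 1 + 1 : ℕ) := by positivity
    have hmem : ∀ t ∈ Ioc (x / (n + 1 + 1 : ℕ)) (x / (n + 1 : ℕ)),
        x / t ∈ Ico ((n + 1 : ℕ) : ℝ) ((n + 1 : ℕ) + 1) := fun t ht ↦ by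
      have ht0 : 0 < t := lt_trans (by positivity) ht.1
      have hlt := (div_lt_iff₀ hn').mp ht.1
      have hle := (le_div_iff₀ hn).mp ht.2
      push_cast at hlt hle ⊢
      exact ⟨by rw [le_div_iff₀ ht0]; linarith, by rw [div_lt_iff₀ ht0]; linarith⟩
    have hquot : x / (n + 1 : ℕ) / (x / (n + 1 + 1 : ℕ)) = (n + 1 + 1 : ℕ) / (n + 1 : ℕ) := by
      field_simp
    have hint := intervalIntegrable_sawtooth_comp (φ := fun t ↦ x / t) (by fun_prop)
    rw [← intervalIntegral.integral_add_adjacent_intervals (hint _ (x / (n + 1 : ℕ))) (hint _ _),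
      ih, integral_sawtooth_div_of_mem_Ico (n + 1) (by positivity) (by gcongr; simp) hmem, hquot,
      Real.log_div hn'.ne' hn.ne', Real.log_div (by positivity) hx.ne',
      Real.log_div (by positivity) hx.ne', Real.log_mul hA0.ne' hn.ne',
      Real.log_mul hA0.ne' hn'.ne', harmonic_succ (n + 1)]
    push_cast
    field_simp
    ring

theorem integral_sawtooth_div {x A : ℝ} (hx : 0 < x) (hA : x ≤ A) :
    ∫ t in (0 : ℝ)..A, sawtooth (x / t) =
      x * (1 - Real.eulerMascheroniConstant) + x * Real.log (A / x) - 1 / 2 * A := by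
  have hA0 : 0 < A := hx.trans_le hA
  have hlower : Tendsto (fun n : ℕ ↦ x / (n + 1 : ℕ)) atTop (𝓝 0) :=
    (tendsto_const_div_atTop_nhds_zero_nat x).comp (tendsto_add_atTop_nat 1)
  have hintegral : Tendsto (fun n : ℕ ↦ ∫ t in x / (n + 1 : ℕ)..A, sawtooth (x / t)) atTop
      (𝓝 (∫ t in (0 : ℝ)..A, sawtooth (x / t))) := by
    have hc := intervalIntegral.continuous_primitive
      (intervalIntegrable_sawtooth_comp (φ := fun t ↦ x / t) (by fun_prop)) A
    have := ((hc.tendsto 0).comp hlower).neg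
    simpa only [Function.comp_def, ← intervalIntegral.integral_symm] using this
  have hharmonic := Real.tendsto_harmonic_sub_log.comp (tendsto_add_atTop_nat 1)
  have hvalue := ((hharmonic.const_mul (-x)).add_const (x * Real.log (A / x) + x)).add
    ((hlower.const_mul (1 / 2)).add_const (-(1 / 2 * A)))
  refine (tendsto_nhds_unique hintegral (hvalue.congr fun n ↦ ?_)).trans (by ring)
  have hn : (0 : ℝ) < (n + 1 : ℕ) := by positivity
  rw [integral_sawtooth_div_succ hx hA n, Function.comp_apply, Real.log_div hA0.ne' hx.ne',
    Real.log_div (by positivity) hx.ne', Real.log_mul hA0.ne' hn.ne']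
  ring

theorem sum_divfun_eq_sum_div {N M : ℕ} (h : N ≤ M) :
    ∑ n ∈ Finset.Icc 1 N, divfun n = ∑ a ∈ Finset.Icc 1 M, N / a := by
  have hdiv : ∑ n ∈ Finset.Icc 1 N, divfun n = ∑ a ∈ Finset.Icc 1 N, N / a := by
    refine Eq.trans ?_ (ArithmeticFunction.sum_Ioc_sigma0_eq_sum_div N)
    exact Finset.sum_congr rfl fun n _ ↦ (ArithmeticFunction.sigma_zero_apply n).symm
  rw [hdiv]
  refine Finset.sum_subset (Finset.Icc_subset_Icc le_rfl h) fun a _ ha ↦ Nat.div_eq_of_lt ?_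
  simp only [Finset.mem_Icc, not_and, not_le] at *
  omega

theorem sum_divfun_eq_sub_sum_sawtooth {x : ℝ} (hx : 0 ≤ x) {M : ℕ} (hM : x ≤ M) :
    ∑ n ∈ Finset.Icc 1 ⌊x⌋₊, (divfun n : ℝ) =
      x * harmonic M - M / 2 - ∑ a ∈ Finset.Icc 1 M, sawtooth (x / a) := by
  have hterm : ∀ a : ℕ, ((⌊x⌋₊ / a : ℕ) : ℝ) = x * (a : ℝ)⁻¹ - 1 / 2 - sawtooth (x / a) :=
    fun a ↦ by
      rw [← Nat.floor_div_natCast, natCast_floor_eq_intCast_floor (by positivity), sawtooth,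
        Int.fract]
      ring
  rw [← Nat.cast_sum, sum_divfun_eq_sum_div (Nat.floor_le_of_le hM), Nat.cast_sum,
    Finset.sum_congr rfl fun a _ ↦ hterm a, Finset.sum_sub_distrib, Finset.sum_sub_distrib,
    ← Finset.mul_sum, harmonic_eq_sum_Icc]
  simp
  ring

/-- The error in comparing the sum of `f` over `1, …, M` with the integral over `[0, M + 1/2]`;
stopping halfway between two integers makes the Euler-Maclaurin boundary term at the right end
start with `f'`. -/
noncomputable def sumIntegralDefect (f : ℝ → ℝ) (M : ℕ) : ℝ :=
  ∑ a ∈ Finset.Icc 1 M, f a - ∫ t in (0 : ℝ)..(M + 1 / 2 : ℝ), f t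

theorem dirichletDelta_eq_sub_sumIntegralDefect {x : ℝ} (hx : 0 < x) {M : ℕ} (hM : x ≤ M) :
    DirichletDelta x =
      1 / 4 + x * (harmonic M - Real.log (M + 1 / 2) - Real.eulerMascheroniConstant)
        - sumIntegralDefect (fun t ↦ sawtooth (x / t)) M := by
  rw [DirichletDelta, sumIntegralDefect, sum_divfun_eq_sub_sum_sawtooth hx.le hM,
    integral_sawtooth_div hx (by linarith), Real.log_div (by positivity) hx.ne']
  ring

/-- The continuous periodic primitive `({t}² - {t} + 1/6) / 2` of the sawtooth. -/
noncomputable def sawtoothPrimitive (t : ℝ) : ℝ := (Int.fract t ^ 2 - Int.fract t + 1 / 6) / 2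

theorem hasSum_sawtoothPrimitive (t : ℝ) :
    HasSum (fun n : ℕ ↦ 1 / (n : ℝ) ^ 2 * Real.cos (2 * π * n * t))
      (2 * π ^ 2 * sawtoothPrimitive t) := by
  have h := hasSum_one_div_nat_pow_mul_cos one_ne_zero
    (x := Int.fract t) ⟨Int.fract_nonneg t, (Int.fract_lt_one t).le⟩
  have hbernoulli : (Polynomial.map (algebraMap ℚ ℝ) (Polynomial.bernoulli (2 * 1))).eval
      (Int.fract t) = Int.fract t ^ 2 - Int.fract t + 1 / 6 := by
    rw [mul_one, Polynomial.bernoulli]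
    simp [Finset.sum_range_succ, bernoulli_two, bernoulli_one, Polynomial.eval_monomial]
    ring
  convert! h using 1
  · ext n
    have : 2 * π * n * t = 2 * π * n * Int.fract t + ((n * ⌊t⌋ : ℤ) : ℝ) * (2 * π) := by
      rw [Int.fract]
      push_cast
      ring
    rw [this, Real.cos_add_int_mul_two_pi, mul_one]
  · rw [hbernoulli, sawtoothPrimitive]
    simp
    ring

theorem summable_one_div_nat_sq : Summable fun n : ℕ ↦ 1 / (n : ℝ) ^ 2 :=
  Real.summable_one_div_nat_pow.mpr one_lt_two

@[fun_prop]
theorem continuous_sawtoothPrimitive : Continuous sawtoothPrimitive := by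
  have h : sawtoothPrimitive =
      fun t ↦ (∑' n : ℕ, 1 / (n : ℝ) ^ 2 * Real.cos (2 * π * n * t)) / (2 * π ^ 2) := by
    ext t
    rw [(hasSum_sawtoothPrimitive t).tsum_eq]
    field_simp
  rw [h]
  refine (continuous_tsum (fun n ↦ by fun_prop) summable_one_div_nat_sq fun n t ↦ ?_).div_const _
  rw [norm_mul, Real.norm_of_nonneg (by positivity)]
  exact mul_le_of_le_one_right (by positivity) (Real.abs_cos_le_one _)

theorem abs_sawtoothPrimitive_le (t : ℝ) : |sawtoothPrimitive t| ≤ 1 := by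
  rw [sawtoothPrimitive, abs_le]
  constructor <;> nlinarith [Int.fract_nonneg t, (Int.fract_lt_one t).le]

theorem hasDerivWithinAt_sawtoothPrimitive (t : ℝ) :
    HasDerivWithinAt sawtoothPrimitive (sawtooth t) (Ioi t) t := by
  have hpoly : HasDerivAt (fun s : ℝ ↦ ((s - ⌊t⌋) ^ 2 - (s - ⌊t⌋) + 1 / 6) / 2) (sawtooth t) t := by
    have hsub : HasDerivAt (fun s : ℝ ↦ s - ⌊t⌋) 1 t := (hasDerivAt_id t).sub_const _
    convert! (((hsub.pow 2).sub hsub).add_const (1 / 6)).div_const 2 using 1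
    rw [sawtooth, Int.fract]
    ring
  refine hpoly.hasDerivWithinAt.congr_of_eventuallyEq ?_ rfl
  filter_upwards [Ioo_mem_nhdsGT (Int.lt_floor_add_one t)] with s hs
  have : Int.fract s = s - ⌊t⌋ := Int.fract_eq_iff.mpr
    ⟨by linarith [Int.floor_le t, hs.1], by linarith [hs.2], ⌊t⌋, by ring⟩
  rw [sawtoothPrimitive, this]

theorem integral_sawtooth_mul {f f' : ℝ → ℝ} {a b : ℝ} (hf : ∀ x, HasDerivAt f (f' x) x)
    (hf' : Continuous f') :
    ∫ t in a..b, sawtooth t * f t = sawtoothPrimitive b * f b - sawtoothPrimitive a * f a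
      - ∫ t in a..b, sawtoothPrimitive t * f' t := by
  have hfc : Continuous f := continuous_iff_continuousAt.mpr fun x ↦ (hf x).continuousAt
  have hparts := intervalIntegral.integral_mul_deriv_eq_deriv_mul_of_hasDeriv_right
    (a := a) (b := b) hfc.continuousOn continuous_sawtoothPrimitive.continuousOn
    (fun x _ ↦ (hf x).hasDerivWithinAt) (fun x _ ↦ hasDerivWithinAt_sawtoothPrimitive x)
    (hf'.intervalIntegrable _ _) (intervalIntegrable_sawtooth_comp measurable_id _ _)
  simp only [mul_comm (sawtooth _), mul_comm (sawtoothPrimitive _)]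
  exact hparts

theorem sumIntegralDefect_eq_integral_sawtooth_mul {f f' : ℝ → ℝ}
    (hf : ∀ x, HasDerivAt f (f' x) x) (hf' : Continuous f') (M : ℕ) :
    sumIntegralDefect f M = -(f 0 / 2) + ∫ t in (0 : ℝ)..(M + 1 / 2 : ℝ), sawtooth t * f' t := by
  set A : ℝ := M + 1 / 2 with hA
  have hA0 : 0 ≤ A := by positivity
  have hderiv : deriv f = f' := funext fun x ↦ (hf x).deriv
  have hfloor : ⌊A⌋₊ = M := (Nat.floor_eq_iff hA0).mpr ⟨by linarith, by linarith⟩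
  have habel := sum_mul_eq_sub_integral_mul (fun _ ↦ (1 : ℝ)) hA0
    (fun t _ ↦ (hf t).differentiableAt) (hderiv ▸ hf'.continuousOn.integrableOn_Icc)
  have hcount : ∀ t ∈ Ioc 0 A, f' t * ∑ _k ∈ Finset.Icc 0 ⌊t⌋₊, (1 : ℝ) =
      (t + 1 / 2) * f' t - sawtooth t * f' t := fun t ht ↦ by
    rw [Finset.sum_const, Nat.card_Icc, nsmul_eq_mul, Nat.sub_zero, Nat.cast_add,
      natCast_floor_eq_intCast_floor ht.1.le, sawtooth, Int.fract]
    push_cast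
    ring
  have hparts := intervalIntegral.integral_mul_deriv_eq_deriv_mul (a := 0) (b := A)
    (u := fun t ↦ t + 1 / 2) (fun x _ ↦ (hasDerivAt_id x).add_const _) (fun x _ ↦ hf x)
    intervalIntegrable_const (hf'.intervalIntegrable _ _)
  have hlin : IntervalIntegrable (fun t ↦ (t + 1 / 2) * f' t) volume 0 A :=
    Continuous.intervalIntegrable (by fun_prop) _ _
  have hsaw : IntervalIntegrable (fun t ↦ sawtooth t * f' t) volume 0 A :=
    (intervalIntegrable_sawtooth_comp measurable_id _ _).mul_continuousOn hf'.continuousOn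
  rw [hderiv, setIntegral_congr_fun measurableSet_Ioc hcount,
    ← intervalIntegral.integral_of_le hA0, intervalIntegral.integral_sub hlin hsaw, hparts,
    hfloor] at habel
  simp only [mul_one, one_mul, Finset.sum_const, Nat.card_Icc, nsmul_eq_mul] at habel
  have hsplit : f ↑(0 : ℕ) + ∑ a ∈ Finset.Icc 1 M, f a = ∑ a ∈ Finset.Icc 0 M, f a :=
    Finset.add_sum_Ioc_eq_sum_Icc (f := fun a : ℕ ↦ f a) M.zero_le
  rw [sumIntegralDefect, eq_sub_of_add_eq' hsplit, habel, hA]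
  push_cast
  ring

theorem sumIntegralDefect_eq_sub_integral_sawtoothPrimitive_mul {f f' f'' : ℝ → ℝ}
    (hf : ∀ x, HasDerivAt f (f' x) x) (hf' : ∀ x, HasDerivAt f' (f'' x) x)
    (hf'' : Continuous f'') (M : ℕ) :
    sumIntegralDefect f M =
      -(f 0 / 2) + sawtoothPrimitive (1 / 2) * f' (M + 1 / 2) - sawtoothPrimitive 0 * f' 0
        - ∫ t in (0 : ℝ)..(M + 1 / 2 : ℝ), sawtoothPrimitive t * f'' t := by
  have hperiod : sawtoothPrimitive (M + 1 / 2) = sawtoothPrimitive (1 / 2) := by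
    rw [sawtoothPrimitive, Int.fract_natCast_add, sawtoothPrimitive]
  rw [sumIntegralDefect_eq_integral_sawtooth_mul hf
    (continuous_iff_continuousAt.mpr fun x ↦ (hf' x).continuousAt),
    integral_sawtooth_mul hf' hf'', hperiod]
  ring

end Sawtooth

section Inversion

open Set Filter Topology
open scoped SchwartzMap

/-- The operator `F ↦ -y² F'` on Schwartz functions, which is differentiation conjugated by the
inversion `y = 1/a`. -/
noncomputable def invDeriv (F : 𝓢(ℝ, ℝ)) : 𝓢(ℝ, ℝ) :=
  -SchwartzMap.smulLeftCLM ℝ (fun y : ℝ ↦ y ^ 2) (SchwartzMap.derivCLM ℝ ℝ F)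

theorem invDeriv_apply (F : 𝓢(ℝ, ℝ)) (y : ℝ) : invDeriv F y = -(y ^ 2 * deriv F y) := by
  rw [invDeriv, neg_apply, SchwartzMap.smulLeftCLM_apply_apply (by fun_prop),
    SchwartzMap.derivCLM_apply, smul_eq_mul]

@[simp]
theorem invDeriv_zero (F : 𝓢(ℝ, ℝ)) : invDeriv F 0 = 0 := by simp [invDeriv_apply]

variable {F : 𝓢(ℝ, ℝ)}

theorem hasDerivAt_comp_inv_zero (hF : F 0 = 0) : HasDerivAt (fun a ↦ F a⁻¹) 0 0 := by
  obtain ⟨C, -, hdecay⟩ := F.decay 2 0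
  have hquadratic : (fun a ↦ F a⁻¹) =O[𝓝 0] fun a : ℝ ↦ a ^ 2 := by
    refine Asymptotics.IsBigO.of_bound C (Eventually.of_forall fun a ↦ ?_)
    rcases eq_or_ne a 0 with rfl | ha
    · simp [hF]
    have h := hdecay a⁻¹
    rw [norm_iteratedFDeriv_zero, norm_inv, inv_pow, inv_mul_le_iff₀ (by positivity)] at h
    rwa [norm_pow, mul_comm]
  have hlinear : (fun a : ℝ ↦ a ^ 2) =o[𝓝 0] fun a ↦ a := by
    simpa using Asymptotics.isLittleO_pow_pow (𝕜 := ℝ) one_lt_two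
  rw [hasDerivAt_iff_isLittleO]
  simpa [hF] using hquadratic.trans_isLittleO hlinear

theorem hasDerivAt_comp_inv (hF : F 0 = 0) (a : ℝ) :
    HasDerivAt (fun a ↦ F a⁻¹) (invDeriv F a⁻¹) a := by
  rcases eq_or_ne a 0 with rfl | ha
  · simpa using hasDerivAt_comp_inv_zero hF
  · convert! (F.hasDerivAt a⁻¹).comp a (hasDerivAt_inv ha) using 1
    rw [invDeriv_apply]
    ring

theorem continuous_comp_inv (hF : F 0 = 0) : Continuous fun a ↦ F a⁻¹ :=
  continuous_iff_continuousAt.mpr fun a ↦ (hasDerivAt_comp_inv hF a).continuousAt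

theorem tendsto_comp_inv_atTop (hF : F 0 = 0) : Tendsto (fun a ↦ F a⁻¹) atTop (𝓝 0) :=
  hF ▸ (F.continuous.tendsto 0).comp tendsto_inv_atTop_zero

theorem exists_abs_le (F : 𝓢(ℝ, ℝ)) : ∃ C, 0 < C ∧ ∀ y, |F y| ≤ C := by
  obtain ⟨C, hC, hdecay⟩ := F.decay 0 0
  exact ⟨C, hC, fun y ↦ by simpa using hdecay y⟩

theorem integrable_invDeriv_comp_inv (F : 𝓢(ℝ, ℝ)) : Integrable fun a ↦ invDeriv F a⁻¹ := by
  obtain ⟨A, -, hA⟩ := exists_abs_le (SchwartzMap.derivCLM ℝ ℝ F)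
  obtain ⟨B, -, hB⟩ := exists_abs_le (invDeriv F)
  refine (integrable_inv_one_add_sq.const_mul (A + B)).mono'
    (continuous_comp_inv (invDeriv_zero F)).aestronglyMeasurable (Eventually.of_forall fun a ↦ ?_)
  rw [Real.norm_eq_abs, ← div_eq_mul_inv, le_div_iff₀ (by positivity)]
  have hsq : |invDeriv F a⁻¹| * a ^ 2 ≤ |deriv F a⁻¹| := by
    rcases eq_or_ne a 0 with rfl | ha
    · simp
    · rw [invDeriv_apply, abs_neg, abs_mul, abs_of_nonneg (sq_nonneg a⁻¹)]
      field_simp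
      rfl
  have hA' := hA a⁻¹
  rw [SchwartzMap.derivCLM_apply] at hA'
  linarith [hB a⁻¹]

end Inversion

section SawtoothTransform

open Set Filter Topology
open scoped SchwartzMap FourierTransform Real

/-- The sine transform `y ↦ ∫ g(x) sin(2πxy) dx` of a Schwartz function, realised as minus the
imaginary part of its Fourier transform. -/
noncomputable def sineTransform (g : 𝓢(ℝ, ℝ)) : 𝓢(ℝ, ℝ) :=
  -SchwartzMap.postcompCLM Complex.imCLM (𝓕 (SchwartzMap.postcompCLM Complex.ofRealCLM g))

theorem sineTransform_apply (g : 𝓢(ℝ, ℝ)) (y : ℝ) :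
    sineTransform g y = ∫ x, g x * Real.sin (2 * π * x * y) := by
  have hint : Integrable fun x ↦
      Complex.exp (↑(-2 * π * x * y) * Complex.I) • SchwartzMap.postcompCLM Complex.ofRealCLM g x :=
    (SchwartzMap.integrable _).bdd_mul (c := 1) (by fun_prop)
      (Eventually.of_forall fun x ↦ (Complex.norm_exp_ofReal_mul_I _).le)
  rw [sineTransform, neg_apply, SchwartzMap.postcompCLM_apply, SchwartzMap.fourier_coe,
    Real.fourier_real_eq_integral_exp_smul, ← ContinuousLinearMap.integral_comp_comm _ hint,
    ← integral_neg]
  congr with x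
  rw [Complex.imCLM_apply, smul_eq_mul, SchwartzMap.postcompCLM_apply, Complex.ofRealCLM_apply,
    Complex.im_mul_ofReal, Complex.exp_ofReal_mul_I_im, neg_mul, neg_mul, neg_mul, Real.sin_neg]
  ring

@[simp]
theorem sineTransform_zero (g : 𝓢(ℝ, ℝ)) : sineTransform g 0 = 0 := by simp [sineTransform_apply]

/-- The average `∫ g(x) ({x/a} - 1/2) dx` of the dilated sawtooth against `g`. -/
noncomputable def sawtoothTransform (g : 𝓢(ℝ, ℝ)) (a : ℝ) : ℝ := ∫ x, g x * sawtooth (x / a)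

theorem integral_eq_intervalIntegral_of_forall_le_abs {f : ℝ → ℝ} {R : ℝ} (hR : 0 ≤ R)
    (hf : ∀ x, R ≤ |x| → f x = 0) : ∫ x, f x = ∫ x in -R..R, f x := by
  rw [intervalIntegral.integral_of_le (by linarith),
    setIntegral_eq_integral_of_forall_compl_eq_zero fun x hx ↦ hf x ?_]
  by_contra! h
  exact hx ⟨(abs_lt.mp h).1, (abs_lt.mp h).2.le⟩

theorem sawtoothTransform_eq_neg_integral_deriv_mul {g : 𝓢(ℝ, ℝ)} (hg : HasCompactSupport g)
    {a : ℝ} (ha : 0 < a) :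
    sawtoothTransform g a = -∫ x, deriv g x * (a * sawtoothPrimitive (x / a)) := by
  obtain ⟨R₀, hR₀, hvanish⟩ := hg.exists_pos_le_norm
  obtain ⟨R₁, -, hderiv⟩ := hg.deriv.exists_pos_le_norm
  have hR : 0 ≤ max R₀ R₁ := hR₀.le.trans (le_max_left _ _)
  have hg0 : ∀ x, max R₀ R₁ ≤ |x| → g x = 0 := fun x hx ↦ hvanish x ((le_max_left _ _).trans hx)
  have hprimitive (x : ℝ) : HasDerivWithinAt (fun x ↦ a * sawtoothPrimitive (x / a))
      (sawtooth (x / a)) (Ioi x) x := by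
    have hcomp := (hasDerivWithinAt_sawtoothPrimitive (x / a)).comp (s := Ioi x) x
      ((hasDerivAt_id x).div_const a).hasDerivWithinAt fun y hy ↦ div_lt_div_of_pos_right hy ha
    convert! hcomp.const_mul a using 1
    field_simp
  have hparts := intervalIntegral.integral_mul_deriv_eq_deriv_mul_of_hasDeriv_right
    (a := -max R₀ R₁) (b := max R₀ R₁) g.continuous.continuousOn
    (Continuous.continuousOn (by fun_prop)) (fun x _ ↦ (g.hasDerivAt x).hasDerivWithinAt)
    (fun x _ ↦ hprimitive x)
    ((SchwartzMap.derivCLM ℝ ℝ g).continuous.intervalIntegrable _ _)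
    (intervalIntegrable_sawtooth_comp (by fun_prop) _ _)
  rw [sawtoothTransform, integral_eq_intervalIntegral_of_forall_le_abs hR fun x hx ↦ by
      rw [hg0 x hx, zero_mul],
    integral_eq_intervalIntegral_of_forall_le_abs hR fun x hx ↦ by
      rw [hderiv x ((le_max_right _ _).trans hx), zero_mul],
    hparts, hg0 _ (le_abs_self _), hg0 _ (by rw [abs_neg]; exact le_abs_self _)]
  ring

theorem integral_deriv_mul_cos (g : 𝓢(ℝ, ℝ)) (y : ℝ) :
    ∫ x, deriv g x * Real.cos (2 * π * x * y) = 2 * π * y * sineTransform g y := by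
  have hcos (x : ℝ) : HasDerivAt (fun x ↦ Real.cos (2 * π * x * y))
      (-Real.sin (2 * π * x * y) * (2 * π * y)) x := by
    simpa using (((hasDerivAt_id x).const_mul (2 * π)).mul_const y).cos
  have hbound {f : ℝ → ℝ} (f₀ : 𝓢(ℝ, ℝ)) (hf : Continuous f) {C : ℝ} (hC : ∀ x, |f x| ≤ C) :
      Integrable (f * ⇑f₀) :=
    f₀.integrable.bdd_mul hf.aestronglyMeasurable (Eventually.of_forall hC)
  have hparts := integral_mul_deriv_eq_deriv_mul_of_integrable (fun x _ ↦ hcos x)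
    (fun x _ ↦ g.hasDerivAt x)
    (hbound (SchwartzMap.derivCLM ℝ ℝ g) (by fun_prop) fun x ↦ Real.abs_cos_le_one _)
    (hbound (C := |2 * π * y|) g (by fun_prop) fun x ↦ by
      rw [abs_mul, abs_neg]
      exact mul_le_of_le_one_left (abs_nonneg _) (Real.abs_sin_le_one _))
    (hbound g (by fun_prop) fun x ↦ Real.abs_cos_le_one _)
  simp only [mul_comm (deriv g _)]
  rw [hparts, sineTransform_apply, ← integral_const_mul, ← integral_neg]
  congr with x
  ring

theorem hasSum_sawtoothTransform {g : 𝓢(ℝ, ℝ)} (hg : HasCompactSupport g) {a : ℝ} (ha : 0 < a) :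
    HasSum (fun n : ℕ ↦ -(1 / (π * n)) * sineTransform g (n / a)) (sawtoothTransform g a) := by
  have hcoeff (n : ℕ) : -(1 / (π * n)) * sineTransform g (n / a) =
      -∫ x, a / (2 * π ^ 2) * (1 / (n : ℝ) ^ 2) *
        (deriv g x * Real.cos (2 * π * x * (n / a))) := by
    rw [integral_const_mul, integral_deriv_mul_cos]
    rcases eq_or_ne n 0 with rfl | hn
    · simp
    · field_simp
  simp only [hcoeff]
  rw [sawtoothTransform_eq_neg_integral_deriv_mul hg ha]
  refine (hasSum_integral_of_dominated_convergence
    (fun (n : ℕ) x ↦ a / (2 * π ^ 2) * (1 / (n : ℝ) ^ 2) * |deriv g x|) (fun n ↦ ?_)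
    (fun n ↦ Eventually.of_forall fun x ↦ ?_)
    (Eventually.of_forall fun x ↦ (summable_one_div_nat_sq.mul_left _).mul_right _) ?_
    (Eventually.of_forall fun x ↦ ?_)).neg
  · have : Continuous (deriv g) := (SchwartzMap.derivCLM ℝ ℝ g).continuous
    exact Continuous.aestronglyMeasurable (by fun_prop)
  · rw [norm_mul, norm_mul (deriv g x), Real.norm_of_nonneg (by positivity), Real.norm_eq_abs,
      Real.norm_eq_abs]
    gcongr
    exact mul_le_of_le_one_right (abs_nonneg _) (Real.abs_cos_le_one _)
  · simp only [tsum_mul_right]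
    exact (SchwartzMap.derivCLM ℝ ℝ g).integrable.abs.const_mul _
  · have h := (hasSum_sawtoothPrimitive (x / a)).mul_left (a / (2 * π ^ 2) * deriv g x)
    convert! h using 1
    · ext n
      rw [show 2 * π * x * (n / a) = 2 * π * n * (x / a) by ring]
      ring
    · field_simp

theorem exists_abs_comp_div_le {F : 𝓢(ℝ, ℝ)} (hF : F 0 = 0) :
    ∃ C, 0 < C ∧ ∀ (n : ℕ) (a : ℝ), 0 < a → |F (n / a)| ≤ C * a / n := by
  obtain ⟨C, hC, hdecay⟩ := F.decay 1 0
  refine ⟨C, hC, fun n a ha ↦ ?_⟩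
  rcases n.eq_zero_or_pos with rfl | hn
  · simp [hF]
  have h := hdecay (n / a)
  rw [pow_one, norm_iteratedFDeriv_zero, Real.norm_of_nonneg (by positivity),
    Real.norm_eq_abs, div_mul_eq_mul_div, div_le_iff₀ ha] at h
  rw [le_div_iff₀ (by positivity)]
  linarith

theorem hasSum_integral_sawtoothTransform {g : 𝓢(ℝ, ℝ)} (hg : HasCompactSupport g) {A : ℝ}
    (hA : 0 < A) :
    HasSum (fun n : ℕ ↦ ∫ t in (0 : ℝ)..A, -(1 / (π * n)) * sineTransform g (n / t))
      (∫ t in (0 : ℝ)..A, sawtoothTransform g t) := by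
  obtain ⟨C, hC, hbound⟩ := exists_abs_comp_div_le (sineTransform_zero g)
  refine intervalIntegral.hasSum_integral_of_dominated_convergence
    (fun (n : ℕ) _ ↦ C * A / π * (1 / (n : ℝ) ^ 2)) (fun n ↦ ?_)
    (fun n ↦ Eventually.of_forall fun t ht ↦ ?_)
    (Eventually.of_forall fun t _ ↦ summable_one_div_nat_sq.mul_left _) intervalIntegrable_const
    (Eventually.of_forall fun t ht ↦ hasSum_sawtoothTransform hg (uIoc_of_le hA.le ▸ ht).1)
  · have : Measurable (sineTransform g) := (sineTransform g).continuous.measurable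
    exact Measurable.aestronglyMeasurable (by fun_prop)
  · rw [uIoc_of_le hA.le] at ht
    rw [norm_mul, norm_neg, Real.norm_of_nonneg (by positivity), Real.norm_eq_abs]
    calc 1 / (π * n) * |sineTransform g (n / t)| ≤ 1 / (π * n) * (C * A / n) := by
          gcongr
          exact (hbound n t ht.1).trans (by gcongr; exact ht.2)
      _ = C * A / π * (1 / (n : ℝ) ^ 2) := by ring

theorem hasSum_sumIntegralDefect_sawtoothTransform {g : 𝓢(ℝ, ℝ)} (hg : HasCompactSupport g)
    (M : ℕ) :
    HasSum (fun n : ℕ ↦ -(1 / (π * n)) * sumIntegralDefect (fun t ↦ sineTransform g (n / t)) M)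
      (sumIntegralDefect (sawtoothTransform g) M) := by
  have hsum : HasSum (fun n : ℕ ↦
      ∑ a ∈ Finset.Icc 1 M, -(1 / (π * n)) * sineTransform g (n / (a : ℝ)))
      (∑ a ∈ Finset.Icc 1 M, sawtoothTransform g a) :=
    hasSum_sum fun a ha ↦ hasSum_sawtoothTransform hg <|
      Nat.cast_pos.mpr (Finset.mem_Icc.mp ha).1
  have hintegral := hasSum_integral_sawtoothTransform hg (A := M + 1 / 2) (by positivity)
  convert! hsum.sub hintegral using 1
  ext n
  rw [sumIntegralDefect, ← Finset.mul_sum, intervalIntegral.integral_const_mul, mul_sub]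

end SawtoothTransform

section SmoothedDelta

open Set Filter Topology
open scoped SchwartzMap Real

theorem integrable_mul_of_abs_le {X : Type*} [MeasurableSpace X] {μ : Measure X} {f h : X → ℝ}
    (hf : Integrable f μ) (hh : Measurable h) {C : ℝ} (hC : ∀ x, |h x| ≤ C) :
    Integrable (fun x ↦ f x * h x) μ :=
  hf.mul_bdd hh.aestronglyMeasurable (Eventually.of_forall hC)

theorem integrable_prod_mul_sawtooth {f : ℝ → ℝ} (hf : Integrable f) (A : ℝ) :
    Integrable (fun p : ℝ × ℝ ↦ f p.1 * sawtooth (p.1 / p.2))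
      (volume.prod (volume.restrict (Ioc 0 A))) := by
  have hprod : Integrable (fun p : ℝ × ℝ ↦ f p.1 * (1 : ℝ))
      (volume.prod (volume.restrict (Ioc 0 A))) := hf.mul_prod (integrable_const 1)
  simp only [mul_one] at hprod
  exact hprod.mul_bdd (measurable_sawtooth.comp (by fun_prop)).aestronglyMeasurable
    (Eventually.of_forall fun p ↦ abs_sawtooth_le _)

theorem integrable_mul_sumIntegralDefect_sawtooth {f : ℝ → ℝ} (hf : Integrable f) (M : ℕ) :
    Integrable fun x ↦ f x * sumIntegralDefect (fun t ↦ sawtooth (x / t)) M := by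
  simp only [sumIntegralDefect, mul_sub, Finset.mul_sum,
    intervalIntegral.integral_of_le (show (0 : ℝ) ≤ M + 1 / 2 by positivity),
    ← integral_const_mul]
  have hinner : Integrable fun x ↦ ∫ t in Ioc 0 ((M : ℝ) + 1 / 2), f x * sawtooth (x / t) :=
    (integrable_prod_mul_sawtooth hf _).integral_prod_left
  refine (integrable_finsetSum _ fun a _ ↦ ?_).sub hinner
  exact integrable_mul_of_abs_le hf (by fun_prop) fun x ↦ abs_sawtooth_le _

theorem integral_mul_sumIntegralDefect_sawtooth (g : 𝓢(ℝ, ℝ)) (M : ℕ) :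
    ∫ x, g x * sumIntegralDefect (fun t ↦ sawtooth (x / t)) M =
      sumIntegralDefect (sawtoothTransform g) M := by
  have hterm (a : ℕ) : Integrable fun x ↦ g x * sawtooth (x / a) :=
    integrable_mul_of_abs_le g.integrable (by fun_prop) fun x ↦ abs_sawtooth_le _
  have hprod := integrable_prod_mul_sawtooth g.integrable (M + 1 / 2)
  have hfubini := integral_integral_swap (f := fun x t ↦ g x * sawtooth (x / t)) hprod
  have hinner : Integrable fun x ↦ ∫ t in Ioc 0 ((M : ℝ) + 1 / 2), g x * sawtooth (x / t) :=
    hprod.integral_prod_left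
  simp only [sumIntegralDefect, mul_sub, Finset.mul_sum,
    intervalIntegral.integral_of_le (show (0 : ℝ) ≤ M + 1 / 2 by positivity),
    ← integral_const_mul, sawtoothTransform]
  rw [integral_sub (integrable_finsetSum _ fun a _ ↦ hterm a) hinner,
    integral_finsetSum _ fun a _ ↦ hterm a, hfubini]

theorem integral_mul_dirichletDelta_eq {g : 𝓢(ℝ, ℝ)} (hg : ∀ x ≤ 0, g x = 0) {M : ℕ}
    (hM : ∀ x : ℝ, M < x → g x = 0) :
    ∫ x, g x * DirichletDelta x =
      1 / 4 * (∫ x, g x) + (harmonic M - Real.log (M + 1 / 2) - Real.eulerMascheroniConstant) *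
        (∫ x, g x * x) - sumIntegralDefect (sawtoothTransform g) M := by
  have hmoment : Integrable fun x ↦ g x * x := by
    refine (SchwartzMap.smulLeftCLM ℝ (fun x : ℝ ↦ x) g).integrable.congr
      (Eventually.of_forall fun x ↦ ?_)
    rw [SchwartzMap.smulLeftCLM_apply_apply (by fun_prop), smul_eq_mul, mul_comm]
  set c : ℝ := harmonic M - Real.log (M + 1 / 2) - Real.eulerMascheroniConstant
  have hpointwise (x : ℝ) : g x * DirichletDelta x = 1 / 4 * g x + c * (g x * x) -
      g x * sumIntegralDefect (fun t ↦ sawtooth (x / t)) M := by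
    by_cases hx : 0 < x ∧ x ≤ M
    · rw [dirichletDelta_eq_sub_sumIntegralDefect hx.1 hx.2]
      ring
    · have hgx : g x = 0 := by
        rcases not_and_or.mp hx with h | h
        exacts [hg x (not_lt.mp h), hM x (not_le.mp h)]
      simp [hgx]
  have hlinear : Integrable fun x ↦ 1 / 4 * g x + c * (g x * x) :=
    (g.integrable.const_mul _).add (hmoment.const_mul _)
  simp only [hpointwise]
  rw [integral_sub hlinear
      (integrable_mul_sumIntegralDefect_sawtooth g.integrable M),
    integral_add (g.integrable.const_mul _) (hmoment.const_mul _), integral_const_mul,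
    integral_const_mul, integral_mul_sumIntegralDefect_sawtooth]

theorem tendsto_harmonic_sub_log_add_half :
    Tendsto (fun M : ℕ ↦ (harmonic M : ℝ) - Real.log (M + 1 / 2) - Real.eulerMascheroniConstant)
      atTop (𝓝 0) := by
  have hlog : Tendsto (fun M : ℕ ↦ Real.log (M + 1 / 2) - Real.log M) atTop (𝓝 0) :=
    (Real.tendsto_log_comp_add_sub_log (1 / 2)).comp tendsto_natCast_atTop_atTop
  convert! (Real.tendsto_harmonic_sub_log.sub hlog).sub_const Real.eulerMascheroniConstant using 2
  · ring
  · ring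

variable {F : 𝓢(ℝ, ℝ)}

theorem integrable_mul_invDeriv_comp_inv {f : ℝ → ℝ} (hf : Measurable f)
    (hf1 : ∀ x, |f x| ≤ 1) : Integrable fun α ↦ f α * invDeriv F α⁻¹ := by
  simpa only [mul_comm] using integrable_mul_of_abs_le (integrable_invDeriv_comp_inv F) hf hf1

theorem abs_setIntegral_mul_invDeriv_comp_inv_le {f : ℝ → ℝ} (hf : Measurable f)
    (hf1 : ∀ x, |f x| ≤ 1) (s : Set ℝ) :
    |∫ α in s, f α * invDeriv F α⁻¹| ≤ ∫ α, |invDeriv F α⁻¹| :=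
  have hint := integrable_mul_invDeriv_comp_inv (F := F) hf hf1
  calc |∫ α in s, f α * invDeriv F α⁻¹| ≤ ∫ α in s, |f α * invDeriv F α⁻¹| :=
        abs_integral_le_integral_abs
    _ ≤ ∫ α, |f α * invDeriv F α⁻¹| :=
        setIntegral_le_integral hint.abs (Eventually.of_forall fun _ ↦ abs_nonneg _)
    _ ≤ ∫ α, |invDeriv F α⁻¹| :=
        integral_mono hint.abs (integrable_invDeriv_comp_inv F).abs fun α ↦ by
          simpa only [abs_mul] using mul_le_of_le_one_left (abs_nonneg _) (hf1 α)

theorem sumIntegralDefect_comp_div (hF : F 0 = 0) {n : ℕ} (hn : n ≠ 0) (M : ℕ) :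
    sumIntegralDefect (fun t ↦ F (n / t)) M =
      1 / n * (sawtoothPrimitive (1 / 2) * invDeriv F ((M + 1 / 2) / n)⁻¹ -
        ∫ α in (0 : ℝ)..(M + 1 / 2) / n,
          sawtoothPrimitive (n * α) * invDeriv (invDeriv F) α⁻¹) := by
  have hn0 : (n : ℝ) ≠ 0 := mod_cast hn
  have hdiv (t : ℝ) : HasDerivAt (fun t : ℝ ↦ t / n) (1 / n) t := (hasDerivAt_id t).div_const _
  have hfirst (t : ℝ) : HasDerivAt (fun t : ℝ ↦ F (n / t)) (invDeriv F (t / n)⁻¹ / n) t := by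
    convert! (hasDerivAt_comp_inv hF (t / n)).comp t (hdiv t) using 1
    · ext s
      simp
    · ring
  have hsecond (t : ℝ) : HasDerivAt (fun t : ℝ ↦ invDeriv F (t / n)⁻¹ / n)
      (invDeriv (invDeriv F) (t / n)⁻¹ / n ^ 2) t := by
    convert! ((hasDerivAt_comp_inv (invDeriv_zero F) (t / n)).comp t (hdiv t)).div_const (n : ℝ)
      using 1
    ring
  have hcont : Continuous fun t : ℝ ↦ invDeriv (invDeriv F) (t / n)⁻¹ / n ^ 2 :=
    ((continuous_comp_inv (invDeriv_zero _)).comp (by fun_prop)).div_const _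
  have hscale := intervalIntegral.integral_comp_div (a := 0) (b := M + 1 / 2)
    (fun α ↦ sawtoothPrimitive (n * α) * invDeriv (invDeriv F) α⁻¹) hn0
  have hintegrand : ∫ t in (0 : ℝ)..(M + 1 / 2), sawtoothPrimitive t *
      (invDeriv (invDeriv F) (t / n)⁻¹ / n ^ 2) = 1 / n ^ 2 * ∫ t in (0 : ℝ)..(M + 1 / 2),
        sawtoothPrimitive (n * (t / n)) * invDeriv (invDeriv F) (t / n)⁻¹ := by
    rw [← intervalIntegral.integral_const_mul]
    congr with t
    rw [mul_div_cancel₀ _ hn0]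
    ring
  rw [sumIntegralDefect_eq_sub_integral_sawtoothPrimitive_mul hfirst hsecond hcont, hintegrand,
    hscale]
  simp only [div_zero, hF, zero_div, inv_zero, invDeriv_zero, smul_eq_mul]
  field_simp
  ring

theorem tendsto_sumIntegralDefect_comp_div (hF : F 0 = 0) {n : ℕ} (hn : n ≠ 0) :
    Tendsto (sumIntegralDefect fun t ↦ F (n / t)) atTop
      (𝓝 (-(1 / n * ∫ α in Ioi (0 : ℝ),
        sawtoothPrimitive (n * α) * invDeriv (invDeriv F) α⁻¹))) := by
  have hend : Tendsto (fun M : ℕ ↦ ((M : ℝ) + 1 / 2) / n) atTop atTop :=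
    (tendsto_atTop_add_const_right _ _ tendsto_natCast_atTop_atTop).atTop_div_const (by positivity)
  have hboundary := (tendsto_comp_inv_atTop (invDeriv_zero F)).comp hend
  have hint := intervalIntegral_tendsto_integral_Ioi 0
    (integrable_mul_invDeriv_comp_inv (F := invDeriv F) (f := fun α ↦ sawtoothPrimitive (n * α))
      (Continuous.measurable (by fun_prop)) fun α ↦ abs_sawtoothPrimitive_le _).integrableOn hend
  have hlim := ((hboundary.const_mul (sawtoothPrimitive (1 / 2))).sub hint).const_mul (1 / (n : ℝ))
  rw [mul_zero, zero_sub, mul_neg] at hlim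
  exact hlim.congr fun M ↦ (sumIntegralDefect_comp_div hF hn M).symm

theorem exists_abs_sumIntegralDefect_comp_div_le (hF : F 0 = 0) :
    ∃ C, ∀ n M : ℕ, |sumIntegralDefect (fun t ↦ F (n / t)) M| ≤ C * (1 / n) := by
  obtain ⟨C, -, hbound⟩ := exists_abs_le (invDeriv F)
  refine ⟨C + ∫ α, |invDeriv (invDeriv F) α⁻¹|, fun n M ↦ ?_⟩
  rcases eq_or_ne n 0 with rfl | hn
  · simp [sumIntegralDefect, hF]
  rw [sumIntegralDefect_comp_div hF hn, abs_mul, abs_of_nonneg (by positivity), mul_comm]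
  gcongr
  refine (abs_sub _ _).trans (add_le_add ?_ ?_)
  · rw [abs_mul]
    exact (mul_le_of_le_one_left (abs_nonneg _) (abs_sawtoothPrimitive_le _)).trans (hbound _)
  · rw [intervalIntegral.integral_of_le (by positivity)]
    exact abs_setIntegral_mul_invDeriv_comp_inv_le (Continuous.measurable (by fun_prop))
      (fun α ↦ abs_sawtoothPrimitive_le _) _

theorem tendsto_sumIntegralDefect_sawtoothTransform {g : 𝓢(ℝ, ℝ)} (hg : HasCompactSupport g) :
    Tendsto (sumIntegralDefect (sawtoothTransform g)) atTop
      (𝓝 (∑' n : ℕ, 1 / (π * n ^ 2) * ∫ α in Ioi (0 : ℝ),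
        sawtoothPrimitive (n * α) * invDeriv (invDeriv (sineTransform g)) α⁻¹)) := by
  obtain ⟨C, hbound⟩ := exists_abs_sumIntegralDefect_comp_div_le (sineTransform_zero g)
  refine (tendsto_tsum_of_dominated_convergence
    (bound := fun n : ℕ ↦ C / π * (1 / (n : ℝ) ^ 2)) (summable_one_div_nat_sq.mul_left _)
    (fun n ↦ ?_) (Eventually.of_forall fun M n ↦ ?_)).congr fun M ↦
      (hasSum_sumIntegralDefect_sawtoothTransform hg M).tsum_eq
  · rcases eq_or_ne n 0 with rfl | hn
    · simp
    convert! (tendsto_sumIntegralDefect_comp_div (sineTransform_zero g) hn).const_mul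
      (-(1 / (π * n))) using 2
    field_simp
  · rw [norm_mul, norm_neg, Real.norm_of_nonneg (by positivity), Real.norm_eq_abs]
    calc _ ≤ 1 / (π * n) * (C * (1 / n)) := by gcongr; exact hbound n M
      _ = _ := by ring

theorem integral_mul_dirichletDelta_eq_sub_tsum {g : 𝓢(ℝ, ℝ)} (hg : HasCompactSupport g)
    (hpos : ∀ x ≤ 0, g x = 0) :
    ∫ x, g x * DirichletDelta x = 1 / 4 * (∫ x, g x) -
      ∑' n : ℕ, 1 / (π * n ^ 2) * ∫ α in Ioi (0 : ℝ),
        sawtoothPrimitive (n * α) * invDeriv (invDeriv (sineTransform g)) α⁻¹ := by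
  obtain ⟨R, -, hR⟩ := hg.exists_pos_le_norm
  have hlim := ((tendsto_harmonic_sub_log_add_half.mul_const (∫ x, g x * x)).const_add
    (1 / 4 * ∫ x, g x)).sub (tendsto_sumIntegralDefect_sawtoothTransform hg)
  rw [zero_mul, add_zero] at hlim
  refine tendsto_nhds_unique (tendsto_const_nhds.congr' ?_) hlim
  filter_upwards [eventually_ge_atTop ⌈R⌉₊] with M hM
  exact integral_mul_dirichletDelta_eq hpos fun x hx ↦
    hR x ((Nat.ceil_le.mp hM).trans (hx.le.trans (le_abs_self x)))

end SmoothedDelta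

section VoronoiSummation

open Set Filter Topology
open scoped SchwartzMap Real

theorem hasSum_divfun_mul {h : ℕ → ℝ} (hh : Summable fun p : ℕ × ℕ ↦ h (p.1 * p.2)) :
    HasSum (fun m ↦ divfun m * h m) (∑' n, ∑' l, h (n * l)) := by
  have hfiber (m : ℕ) : Nat.card ((fun p : ℕ × ℕ ↦ p.1 * p.2) ⁻¹' {m}) = divfun m := by
    rcases eq_or_ne m 0 with rfl | hm
    · have : Infinite ((fun p : ℕ × ℕ ↦ p.1 * p.2) ⁻¹' {0}) :=
        Infinite.of_injective (fun n : ℕ ↦ ⟨(0, n), zero_mul n⟩) fun a b hab ↦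
          congrArg (fun p ↦ p.1.2) hab
      simp [divfun]
    · have hset : (fun p : ℕ × ℕ ↦ p.1 * p.2) ⁻¹' {m} = m.divisorsAntidiagonal := by
        ext p
        simp [Nat.mem_divisorsAntidiagonal, hm]
      rw [hset, Nat.card_coe_set_eq, Set.ncard_coe_finset, divfun, ← Nat.map_div_right_divisors,
        Finset.card_map]
  rw [← hh.tsum_prod]
  convert! hh.hasSum.tsum_fiberwise (fun p ↦ p.1 * p.2) using 1
  ext m
  rw [← hfiber, ← nsmul_eq_mul, ← tsum_const]
  exact tsum_congr fun p ↦ by rw [show p.1.1 * p.1.2 = m from p.2]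

variable {F : 𝓢(ℝ, ℝ)}

theorem hasSum_setIntegral_sawtoothPrimitive_mul_invDeriv (s : Set ℝ) (n : ℕ) :
    HasSum (fun l : ℕ ↦ 1 / (2 * π ^ 2) * (1 / (l : ℝ) ^ 2) *
        ∫ α in s, Real.cos (2 * π * (n * l : ℕ) * α) * invDeriv F α⁻¹)
      (∫ α in s, sawtoothPrimitive (n * α) * invDeriv F α⁻¹) := by
  simp only [← integral_const_mul]
  refine hasSum_integral_of_dominated_convergence
    (fun (l : ℕ) α ↦ 1 / (2 * π ^ 2) * (1 / (l : ℝ) ^ 2) * |invDeriv F α⁻¹|)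
    (fun l ↦ ?_) (fun l ↦ Eventually.of_forall fun α ↦ ?_)
    (Eventually.of_forall fun α ↦ (summable_one_div_nat_sq.mul_left _).mul_right _) ?_
    (Eventually.of_forall fun α ↦ ?_)
  · have := continuous_comp_inv (invDeriv_zero F)
    exact Continuous.aestronglyMeasurable (by fun_prop)
  · rw [norm_mul, Real.norm_of_nonneg (by positivity), norm_mul, Real.norm_eq_abs, Real.norm_eq_abs]
    gcongr
    exact mul_le_of_le_one_left (abs_nonneg _) (Real.abs_cos_le_one _)
  · simp only [tsum_mul_right]
    exact ((integrable_invDeriv_comp_inv F).abs.const_mul _).integrableOn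
  · have h := (hasSum_sawtoothPrimitive (n * α)).mul_left (1 / (2 * π ^ 2) * invDeriv F α⁻¹)
    convert! h using 1
    · ext l
      rw [Nat.cast_mul, show 2 * π * l * (n * α) = 2 * π * (n * l) * α by ring]
      ring
    · field_simp

/-- The coefficient `(2/π) ∫₀^∞ cos(2πmα) F(1/α) dα` of `d(m)` in the Voronoï formula, with the
conditionally convergent integral regularised by two integrations by parts. -/
noncomputable def voronoiCoeff (F : 𝓢(ℝ, ℝ)) (m : ℕ) : ℝ :=
  -(1 / (2 * π ^ 3 * m ^ 2)) *
    ∫ α in Ioi (0 : ℝ), Real.cos (2 * π * m * α) * invDeriv (invDeriv F) α⁻¹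

theorem summable_voronoiCoeff_mul (F : 𝓢(ℝ, ℝ)) :
    Summable fun p : ℕ × ℕ ↦ voronoiCoeff F (p.1 * p.2) := by
  have hsq : Summable fun p : ℕ × ℕ ↦ 1 / (p.1 : ℝ) ^ 2 * (1 / (p.2 : ℝ) ^ 2) :=
    summable_one_div_nat_sq.mul_of_nonneg summable_one_div_nat_sq (fun n ↦ by positivity)
      fun n ↦ by positivity
  refine Summable.of_norm_bounded
    (hsq.mul_left ((∫ α, |invDeriv (invDeriv F) α⁻¹|) / (2 * π ^ 3))) fun p ↦ ?_
  rw [voronoiCoeff, norm_mul, norm_neg, Real.norm_of_nonneg (by positivity), Real.norm_eq_abs]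
  calc _ ≤ 1 / (2 * π ^ 3 * ((p.1 * p.2 : ℕ) : ℝ) ^ 2) * ∫ α, |invDeriv (invDeriv F) α⁻¹| := by
        gcongr
        exact abs_setIntegral_mul_invDeriv_comp_inv_le (by fun_prop)
          (fun α ↦ Real.abs_cos_le_one _) _
    _ = _ := by
        push_cast
        ring

theorem hasSum_divfun_mul_voronoiCoeff {g : 𝓢(ℝ, ℝ)} (hg : HasCompactSupport g)
    (hpos : ∀ x ≤ 0, g x = 0) :
    HasSum (fun m : ℕ ↦ divfun m * voronoiCoeff (sineTransform g) m)
      ((∫ x, g x * DirichletDelta x) - 1 / 4 * ∫ x, g x) := by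
  convert! hasSum_divfun_mul (summable_voronoiCoeff_mul (sineTransform g)) using 1
  rw [integral_mul_dirichletDelta_eq_sub_tsum hg hpos, sub_sub_cancel_left, ← tsum_neg]
  refine tsum_congr fun n ↦ ?_
  rw [← (hasSum_setIntegral_sawtoothPrimitive_mul_invDeriv _ n).tsum_eq, ← tsum_mul_left,
    ← tsum_neg]
  refine tsum_congr fun l ↦ ?_
  rw [voronoiCoeff]
  push_cast
  ring

theorem integral_cos_mul_comp_inv (hF : F 0 = 0) {ω : ℝ} (hω : ω ≠ 0) (Λ : ℝ) :
    ∫ α in (0 : ℝ)..Λ, Real.cos (ω * α) * F α⁻¹ =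
      1 / ω ^ 2 * (Real.cos (ω * Λ) * invDeriv F Λ⁻¹) + 1 / ω * (Real.sin (ω * Λ) * F Λ⁻¹) -
        1 / ω ^ 2 * ∫ α in (0 : ℝ)..Λ, Real.cos (ω * α) * invDeriv (invDeriv F) α⁻¹ := by
  have hlin (α : ℝ) : HasDerivAt (fun α ↦ ω * α) ω α := by
    simpa using (hasDerivAt_id α).const_mul ω
  have hfirst := intervalIntegral.integral_mul_deriv_eq_deriv_mul (a := 0) (b := Λ)
    (fun α _ ↦ (hlin α).cos) (fun α _ ↦ hasDerivAt_comp_inv (invDeriv_zero F) α)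
    (Continuous.intervalIntegrable (by fun_prop) _ _)
    ((continuous_comp_inv (invDeriv_zero _)).intervalIntegrable _ _)
  have hsecond := intervalIntegral.integral_mul_deriv_eq_deriv_mul (a := 0) (b := Λ)
    (fun α _ ↦ (hlin α).sin.neg.mul_const ω) (fun α _ ↦ hasDerivAt_comp_inv hF α)
    (Continuous.intervalIntegrable (by fun_prop) _ _)
    ((continuous_comp_inv (invDeriv_zero _)).intervalIntegrable _ _)
  have hscalar : ∫ α in (0 : ℝ)..Λ, -(Real.cos (ω * α) * ω) * ω * F α⁻¹ =
      -ω ^ 2 * ∫ α in (0 : ℝ)..Λ, Real.cos (ω * α) * F α⁻¹ := by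
    rw [← intervalIntegral.integral_const_mul]
    congr with α
    ring
  simp only [inv_zero, invDeriv_zero, hF, mul_zero, sub_zero, Pi.neg_apply, hscalar]
    at hfirst hsecond
  rw [hfirst]
  simp only [neg_mul] at hsecond ⊢
  rw [hsecond]
  field_simp
  ring

theorem tendsto_integral_cos_mul_comp_inv (hF : F 0 = 0) {m : ℕ} (hm : m ≠ 0) :
    Tendsto (fun Λ ↦ 2 / π * ∫ α in (0 : ℝ)..Λ, Real.cos (2 * π * m * α) * F α⁻¹) atTop
      (𝓝 (voronoiCoeff F m)) := by
  have hω : 2 * π * m ≠ 0 := by positivity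
  have hcos := bdd_le_mul_tendsto_zero' (f := fun Λ ↦ Real.cos (2 * π * m * Λ)) 1
    (Eventually.of_forall fun Λ ↦ Real.abs_cos_le_one _) (tendsto_comp_inv_atTop (invDeriv_zero F))
  have hsin := bdd_le_mul_tendsto_zero' (f := fun Λ ↦ Real.sin (2 * π * m * Λ)) 1
    (Eventually.of_forall fun Λ ↦ Real.abs_sin_le_one _) (tendsto_comp_inv_atTop hF)
  have hint := intervalIntegral_tendsto_integral_Ioi 0
    (integrable_mul_invDeriv_comp_inv (F := invDeriv F) (f := fun α ↦ Real.cos (2 * π * m * α))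
      (by fun_prop) fun α ↦ Real.abs_cos_le_one _).integrableOn tendsto_id
  simp only [integral_cos_mul_comp_inv hF hω]
  convert! (((hcos.const_mul (1 / (2 * π * m) ^ 2)).add (hsin.const_mul (1 / (2 * π * m)))).sub
    (hint.const_mul (1 / (2 * π * m) ^ 2))).const_mul (2 / π) using 2
  rw [voronoiCoeff]
  field_simp
  ring

end VoronoiSummation

section VoronoiMainTerm

open Set Filter Topology
open scoped SchwartzMap Real

variable {q r Λ : ℝ}

theorem integral_cos_mul_sin_inv (hq : 0 < q) (hr : 0 < r) (Λ : ℝ) :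
    ∫ α in (0 : ℝ)..Λ, Real.cos (2 * π * r ^ 4 * α) * Real.sin (2 * π * q ^ 4 * α⁻¹) =
      q ^ 2 / r ^ 2 * divisorKernel (2 * π * (q * r) ^ 2) (r ^ 2 / q ^ 2 * Λ) := by
  have hc : r ^ 2 / q ^ 2 ≠ 0 := by positivity
  have hscale := intervalIntegral.integral_comp_mul_left (a := 0) (b := Λ)
    (fun t ↦ Real.sin (2 * π * (q * r) ^ 2 / t) * Real.cos (2 * π * (q * r) ^ 2 * t)) hc
  rw [mul_zero, smul_eq_mul, inv_div] at hscale
  rw [divisorKernel, ← hscale]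
  congr with α
  have hcos : 2 * π * (q * r) ^ 2 * (r ^ 2 / q ^ 2 * α) = 2 * π * r ^ 4 * α := by field_simp
  have hsin : 2 * π * (q * r) ^ 2 / (r ^ 2 / q ^ 2 * α) = 2 * π * q ^ 4 * α⁻¹ := by
    rw [div_eq_mul_inv, mul_inv, inv_div]
    field_simp
  rw [hcos, hsin, mul_comm]

theorem abs_integral_cos_mul_sin_inv_sub_le (hq : 1 ≤ q) (hr : 1 ≤ r) (hΛ : 4 * q ^ 2 ≤ Λ) :
    |(∫ α in (0 : ℝ)..Λ, Real.cos (2 * π * r ^ 4 * α) * Real.sin (2 * π * q ^ 4 * α⁻¹)) -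
      q / (2 * √2 * r ^ 3) * Real.cos (4 * π * (q * r) ^ 2 - π / 4)| ≤
      31 / r ^ 5 + 6 * q ^ 4 / √Λ := by
  have hq₀ : 0 < q := by linarith
  have hr₀ : 0 < r := by linarith
  have hΛ₀ : 0 < Λ := lt_of_lt_of_le (by positivity) hΛ
  have hqr : 1 ≤ (q * r) ^ 2 := one_le_pow₀ (one_le_mul_of_one_le_of_one_le hq hr)
  rw [integral_cos_mul_sin_inv hq₀ hr₀]
  set z := 2 * π * (q * r) ^ 2 with hz
  have hz_ge : (q * r) ^ 2 ≤ z :=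
    le_mul_of_one_le_left (by positivity) (by linarith [Real.pi_gt_three])
  have hsqrt_z : q * r ≤ √z := Real.le_sqrt_of_sq_le hz_ge
  have hY : 4 ≤ r ^ 2 / q ^ 2 * Λ := by
    rw [div_mul_eq_mul_div, le_div_iff₀ (by positivity)]
    exact hΛ.trans (le_mul_of_one_le_left hΛ₀.le (one_le_pow₀ hr))
  have hsqrt_Y : √(r ^ 2 / q ^ 2 * Λ) = r / q * √Λ := by
    rw [← div_pow, Real.sqrt_mul (by positivity), Real.sqrt_sq (by positivity)]
  have hsqrt_div : √(π / z) = 1 / (√2 * (q * r)) := by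
    rw [hz, show π / (2 * π * (q * r) ^ 2) = 1 / (2 * (q * r) ^ 2) by field_simp,
      Real.sqrt_div zero_le_one, Real.sqrt_mul zero_le_two, Real.sqrt_sq (by positivity),
      Real.sqrt_one]
  have hmain := abs_divisorKernel_sub_le (hqr.trans hz_ge) hY
  rw [hsqrt_Y, hsqrt_div, show 2 * z = 4 * π * (q * r) ^ 2 by rw [hz]; ring] at hmain
  calc _ = q ^ 2 / r ^ 2 * |divisorKernel z (r ^ 2 / q ^ 2 * Λ) -
          1 / 2 * (1 / (√2 * (q * r))) * Real.cos (4 * π * (q * r) ^ 2 - π / 4)| := by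
        rw [← abs_of_pos (show 0 < q ^ 2 / r ^ 2 by positivity), ← abs_mul, mul_sub,
          abs_of_pos (show 0 < q ^ 2 / r ^ 2 by positivity)]
        congr 2
        field_simp
    _ ≤ q ^ 2 / r ^ 2 * (31 / ((q * r) ^ 2 * (q * r)) + 6 / (r / q * √Λ)) := by
        refine mul_le_mul_of_nonneg_left (hmain.trans ?_) (by positivity)
        gcongr
    _ = 31 / (r ^ 5 * q) + 6 * q ^ 3 / (√Λ * r ^ 3) := by field_simp
    _ ≤ _ := by
        gcongr
        · exact le_mul_of_one_le_right (by positivity) hq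
        · norm_num
        · exact le_mul_of_one_le_right (by positivity) (one_le_pow₀ hr)

theorem rpow_quarter_pow_four {x : ℝ} (hx : 0 ≤ x) : (x ^ (1 / 4 : ℝ)) ^ 4 = x := by
  rw [← Real.rpow_mul_natCast hx]
  norm_num

variable {g : 𝓢(ℝ, ℝ)}

theorem integrable_prod_mul_cos_mul_sin_inv (g : 𝓢(ℝ, ℝ)) (ω Λ : ℝ) :
    Integrable (fun p : ℝ × ℝ ↦ g p.1 * (Real.cos (ω * p.2) * Real.sin (2 * π * p.1 * p.2⁻¹)))
      (volume.prod (volume.restrict (Ioc 0 Λ))) := by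
  have hconst : Integrable (fun p : ℝ × ℝ ↦ g p.1) (volume.prod (volume.restrict (Ioc 0 Λ))) := by
    simpa using g.integrable.mul_prod (integrable_const (1 : ℝ))
  have hprod := integrable_mul_of_abs_le hconst
    (h := fun p ↦ Real.cos (ω * p.2) * Real.sin (2 * π * p.1 * p.2⁻¹)) (by fun_prop)
    fun p ↦ abs_mul (Real.cos _) _ ▸
      mul_le_one₀ (Real.abs_cos_le_one _) (abs_nonneg _) (Real.abs_sin_le_one _)
  exact hprod

theorem integrable_mul_integral_cos_mul_sin_inv (g : 𝓢(ℝ, ℝ)) (ω : ℝ) (hΛ : 0 ≤ Λ) :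
    Integrable fun x ↦ g x *
      ∫ α in (0 : ℝ)..Λ, Real.cos (ω * α) * Real.sin (2 * π * x * α⁻¹) := by
  simp only [← intervalIntegral.integral_const_mul]
  simp only [intervalIntegral.integral_of_le hΛ]
  exact (integrable_prod_mul_cos_mul_sin_inv g ω Λ).integral_prod_left

theorem integral_cos_mul_sineTransform_inv (g : 𝓢(ℝ, ℝ)) (ω : ℝ) (hΛ : 0 ≤ Λ) :
    ∫ α in (0 : ℝ)..Λ, Real.cos (ω * α) * sineTransform g α⁻¹ =
      ∫ x, g x * ∫ α in (0 : ℝ)..Λ, Real.cos (ω * α) * Real.sin (2 * π * x * α⁻¹) := by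
  simp only [← intervalIntegral.integral_const_mul]
  simp only [intervalIntegral.integral_of_le hΛ]
  rw [integral_integral_swap (integrable_prod_mul_cos_mul_sin_inv g ω Λ)]
  congr with α
  rw [sineTransform_apply, ← integral_const_mul]
  congr with x
  ring

theorem abs_integral_cos_mul_sin_mul_inv_sub_rpow_le {x : ℝ} (hx : 1 ≤ x) (hr : 1 ≤ r)
    (hΛ : 4 * √x ≤ Λ) :
    |(∫ α in (0 : ℝ)..Λ, Real.cos (2 * π * r ^ 4 * α) * Real.sin (2 * π * x * α⁻¹)) -
      x ^ (1 / 4 : ℝ) / (2 * √2 * r ^ 3) * Real.cos (4 * π * √(r ^ 4 * x) - π / 4)| ≤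
      31 / r ^ 5 + 6 * x / √Λ := by
  set q := x ^ (1 / 4 : ℝ) with hq
  have hq₄ : q ^ 4 = x := rpow_quarter_pow_four (zero_le_one.trans hx)
  have hsqrt : √x = q ^ 2 := by
    rw [← hq₄, show q ^ 4 = (q ^ 2) ^ 2 by ring, Real.sqrt_sq (by positivity)]
  have hphase : √(r ^ 4 * x) = (q * r) ^ 2 := by
    rw [← hq₄, show r ^ 4 * q ^ 4 = ((q * r) ^ 2) ^ 2 by ring, Real.sqrt_sq (by positivity)]
  have hbound := abs_integral_cos_mul_sin_inv_sub_le (Real.one_le_rpow hx (by norm_num)) hr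
    (hsqrt ▸ hΛ)
  rwa [← hq, hq₄, ← hphase] at hbound

theorem abs_integral_cos_mul_sineTransform_inv_sub_le {R : ℝ} (hg : HasCompactSupport g)
    (hlow : ∀ x < 1, g x = 0) (hhigh : ∀ x, R < x → g x = 0) (hr : 1 ≤ r) (hΛ : 4 * √R ≤ Λ) :
    |(∫ α in (0 : ℝ)..Λ, Real.cos (2 * π * r ^ 4 * α) * sineTransform g α⁻¹) -
      1 / (2 * √2 * r ^ 3) *
        ∫ x, g x * (x ^ (1 / 4 : ℝ) * Real.cos (4 * π * √(r ^ 4 * x) - π / 4))| ≤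
      31 / r ^ 5 * (∫ x, |g x|) + 6 / √Λ * ∫ x, |g x| * |x| := by
  have hΛ₀ : 0 ≤ Λ := le_trans (by positivity) hΛ
  have hint := integrable_mul_integral_cos_mul_sin_inv g (2 * π * r ^ 4) hΛ₀
  have hrpow : Continuous fun x : ℝ ↦ x ^ (1 / 4 : ℝ) := Real.continuous_rpow_const (by norm_num)
  have hmain : Integrable fun x ↦
      g x * (x ^ (1 / 4 : ℝ) * Real.cos (4 * π * √(r ^ 4 * x) - π / 4)) :=
    Continuous.integrable_of_hasCompactSupport (by fun_prop) hg.mul_right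
  have hmoment : Integrable fun x ↦ |g x| * |x| :=
    Continuous.integrable_of_hasCompactSupport (by fun_prop) hg.abs.mul_right
  rw [integral_cos_mul_sineTransform_inv g _ hΛ₀, ← integral_const_mul,
    ← integral_sub hint (hmain.const_mul _), ← integral_const_mul,
    ← integral_const_mul, ← integral_add (g.integrable.abs.const_mul _) (hmoment.const_mul _),
    ← Real.norm_eq_abs]
  refine norm_integral_le_of_norm_le
    ((g.integrable.abs.const_mul _).add (hmoment.const_mul _)) (Eventually.of_forall fun x ↦ ?_)
  rcases lt_or_ge x 1 with hx | hx
  · simp [hlow x hx]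
  rcases lt_or_ge R x with hxR | hxR
  · simp [hhigh x hxR]
  have hxΛ : 4 * √x ≤ Λ := le_trans (by gcongr) hΛ
  have hbound := abs_integral_cos_mul_sin_mul_inv_sub_rpow_le hx hr hxΛ
  rw [Real.norm_eq_abs, abs_of_nonneg (zero_le_one.trans hx)]
  calc _ = |g x| * |(∫ α in (0 : ℝ)..Λ, Real.cos (2 * π * r ^ 4 * α) *
          Real.sin (2 * π * x * α⁻¹)) -
            x ^ (1 / 4 : ℝ) / (2 * √2 * r ^ 3) * Real.cos (4 * π * √(r ^ 4 * x) - π / 4)| := by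
        rw [← abs_mul, mul_sub]
        congr 2
        ring
    _ ≤ |g x| * (31 / r ^ 5 + 6 * x / √Λ) := by gcongr
    _ = _ := by ring

theorem abs_voronoiCoeff_sineTransform_sub_le (hg : HasCompactSupport g)
    (hlow : ∀ x < 1, g x = 0) {m : ℕ} (hm : m ≠ 0) :
    |voronoiCoeff (sineTransform g) m - 1 / (√2 * π) / (m : ℝ) ^ (3 / 4 : ℝ) *
        ∫ x, g x * (x ^ (1 / 4 : ℝ) * Real.cos (4 * π * √(m * x) - π / 4))| ≤
      31 / (m : ℝ) ^ (5 / 4 : ℝ) * ∫ x, |g x| := by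
  obtain ⟨R, hR⟩ := hg.isCompact.bddAbove
  have hhigh (x : ℝ) (hx : R < x) : g x = 0 := by
    by_contra hne
    exact hx.not_ge (hR (subset_tsupport _ hne))
  set r := (m : ℝ) ^ (1 / 4 : ℝ) with hr
  have hm₁ : (1 : ℝ) ≤ m := by exact_mod_cast Nat.one_le_iff_ne_zero.mpr hm
  have hr₁ : 1 ≤ r := Real.one_le_rpow hm₁ (by norm_num)
  have hr₄ : r ^ 4 = m := rpow_quarter_pow_four (Nat.cast_nonneg m)
  have hr_pow (k : ℕ) : (m : ℝ) ^ (k / 4 : ℝ) = r ^ k := by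
    rw [hr, ← Real.rpow_mul_natCast (Nat.cast_nonneg m)]
    ring_nf
  have h₃ := hr_pow 3
  have h₅ := hr_pow 5
  push_cast at h₃ h₅
  have hlim := ((tendsto_integral_cos_mul_comp_inv (sineTransform_zero g) hm).sub_const
    (1 / (√2 * π) / r ^ 3 *
      ∫ x, g x * (x ^ (1 / 4 : ℝ) * Real.cos (4 * π * √(m * x) - π / 4)))).abs
  have herror : Tendsto (fun Λ ↦ 31 / r ^ 5 * (∫ x, |g x|) + 6 / √Λ * ∫ x, |g x| * |x|) atTop
      (𝓝 (31 / r ^ 5 * (∫ x, |g x|) + 0 * ∫ x, |g x| * |x|)) :=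
    ((Real.tendsto_sqrt_atTop.const_div_atTop 6).mul_const _).const_add _
  rw [zero_mul, add_zero] at herror
  rw [h₃, h₅]
  refine le_of_tendsto_of_tendsto hlim herror ?_
  filter_upwards [eventually_ge_atTop (4 * √R)] with Λ hΛ
  have hbound := abs_integral_cos_mul_sineTransform_inv_sub_le hg hlow hhigh hr₁ hΛ
  rw [hr₄] at hbound
  refine le_trans ?_ hbound
  calc _ = 2 / π * _ := by
        rw [← abs_of_pos (show 0 < 2 / π by positivity), ← abs_mul, mul_sub,
          abs_of_pos (show 0 < 2 / π by positivity)]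
        congr 2
        field_simp
    _ ≤ _ := mul_le_of_le_one_left (abs_nonneg _)
        ((div_le_one Real.pi_pos).mpr (by linarith [Real.pi_gt_three]))

end VoronoiMainTerm

section Mollifier

open Set Filter Topology
open scoped SchwartzMap FourierTransform ContDiff Real

/-- The cosine transform `y ↦ ∫ g(x) cos(2πxy) dx` of a Schwartz function, realised as the real
part of its Fourier transform. -/
noncomputable def cosineTransform (g : 𝓢(ℝ, ℝ)) : 𝓢(ℝ, ℝ) :=
  SchwartzMap.postcompCLM Complex.reCLM (𝓕 (SchwartzMap.postcompCLM Complex.ofRealCLM g))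

theorem cosineTransform_apply (g : 𝓢(ℝ, ℝ)) (y : ℝ) :
    cosineTransform g y = ∫ x, g x * Real.cos (2 * π * x * y) := by
  have hint : Integrable fun x ↦
      Complex.exp (↑(-2 * π * x * y) * Complex.I) • SchwartzMap.postcompCLM Complex.ofRealCLM g x :=
    (SchwartzMap.integrable _).bdd_mul (c := 1) (by fun_prop)
      (Eventually.of_forall fun x ↦ (Complex.norm_exp_ofReal_mul_I _).le)
  rw [cosineTransform, SchwartzMap.postcompCLM_apply, SchwartzMap.fourier_coe,
    Real.fourier_real_eq_integral_exp_smul, ← ContinuousLinearMap.integral_comp_comm _ hint]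
  congr with x
  rw [Complex.reCLM_apply, smul_eq_mul, SchwartzMap.postcompCLM_apply, Complex.ofRealCLM_apply,
    Complex.re_mul_ofReal, Complex.exp_ofReal_mul_I_re, neg_mul, neg_mul, neg_mul, Real.cos_neg,
    mul_comm]

/-- The bump function from which `mollifier` is built; only its support `(-1, 1)` matters. -/
noncomputable def mollifierBump : ContDiffBump (0 : ℝ) where
  rIn := 1 / 2
  rOut := 1
  rIn_pos := by norm_num
  rIn_lt_rOut := by norm_num

/-- An even, nonnegative, smooth probability density supported in `(-1, 1)`. -/
noncomputable def mollifier : 𝓢(ℝ, ℝ) :=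
  mollifierBump.hasCompactSupport_normed.toSchwartzMap (mollifierBump.contDiff_normed (μ := volume))

theorem mollifier_nonneg (w : ℝ) : 0 ≤ mollifier w := mollifierBump.nonneg_normed w

theorem mollifier_neg (w : ℝ) : mollifier (-w) = mollifier w := mollifierBump.normed_neg w

theorem integral_mollifier : ∫ w, mollifier w = 1 := mollifierBump.integral_normed

theorem mollifier_eq_zero {w : ℝ} (hw : w ∉ Ioo (-1) 1) : mollifier w = 0 := by
  have hsupp : Function.support (mollifierBump.normed volume) = Metric.ball 0 1 :=
    mollifierBump.support_normed_eq
  rw [Real.ball_eq_Ioo, zero_sub, zero_add] at hsupp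
  exact Function.notMem_support.mp (hsupp ▸ hw)

theorem abs_integral_mollifier_mul_le {f : ℝ → ℝ} {B : ℝ} (hf : ∀ w ∈ Ioo (-1) 1, |f w| ≤ B) :
    |∫ w, mollifier w * f w| ≤ B := by
  have hB : ∫ w, mollifier w * B = B := by rw [integral_mul_const, integral_mollifier, one_mul]
  rw [← hB, ← Real.norm_eq_abs]
  refine norm_integral_le_of_norm_le (mollifier.integrable.mul_const B)
    (Eventually.of_forall fun w ↦ ?_)
  by_cases hw : w ∈ Ioo (-1) 1
  · rw [norm_mul, Real.norm_of_nonneg (mollifier_nonneg w)]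
    exact mul_le_mul_of_nonneg_left (hf w hw) (mollifier_nonneg w)
  · simp [mollifier_eq_zero hw]

theorem abs_cosineTransform_mollifier_le_one (y : ℝ) : |cosineTransform mollifier y| ≤ 1 := by
  rw [cosineTransform_apply]
  exact abs_integral_mollifier_mul_le fun w _ ↦ Real.abs_cos_le_one _

theorem abs_cosineTransform_mollifier_sub_one_le {y : ℝ} (hy : 0 ≤ y) :
    |cosineTransform mollifier y - 1| ≤ 2 * π * y := by
  have hcos : Integrable fun w ↦ mollifier w * Real.cos (2 * π * w * y) :=
    integrable_mul_of_abs_le mollifier.integrable (by fun_prop) fun w ↦ Real.abs_cos_le_one _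
  rw [cosineTransform_apply, ← integral_mollifier, ← integral_sub hcos mollifier.integrable]
  simp only [← mul_sub_one]
  refine abs_integral_mollifier_mul_le fun w hw ↦ ?_
  have hlip := Real.abs_cos_sub_cos_le (2 * π * w * y) 0
  rw [Real.cos_zero, sub_zero, show 2 * π * w * y = 2 * π * y * w by ring, abs_mul,
    abs_of_nonneg (show 0 ≤ 2 * π * y by positivity)] at hlip
  rw [show 2 * π * w * y = 2 * π * y * w by ring]
  exact hlip.trans (mul_le_of_le_one_right (by positivity) (abs_lt.mpr hw).le)

theorem exists_sq_mul_abs_cosineTransform_le (g : 𝓢(ℝ, ℝ)) :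
    ∃ C, 0 < C ∧ ∀ y, y ^ 2 * |cosineTransform g y| ≤ C := by
  obtain ⟨C, hC, hdecay⟩ := (cosineTransform g).decay 2 0
  exact ⟨C, hC, fun y ↦ by simpa using hdecay y⟩

theorem sineTransform_mollifier (y : ℝ) : sineTransform mollifier y = 0 := by
  have hneg := integral_neg_eq_self (fun w ↦ mollifier w * Real.sin (2 * π * w * y)) volume
  simp only [mollifier_neg, mul_neg, neg_mul, Real.sin_neg, integral_neg] at hneg
  rw [sineTransform_apply]
  linarith

end Mollifier

section SqrtMollifier

open Set Filter Topology
open scoped ContDiff Real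

variable {u δ : ℝ}

/-- The weight `g` with `∫ g f = ∫ ρ(w) √(u/v) f(v²) dw`, where `ρ = mollifier` and `v = u + δw`:
it averages over `√x` near `u`, and the factor `√(u/v)` turns the amplitude `x^{1/4}` of the
Voronoï terms into the constant `√u`. -/
noncomputable def sqrtMollifier (u δ x : ℝ) : ℝ :=
  √u * mollifier ((√x - u) / δ) / (2 * δ * (√x * √√x))

theorem sqrtMollifier_eq_zero (hδ : 0 < δ) (hδu : δ ≤ u) {x : ℝ}
    (hx : x ∉ Ioo ((u - δ) ^ 2) ((u + δ) ^ 2)) : sqrtMollifier u δ x = 0 := by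
  rw [sqrtMollifier, mollifier_eq_zero, mul_zero, zero_div]
  rintro ⟨hlow, hhigh⟩
  rw [lt_div_iff₀ hδ] at hlow
  rw [div_lt_iff₀ hδ] at hhigh
  have hsqrt : 0 < √x := by linarith
  rw [← Real.sq_sqrt (Real.sqrt_pos.mp hsqrt).le] at hx
  exact hx ⟨pow_lt_pow_left₀ (by linarith) (by linarith) two_ne_zero,
    pow_lt_pow_left₀ (by linarith) hsqrt.le two_ne_zero⟩

theorem hasCompactSupport_sqrtMollifier (hδ : 0 < δ) (hδu : δ ≤ u) :
    HasCompactSupport (sqrtMollifier u δ) :=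
  HasCompactSupport.intro isCompact_Icc fun _ hx ↦
    sqrtMollifier_eq_zero hδ hδu fun h ↦ hx (Ioo_subset_Icc_self h)

theorem contDiff_sqrtMollifier (hδ : 0 < δ) (hδu : δ < u) : ContDiff ℝ ∞ (sqrtMollifier u δ) := by
  refine contDiff_iff_contDiffAt.mpr fun x ↦ ?_
  rcases lt_or_ge x ((u - δ) ^ 2) with hx | hx
  · have hzero : sqrtMollifier u δ =ᶠ[𝓝 x] fun _ ↦ 0 := by
      filter_upwards [Iio_mem_nhds hx] with z hz
      exact sqrtMollifier_eq_zero hδ hδu.le fun h ↦ h.1.not_gt hz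
    exact contDiffAt_const.congr_of_eventuallyEq hzero
  · have hx₀ : 0 < x := lt_of_lt_of_le (pow_pos (sub_pos.mpr hδu) 2) hx
    have hsqrt : ContDiffAt ℝ ∞ (fun x ↦ √x) x := contDiffAt_id.sqrt hx₀.ne'
    have hsqrt_sqrt := hsqrt.sqrt (Real.sqrt_pos.mpr hx₀).ne'
    have hmollifier : ContDiffAt ℝ ∞ (fun x ↦ mollifier ((√x - u) / δ)) x :=
      (mollifier.smooth ⊤).contDiffAt.comp x ((hsqrt.sub contDiffAt_const).div_const δ)
    exact (contDiffAt_const.mul hmollifier).div (contDiffAt_const.mul (hsqrt.mul hsqrt_sqrt))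
      (by positivity)

theorem image_sq_add_mul_Ioo (hδ : 0 < δ) (hδu : δ ≤ u) :
    (fun w : ℝ ↦ (u + δ * w) ^ 2) '' Ioo (-1) 1 = Ioo ((u - δ) ^ 2) ((u + δ) ^ 2) := by
  ext x
  constructor
  · rintro ⟨w, ⟨hlow, hhigh⟩, rfl⟩
    have hlow' : -δ < δ * w := by nlinarith
    have hhigh' : δ * w < δ := by nlinarith
    exact ⟨pow_lt_pow_left₀ (by linarith) (by linarith) two_ne_zero,
      pow_lt_pow_left₀ (by linarith) (by linarith) two_ne_zero⟩
  · rintro ⟨hlow, hhigh⟩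
    have hx₀ : 0 ≤ x := (sq_nonneg _).trans hlow.le
    have hsqrt_low : u - δ < √x := Real.lt_sqrt_of_sq_lt hlow
    have hsqrt_high : √x < u + δ := (Real.sqrt_lt' (by linarith)).mpr hhigh
    refine ⟨(√x - u) / δ, ⟨?_, ?_⟩, ?_⟩
    · rw [lt_div_iff₀ hδ]
      linarith
    · rw [div_lt_iff₀ hδ]
      linarith
    · simp only
      rw [mul_div_cancel₀ _ hδ.ne', add_sub_cancel, Real.sq_sqrt hx₀]

theorem add_mul_pos_of_mem_Ioo (hδ : 0 < δ) (hδu : δ ≤ u) {w : ℝ} (hw : w ∈ Ioo (-1) 1) :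
    0 < u + δ * w := by
  nlinarith [hw.1]

theorem integral_sqrtMollifier_mul (hδ : 0 < δ) (hδu : δ ≤ u) (f : ℝ → ℝ) :
    ∫ x, sqrtMollifier u δ x * f x =
      ∫ w, mollifier w * (√(u / (u + δ * w)) * f ((u + δ * w) ^ 2)) := by
  have hinj : InjOn (fun w : ℝ ↦ (u + δ * w) ^ 2) (Ioo (-1) 1) := fun a ha b hb hab ↦
    mul_left_cancel₀ hδ.ne' (add_left_cancel ((sq_eq_sq₀ (add_mul_pos_of_mem_Ioo hδ hδu ha).le
      (add_mul_pos_of_mem_Ioo hδ hδu hb).le).mp hab))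
  have hderiv (w : ℝ) : HasDerivAt (fun w : ℝ ↦ (u + δ * w) ^ 2) (2 * (u + δ * w) * δ) w := by
    convert! (((hasDerivAt_id w).const_mul δ).const_add u).pow 2 using 1
    simp
  have hrestrict : ∫ w in Ioo (-1) 1, mollifier w * (√(u / (u + δ * w)) * f ((u + δ * w) ^ 2)) =
      ∫ w, mollifier w * (√(u / (u + δ * w)) * f ((u + δ * w) ^ 2)) :=
    setIntegral_eq_integral_of_forall_compl_eq_zero fun w hw ↦ by
      rw [mollifier_eq_zero hw, zero_mul]
  rw [← hrestrict, ← setIntegral_eq_integral_of_forall_compl_eq_zero fun x hx ↦ by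
      rw [sqrtMollifier_eq_zero hδ hδu hx, zero_mul],
    ← image_sq_add_mul_Ioo hδ hδu, integral_image_eq_integral_abs_deriv_smul measurableSet_Ioo
      (fun w _ ↦ (hderiv w).hasDerivWithinAt) hinj]
  refine setIntegral_congr_fun measurableSet_Ioo fun w hw ↦ ?_
  have hv := add_mul_pos_of_mem_Ioo hδ hδu hw
  simp only [smul_eq_mul, sqrtMollifier]
  rw [abs_of_pos (by positivity), Real.sqrt_sq hv.le, add_sub_cancel_left,
    mul_div_cancel_left₀ _ hδ.ne', Real.sqrt_div' _ hv.le]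
  have := Real.sqrt_pos.mpr hv
  field_simp

theorem integral_sqrtMollifier_mul_rpow_mul_cos (hδ : 0 < δ) (hδu : δ ≤ u) (m : ℕ) :
    ∫ x, sqrtMollifier u δ x *
        (x ^ (1 / 4 : ℝ) * Real.cos (4 * π * √(m * x) - π / 4)) =
      √u * (cosineTransform mollifier (2 * δ * √m) * Real.cos (4 * π * √m * u - π / 4)) := by
  have hterm (w : ℝ) : mollifier w * (√(u / (u + δ * w)) * (((u + δ * w) ^ 2) ^ (1 / 4 : ℝ) *
      Real.cos (4 * π * √(m * (u + δ * w) ^ 2) - π / 4))) =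
      √u * Real.cos (4 * π * √m * u - π / 4) *
          (mollifier w * Real.cos (2 * π * w * (2 * δ * √m))) -
        √u * Real.sin (4 * π * √m * u - π / 4) *
          (mollifier w * Real.sin (2 * π * w * (2 * δ * √m))) := by
    by_cases hw : w ∈ Ioo (-1) 1
    swap
    · simp [mollifier_eq_zero hw]
    have hv := add_mul_pos_of_mem_Ioo hδ hδu hw
    have hquarter : ((u + δ * w) ^ 2) ^ (1 / 4 : ℝ) = √(u + δ * w) := by
      rw [Real.sqrt_eq_rpow, ← Real.rpow_natCast_mul hv.le]
      norm_num
    have hamplitude : √(u / (u + δ * w)) * √(u + δ * w) = √u := by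
      rw [← Real.sqrt_mul' _ hv.le, div_mul_cancel₀ _ hv.ne']
    have hphase : 4 * π * √(m * (u + δ * w) ^ 2) - π / 4 =
        (4 * π * √m * u - π / 4) + 2 * π * w * (2 * δ * √m) := by
      rw [Real.sqrt_mul (Nat.cast_nonneg m), Real.sqrt_sq hv.le]
      ring
    rw [hquarter, hphase, Real.cos_add, ← mul_assoc √(u / (u + δ * w)), hamplitude]
    ring
  have hcos : Integrable fun w ↦ mollifier w * Real.cos (2 * π * w * (2 * δ * √m)) :=
    integrable_mul_of_abs_le mollifier.integrable (by fun_prop) fun w ↦ Real.abs_cos_le_one _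
  have hsin : Integrable fun w ↦ mollifier w * Real.sin (2 * π * w * (2 * δ * √m)) :=
    integrable_mul_of_abs_le mollifier.integrable (by fun_prop) fun w ↦ Real.abs_sin_le_one _
  simp only [integral_sqrtMollifier_mul hδ hδu, hterm]
  rw [integral_sub (hcos.const_mul _) (hsin.const_mul _), integral_const_mul, integral_const_mul,
    ← cosineTransform_apply, ← sineTransform_apply, sineTransform_mollifier]
  ring

theorem sqrtMollifier_nonneg (hδ : 0 < δ) (x : ℝ) : 0 ≤ sqrtMollifier u δ x := by
  have := mollifier_nonneg ((√x - u) / δ)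
  unfold sqrtMollifier
  positivity

theorem integral_sqrtMollifier_le_two (hδ : 0 < δ) (hδu : 2 * δ ≤ u) :
    ∫ x, sqrtMollifier u δ x ≤ 2 := by
  have hchange := integral_sqrtMollifier_mul hδ (by linarith : δ ≤ u) fun _ ↦ 1
  simp only [mul_one] at hchange
  rw [hchange]
  refine (le_abs_self _).trans (abs_integral_mollifier_mul_le fun w hw ↦ ?_)
  have hv : u ≤ 2 * (u + δ * w) := by nlinarith [hw.1]
  have hv₀ : 0 < u + δ * w := by linarith
  rw [abs_of_nonneg (Real.sqrt_nonneg _), Real.sqrt_le_left zero_le_two, div_le_iff₀ hv₀]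
  linarith

end SqrtMollifier

section SmoothedVoronoi

open Set
open scoped SchwartzMap ContDiff Real

theorem summable_divfun_div_rpow {s : ℝ} (hs : 1 < s) :
    Summable fun m : ℕ ↦ divfun m / (m : ℝ) ^ s := by
  have hbase : Summable fun n : ℕ ↦ 1 / (n : ℝ) ^ s := Real.summable_one_div_nat_rpow.mpr hs
  have hpair : Summable fun p : ℕ × ℕ ↦ 1 / ((p.1 * p.2 : ℕ) : ℝ) ^ s := by
    refine (hbase.mul_of_nonneg hbase (fun n ↦ by positivity) fun n ↦ by positivity).congr
      fun p ↦ ?_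
    rw [Nat.cast_mul, Real.mul_rpow (Nat.cast_nonneg _) (Nat.cast_nonneg _), one_div_mul_one_div]
  refine (hasSum_divfun_mul (h := fun m ↦ 1 / (m : ℝ) ^ s) hpair).summable.congr fun m ↦ ?_
  rw [mul_one_div]

/-- The amplitude `d(m) / (√2 π m^(3/4))` of the `m`-th term of the Voronoï series of `Δ`. -/
noncomputable def voronoiAmplitude (m : ℕ) : ℝ :=
  1 / (√2 * π) * (divfun m / (m : ℝ) ^ (3 / 4 : ℝ))

theorem voronoiAmplitude_zero : voronoiAmplitude 0 = 0 := by
  simp [voronoiAmplitude, divfun]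

theorem voronoiAmplitude_nonneg (m : ℕ) : 0 ≤ voronoiAmplitude m := by
  unfold voronoiAmplitude
  positivity

theorem voronoiAmplitude_le (m : ℕ) : voronoiAmplitude m ≤ divfun m / (m : ℝ) ^ (3 / 4 : ℝ) := by
  refine mul_le_of_le_one_left (by positivity) ((div_le_one (by positivity)).mpr ?_)
  nlinarith [Real.pi_gt_three, Real.one_le_sqrt.mpr one_le_two]

theorem summable_voronoiAmplitude_mul {c : ℕ → ℝ} {C : ℝ} (hc : ∀ m, m * |c m| ≤ C) :
    Summable fun m ↦ voronoiAmplitude m * c m := by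
  refine ((summable_divfun_div_rpow (s := 7 / 4) (by norm_num)).mul_left C).of_norm_bounded
    fun m ↦ ?_
  rcases Nat.eq_zero_or_pos m with rfl | hm
  · simp [voronoiAmplitude_zero, divfun]
  have hm₀ : (0 : ℝ) < m := Nat.cast_pos.mpr hm
  have hpow : (m : ℝ) ^ (7 / 4 : ℝ) = (m : ℝ) ^ (3 / 4 : ℝ) * m := by
    rw [← Real.rpow_add_one hm₀.ne']
    norm_num
  rw [norm_mul, Real.norm_of_nonneg (voronoiAmplitude_nonneg m), Real.norm_eq_abs]
  calc voronoiAmplitude m * |c m|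
      ≤ divfun m / (m : ℝ) ^ (3 / 4 : ℝ) * (C / m) :=
        mul_le_mul (voronoiAmplitude_le m) ((le_div_iff₀' hm₀).mpr (hc m)) (abs_nonneg _)
          (by positivity)
    _ = C * (divfun m / (m : ℝ) ^ (7 / 4 : ℝ)) := by
        rw [hpow]
        field_simp

/-- The amplitudes of the Voronoï series of `Δ` after averaging `√x` over a window of radius `δ`
with the weight `mollifier`. -/
noncomputable def smoothedAmplitude (δ : ℝ) (m : ℕ) : ℝ :=
  voronoiAmplitude m * cosineTransform mollifier (2 * δ * √m)

theorem summable_smoothedAmplitude {δ : ℝ} (hδ : 0 < δ) : Summable (smoothedAmplitude δ) := by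
  obtain ⟨C, -, hC⟩ := exists_sq_mul_abs_cosineTransform_le mollifier
  refine summable_voronoiAmplitude_mul (C := C / (4 * δ ^ 2)) fun m ↦ ?_
  have hdecay := hC (2 * δ * √m)
  rw [mul_pow, Real.sq_sqrt (Nat.cast_nonneg m)] at hdecay
  rw [le_div_iff₀ (by positivity)]
  linarith

theorem norm_mul_cos_le (a x : ℝ) : ‖a * Real.cos x‖ ≤ |a| := by
  rw [Real.norm_eq_abs, abs_mul]
  exact mul_le_of_le_one_right (abs_nonneg a) (Real.abs_cos_le_one x)

theorem summable_mul_cos {c : ℕ → ℝ} (hc : Summable c) (θ : ℕ → ℝ) :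
    Summable fun m ↦ c m * Real.cos (θ m) :=
  hc.abs.of_norm_bounded fun _ ↦ norm_mul_cos_le _ _

theorem abs_voronoiCoeff_sub_smoothedAmplitude_le {g : 𝓢(ℝ, ℝ)} {u δ : ℝ} (hδ : 0 < δ)
    (hδ₁ : δ ≤ 1) (hu : 3 ≤ u) (hg : ∀ x, g x = sqrtMollifier u δ x) (m : ℕ) :
    |divfun m * voronoiCoeff (sineTransform g) m -
        √u * (smoothedAmplitude δ m * Real.cos (4 * π * √m * u - π / 4))| ≤
      62 * (divfun m / (m : ℝ) ^ (5 / 4 : ℝ)) := by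
  rcases eq_or_ne m 0 with rfl | hm
  · simp [smoothedAmplitude, voronoiAmplitude_zero, divfun]
  have hδu : δ ≤ u := by linarith
  have hzero (x : ℝ) (hx : x ∉ Ioo ((u - δ) ^ 2) ((u + δ) ^ 2)) : g x = 0 :=
    (hg x).trans (sqrtMollifier_eq_zero hδ hδu hx)
  have hcompact : HasCompactSupport g :=
    HasCompactSupport.intro isCompact_Icc fun x hx ↦ hzero x fun h ↦ hx (Ioo_subset_Icc_self h)
  have hmass : ∫ x, |g x| ≤ 2 := by
    simp only [hg, abs_of_nonneg (sqrtMollifier_nonneg hδ _)]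
    exact integral_sqrtMollifier_le_two hδ (by linarith)
  have hcoeff := abs_voronoiCoeff_sineTransform_sub_le hcompact
    (fun x hx ↦ hzero x fun h ↦ by nlinarith [h.1]) hm
  simp only [hg, integral_sqrtMollifier_mul_rpow_mul_cos hδ hδu] at hcoeff
  simp only [← hg] at hcoeff
  calc _ = |divfun m * (voronoiCoeff (sineTransform g) m - 1 / (√2 * π) / (m : ℝ) ^ (3 / 4 : ℝ) *
          (√u * (cosineTransform mollifier (2 * δ * √m) *
            Real.cos (4 * π * √m * u - π / 4))))| := by
        rw [smoothedAmplitude, voronoiAmplitude]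
        congr 1
        ring
    _ ≤ divfun m * (31 / (m : ℝ) ^ (5 / 4 : ℝ) * 2) := by
        rw [abs_mul, Nat.abs_cast]
        gcongr
        exact hcoeff.trans (by gcongr)
    _ = _ := by ring

theorem exists_abs_integral_mollifier_mul_dirichletDelta_sub_le :
    ∃ C : ℝ, 0 < C ∧ ∀ u δ : ℝ, 3 ≤ u → 0 < δ → δ ≤ 1 →
      |(∫ w, mollifier w * (√(u / (u + δ * w)) * DirichletDelta ((u + δ * w) ^ 2))) -
          √u * ∑' m : ℕ, smoothedAmplitude δ m * Real.cos (4 * π * √m * u - π / 4)| ≤ C := by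
  have hsummable := summable_divfun_div_rpow (s := 5 / 4) (by norm_num)
  refine ⟨1 / 2 + 62 * ∑' m : ℕ, divfun m / (m : ℝ) ^ (5 / 4 : ℝ), by positivity,
    fun u δ hu hδ hδ₁ ↦ ?_⟩
  have hδu : δ < u := by linarith
  let g : 𝓢(ℝ, ℝ) := (hasCompactSupport_sqrtMollifier hδ hδu.le).toSchwartzMap
    (contDiff_sqrtMollifier hδ hδu)
  have hmass₀ : 0 ≤ ∫ x, g x := integral_nonneg fun x ↦ sqrtMollifier_nonneg hδ x
  have hmass₂ : ∫ x, g x ≤ 2 := integral_sqrtMollifier_le_two hδ (by linarith)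
  have hmean : ∫ x, g x * DirichletDelta x =
      ∫ w, mollifier w * (√(u / (u + δ * w)) * DirichletDelta ((u + δ * w) ^ 2)) :=
    integral_sqrtMollifier_mul hδ hδu.le DirichletDelta
  have hvoronoi := hasSum_divfun_mul_voronoiCoeff (g := g)
    (hasCompactSupport_sqrtMollifier hδ hδu.le)
    fun x hx ↦ sqrtMollifier_eq_zero hδ hδu.le fun h ↦ by nlinarith [h.1]
  have hmain := (summable_mul_cos (summable_smoothedAmplitude hδ)
    fun m ↦ 4 * π * √m * u - π / 4).hasSum.mul_left √u
  have hterms := abs_voronoiCoeff_sub_smoothedAmplitude_le (g := g) hδ hδ₁ hu fun x ↦ rfl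
  simp only [← Real.norm_eq_abs] at hterms
  have herror := tsum_of_norm_bounded (hsummable.mul_left 62).hasSum hterms
  rw [(hvoronoi.sub hmain).tsum_eq, tsum_mul_left, Real.norm_eq_abs, hmean] at herror
  rw [abs_le] at herror ⊢
  constructor <;> linarith

end SmoothedVoronoi

section Desmoothing

open Set
open scoped Real

theorem measurable_dirichletDelta : Measurable DirichletDelta := by
  have hsum : Measurable fun x : ℝ ↦ ∑ n ∈ Finset.Icc 1 ⌊x⌋₊, (divfun n : ℝ) :=
    (measurable_from_nat (f := fun k ↦ ∑ n ∈ Finset.Icc 1 k, (divfun n : ℝ))).comp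
      Nat.measurable_floor
  unfold DirichletDelta
  fun_prop

theorem sum_divfun_le {z : ℝ} (hz : 1 ≤ z) :
    ∑ n ∈ Finset.Icc 1 ⌊z⌋₊, (divfun n : ℝ) ≤ z * (1 + Real.log z) := by
  have hterm (a : ℕ) : ((⌊z⌋₊ / a : ℕ) : ℝ) ≤ z * (a : ℝ)⁻¹ :=
    Nat.cast_div_le.trans (by
      rw [div_eq_mul_inv]
      gcongr
      exact Nat.floor_le (by linarith))
  calc ∑ n ∈ Finset.Icc 1 ⌊z⌋₊, (divfun n : ℝ)
      = ∑ a ∈ Finset.Icc 1 ⌊z⌋₊, ((⌊z⌋₊ / a : ℕ) : ℝ) := mod_cast sum_divfun_eq_sum_div le_rfl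
    _ ≤ ∑ a ∈ Finset.Icc 1 ⌊z⌋₊, z * (a : ℝ)⁻¹ := Finset.sum_le_sum fun a _ ↦ hterm a
    _ = z * harmonic ⌊z⌋₊ := by
        rw [← Finset.mul_sum, harmonic_eq_sum_Icc]
        push_cast
        rfl
    _ ≤ z * (1 + Real.log z) := by
        gcongr
        exact harmonic_floor_le_one_add_log z hz

theorem abs_dirichletDelta_le {z : ℝ} (hz : 1 ≤ z) :
    |DirichletDelta z| ≤ z * (1 + Real.log z) := by
  have hsum := sum_divfun_le hz
  have hsum₀ : 0 ≤ ∑ n ∈ Finset.Icc 1 ⌊z⌋₊, (divfun n : ℝ) := by positivity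
  have hγ := Real.one_half_lt_eulerMascheroniConstant
  have hγ' := Real.eulerMascheroniConstant_lt_two_thirds
  have hlog := mul_nonneg (zero_le_one.trans hz) (Real.log_nonneg hz)
  rw [DirichletDelta, abs_le]
  constructor <;> nlinarith

theorem abs_sum_divfun_sub_le {x z : ℝ} (hx : 0 ≤ x) (hz : 0 ≤ z) (hxz : |x - z| ≤ 1) :
    |∑ n ∈ Finset.Icc 1 ⌊x⌋₊, (divfun n : ℝ) - ∑ n ∈ Finset.Icc 1 ⌊z⌋₊, (divfun n : ℝ)| ≤
      divfun ⌊x⌋₊ + divfun (⌊x⌋₊ + 1) := by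
  rw [abs_le] at hxz
  have hzx : ⌊z⌋₊ ≤ ⌊x⌋₊ + 1 := by
    rw [← Nat.floor_add_one hx]
    exact Nat.floor_le_floor (by linarith)
  have hxz' : ⌊x⌋₊ ≤ ⌊z⌋₊ + 1 := by
    rw [← Nat.floor_add_one hz]
    exact Nat.floor_le_floor (by linarith)
  rcases (by omega : ⌊z⌋₊ = ⌊x⌋₊ + 1 ∨ ⌊z⌋₊ = ⌊x⌋₊ ∨ ⌊x⌋₊ = ⌊z⌋₊ + 1) with h | h | h
  · rw [h, Finset.sum_Icc_succ_top (by omega), sub_add_cancel_left, abs_neg, Nat.abs_cast]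
    exact le_add_of_nonneg_left (Nat.cast_nonneg _)
  · rw [h, sub_self, abs_zero]
    positivity
  · rw [h, Finset.sum_Icc_succ_top (by omega), add_sub_cancel_left, Nat.abs_cast]
    exact le_add_of_nonneg_right (Nat.cast_nonneg _)

theorem abs_mul_log_add_mul_sub_le {c X x z : ℝ} (hc : |c| ≤ 1) (hx : x ∈ Icc 1 X)
    (hz : z ∈ Icc 1 X) :
    |(x * Real.log x + c * x) - (z * Real.log z + c * z)| ≤ (Real.log X + 2) * |x - z| := by
  refine Convex.norm_image_sub_le_of_norm_hasDerivWithin_le (f := fun t ↦ t * Real.log t + c * t)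
    (f' := fun t ↦ Real.log t + 1 + c) (fun t ht ↦ ?_) (fun t ht ↦ ?_) (convex_Icc 1 X) hz hx
  · have ht₀ : t ≠ 0 := by linarith [ht.1]
    convert! ((Real.hasDerivAt_mul_log ht₀).add
      ((hasDerivAt_id t).const_mul c)).hasDerivWithinAt using 1
    rw [mul_one]
  · have hlog := Real.log_le_log (by linarith [ht.1]) ht.2
    have hlog₀ := Real.log_nonneg ht.1
    rw [abs_le] at hc
    rw [Real.norm_eq_abs, abs_le]
    constructor <;> linarith

theorem abs_dirichletDelta_sub_le {x z : ℝ} (hx : 1 ≤ x) (hz : 1 ≤ z) (hxz : |x - z| ≤ 1) :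
    |DirichletDelta x - DirichletDelta z| ≤
      divfun ⌊x⌋₊ + divfun (⌊x⌋₊ + 1) + (Real.log (x + 1) + 2) := by
  have hγ : |2 * Real.eulerMascheroniConstant - 1| ≤ 1 := by
    rw [abs_le]
    constructor <;> linarith [Real.one_half_lt_eulerMascheroniConstant,
      Real.eulerMascheroniConstant_lt_two_thirds]
  have hsum := abs_sum_divfun_sub_le (by linarith) (by linarith) hxz
  have hsmooth := abs_mul_log_add_mul_sub_le (X := x + 1) hγ ⟨hx, by linarith⟩
    ⟨hz, by linarith [(abs_le.mp hxz).1]⟩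
  have hlog := Real.log_nonneg (by linarith : 1 ≤ x + 1)
  have hsmooth' := hsmooth.trans (mul_le_of_le_one_right (by linarith) hxz)
  unfold DirichletDelta
  rw [abs_le] at hsum hsmooth' ⊢
  constructor <;> linarith

theorem abs_one_sub_sqrt_div_le {u v : ℝ} (hu : 0 ≤ u) (hv : 0 < v) :
    |1 - √(u / v)| ≤ |u - v| / v := by
  have hq : 0 ≤ u / v := by positivity
  have hfactor : |u - v| / v = |1 - √(u / v)| * (1 + √(u / v)) := by
    have hsub : (u - v) / v = -((1 - √(u / v)) * (1 + √(u / v))) := by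
      rw [sub_div, div_self hv.ne']
      linear_combination -Real.sq_sqrt hq
    calc |u - v| / v = |(u - v) / v| := by rw [abs_div, abs_of_pos hv]
      _ = |1 - √(u / v)| * (1 + √(u / v)) := by
        rw [hsub, abs_neg, abs_mul, abs_of_nonneg (a := 1 + √(u / v)) (by positivity)]
  rw [hfactor]
  exact le_mul_of_one_le_right (abs_nonneg _) (by linarith [Real.sqrt_nonneg (u / v)])

theorem one_le_log {x : ℝ} (hx : 3 ≤ x) : 1 ≤ Real.log x := by
  rw [Real.le_log_iff_exp_le (by linarith)]
  linarith [Real.exp_one_lt_three]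

theorem abs_dirichletDelta_sub_sqrt_div_mul_le {u v δ : ℝ} (hu : 3 ≤ u) (hδu : 8 * (δ * u) ≤ 3)
    (huv : |u - v| ≤ δ) :
    |DirichletDelta (u ^ 2) - √(u / v) * DirichletDelta (v ^ 2)| ≤
      divfun ⌊u ^ 2⌋₊ + divfun (⌊u ^ 2⌋₊ + 1) + 6 * Real.log (u ^ 2) := by
  have hδ₀ : 0 ≤ δ := (abs_nonneg _).trans huv
  have hδ : δ ≤ 1 / 8 := by nlinarith
  obtain ⟨hlow, hhigh⟩ := abs_le.mp huv
  have hv : 2 ≤ v := by linarith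
  have hsq : |u ^ 2 - v ^ 2| ≤ 1 := by
    rw [sq_sub_sq, abs_mul, abs_of_pos (by linarith)]
    nlinarith [abs_nonneg (u - v)]
  have hδv : δ * v ≤ 1 / 2 := by nlinarith
  have hlog_u : 1 ≤ Real.log (u ^ 2) := one_le_log (by nlinarith)
  have hlog_succ : Real.log (u ^ 2 + 1) ≤ Real.log (u ^ 2) + 1 := by
    have hsucc := Real.log_le_log (by positivity : 0 < u ^ 2 + 1)
      (by nlinarith [Real.exp_one_gt_two] : u ^ 2 + 1 ≤ u ^ 2 * Real.exp 1)
    rwa [Real.log_mul (by positivity) (by positivity), Real.log_exp] at hsucc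
  have hlog_v : Real.log (v ^ 2) ≤ Real.log (u ^ 2 + 1) :=
    Real.log_le_log (by positivity) (by linarith [(abs_le.mp hsq).1])
  have hlog_v₀ : 0 ≤ Real.log (v ^ 2) := Real.log_nonneg (by nlinarith)
  have hstep := abs_dirichletDelta_sub_le (by nlinarith) (by nlinarith) hsq
  have hratio : |1 - √(u / v)| * |DirichletDelta (v ^ 2)| ≤ 1 / 2 * (1 + Real.log (v ^ 2)) := by
    calc |1 - √(u / v)| * |DirichletDelta (v ^ 2)|
        ≤ δ / v * (v ^ 2 * (1 + Real.log (v ^ 2))) := by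
          gcongr
          · exact (abs_one_sub_sqrt_div_le (by linarith) (by linarith)).trans (by gcongr)
          · exact abs_dirichletDelta_le (by nlinarith)
      _ = δ * v * (1 + Real.log (v ^ 2)) := by field_simp
      _ ≤ 1 / 2 * (1 + Real.log (v ^ 2)) := by gcongr
  calc _ = |(DirichletDelta (u ^ 2) - DirichletDelta (v ^ 2)) +
          (1 - √(u / v)) * DirichletDelta (v ^ 2)| := by
        congr 1
        ring
    _ ≤ _ := (abs_add_le _ _).trans (by
        rw [abs_mul]
        linarith)

theorem abs_sub_integral_mollifier_mul_le {f : ℝ → ℝ} {c B : ℝ} (hf : Measurable f)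
    (hB : ∀ w ∈ Ioo (-1) 1, |c - f w| ≤ B) : |c - ∫ w, mollifier w * f w| ≤ B := by
  have hrestrict (w : ℝ) :
      mollifier w * f w = mollifier w * c - mollifier w * (Ioo (-1) 1).indicator (c - f ·) w := by
    by_cases hw : w ∈ Ioo (-1) 1
    · simp [hw, mul_sub]
    · simp [mollifier_eq_zero hw]
  have hB₀ : 0 ≤ B := (abs_nonneg _).trans (hB 0 (by simp))
  have hint : Integrable fun w ↦ mollifier w * (Ioo (-1) 1).indicator (c - f ·) w :=
    integrable_mul_of_abs_le mollifier.integrable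
      ((measurable_const.sub hf).indicator measurableSet_Ioo) fun w ↦ by
        by_cases hw : w ∈ Ioo (-1) 1
        · simpa [hw] using hB w hw
        · simpa [hw] using hB₀
  simp only [hrestrict]
  rw [integral_sub (mollifier.integrable.mul_const c) hint, integral_mul_const, integral_mollifier,
    one_mul, sub_sub_cancel]
  exact abs_integral_mollifier_mul_le fun w hw ↦ by simpa [hw] using hB w hw

theorem abs_dirichletDelta_sub_integral_mollifier_mul_le {u δ : ℝ} (hu : 3 ≤ u) (hδ : 0 < δ)
    (hδu : 8 * (δ * u) ≤ 3) :
    |DirichletDelta (u ^ 2) -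
        ∫ w, mollifier w * (√(u / (u + δ * w)) * DirichletDelta ((u + δ * w) ^ 2))| ≤
      divfun ⌊u ^ 2⌋₊ + divfun (⌊u ^ 2⌋₊ + 1) + 6 * Real.log (u ^ 2) := by
  have hmeas : Measurable fun w ↦ DirichletDelta ((u + δ * w) ^ 2) :=
    measurable_dirichletDelta.comp (by fun_prop)
  refine abs_sub_integral_mollifier_mul_le (by fun_prop) fun w hw ↦
    abs_dirichletDelta_sub_sqrt_div_mul_le hu hδu ?_
  rw [sub_add_cancel_left, abs_neg, abs_mul, abs_of_pos hδ]
  exact mul_le_of_le_one_right hδ.le (abs_le.mpr ⟨hw.1.le, hw.2.le⟩)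

/-- The amplitudes of what is left of the smoothed Voronoï series of `Δ` after removing its
unsmoothed terms with `m ≤ y`. -/
noncomputable def residualAmplitude (δ y : ℝ) (m : ℕ) : ℝ :=
  voronoiAmplitude m *
    (cosineTransform mollifier (2 * δ * √m) - if m ≤ ⌊y⌋₊ then 1 else 0)

/-- The residual Voronoï series at `u = √x`, without the factor `x^(1/4)`. -/
noncomputable def residualSeries (δ y u : ℝ) : ℝ :=
  ∑' m : ℕ, residualAmplitude δ y m * Real.cos (4 * π * √m * u - π / 4)

theorem residualAmplitude_eq_sub_indicator (δ y : ℝ) (m : ℕ) :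
    residualAmplitude δ y m =
      smoothedAmplitude δ m - if m ∈ Finset.Icc 1 ⌊y⌋₊ then voronoiAmplitude m else 0 := by
  rcases Nat.eq_zero_or_pos m with rfl | hm
  · simp [residualAmplitude, smoothedAmplitude, voronoiAmplitude_zero]
  · simp only [residualAmplitude, smoothedAmplitude, Finset.mem_Icc,
      Nat.succ_le_of_lt hm, true_and]
    split_ifs <;> ring

theorem summable_residualAmplitude {δ : ℝ} (hδ : 0 < δ) (y : ℝ) :
    Summable (residualAmplitude δ y) := by
  rw [funext (residualAmplitude_eq_sub_indicator δ y)]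
  exact (summable_smoothedAmplitude hδ).sub (summable_of_ne_finset_zero fun m hm ↦ if_neg hm)

theorem sqrt_mul_residualSeries {δ : ℝ} (hδ : 0 < δ) (y : ℝ) {u : ℝ} (hu : 0 ≤ u) :
    √u * residualSeries δ y u =
      √u * ∑' m : ℕ, smoothedAmplitude δ m * Real.cos (4 * π * √m * u - π / 4) -
        R1 y (u ^ 2) := by
  have hterm (m : ℕ) : residualAmplitude δ y m * Real.cos (4 * π * √m * u - π / 4) =
      smoothedAmplitude δ m * Real.cos (4 * π * √m * u - π / 4) -
        if m ∈ Finset.Icc 1 ⌊y⌋₊ then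
          voronoiAmplitude m * Real.cos (4 * π * √m * u - π / 4) else 0 := by
    rw [residualAmplitude_eq_sub_indicator]
    split_ifs <;> ring
  have hquarter : (u ^ 2) ^ ((1 : ℝ) / 4) = √u := by
    rw [Real.sqrt_eq_rpow, ← Real.rpow_natCast_mul hu]
    norm_num
  simp only [residualSeries, hterm]
  rw [(summable_mul_cos (summable_smoothedAmplitude hδ) _).tsum_sub
      (summable_of_ne_finset_zero fun m hm ↦ if_neg hm),
    tsum_eq_sum (s := Finset.Icc 1 ⌊y⌋₊) fun m hm ↦ if_neg hm, mul_sub, R1, hquarter]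
  congr 1
  simp only [Finset.mul_sum]
  refine Finset.sum_congr rfl fun m hm ↦ ?_
  rw [if_pos hm, voronoiAmplitude, Real.sqrt_mul (Nat.cast_nonneg m), Real.sqrt_sq hu]
  ring_nf

theorem exists_abs_r2_le :
    ∃ C : ℝ, 0 < C ∧ ∀ u δ y : ℝ, 3 ≤ u → 0 < δ → 8 * (δ * u) ≤ 3 →
      |R2 y (u ^ 2)| ≤ divfun ⌊u ^ 2⌋₊ + divfun (⌊u ^ 2⌋₊ + 1) + C * Real.log (u ^ 2) +
        √u * |residualSeries δ y u| := by
  obtain ⟨C, hC, hsmooth⟩ := exists_abs_integral_mollifier_mul_dirichletDelta_sub_le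
  refine ⟨6 + C, by positivity, fun u δ y hu hδ hδu ↦ ?_⟩
  have hlog : 1 ≤ Real.log (u ^ 2) := one_le_log (by nlinarith)
  have hdesmooth := abs_dirichletDelta_sub_integral_mollifier_mul_le hu hδ hδu
  have hvoronoi := (hsmooth u δ hu hδ (by nlinarith)).trans (le_mul_of_one_le_right hC.le hlog)
  have hresidual := abs_le.mp (abs_mul √u (residualSeries δ y u)).le
  rw [abs_of_nonneg (Real.sqrt_nonneg u), sqrt_mul_residualSeries hδ y (by linarith)] at hresidual
  rw [R2]
  rw [abs_le] at hdesmooth hvoronoi ⊢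
  constructor <;> linarith

end Desmoothing

section GaussianMeanSquare

open Set Filter Topology
open scoped Real

theorem sum_exp_neg_mul_le {a : ℝ} (ha : 0 < a) (s : Finset ℕ) :
    ∑ j ∈ s, Real.exp (-(a * j)) ≤ 1 + 1 / a := by
  have hr : Real.exp (-a) < 1 := by rwa [Real.exp_lt_one_iff, neg_lt_zero]
  have hpow (j : ℕ) : Real.exp (-(a * j)) = Real.exp (-a) ^ j := by
    rw [← Real.exp_nat_mul]
    congr 1
    ring
  simp only [hpow]
  refine (sum_le_hasSum s (fun j _ ↦ by positivity)
    (hasSum_geometric_of_lt_one (Real.exp_pos _).le hr)).trans ?_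
  rw [inv_le_iff_one_le_mul₀ (by linarith)]
  have hexp : (1 + a) * Real.exp (-a) ≤ 1 := by
    calc (1 + a) * Real.exp (-a) ≤ Real.exp a * Real.exp (-a) := by
          gcongr
          linarith [Real.add_one_le_exp a]
      _ = 1 := by rw [← Real.exp_add, add_neg_cancel, Real.exp_zero]
  have hsum : (1 + 1 / a) * (1 - Real.exp (-a)) = (1 + a - (1 + a) * Real.exp (-a)) / a := by
    field_simp
    ring
  rw [hsum, one_le_div ha]
  linarith

theorem sum_exp_neg_mul_comp_le {a : ℝ} (ha : 0 < a) {s : Finset ℕ} {φ : ℕ → ℕ}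
    (hφ : InjOn φ s) : ∑ j ∈ s, Real.exp (-(a * φ j)) ≤ 1 + 1 / a := by
  rw [← Finset.sum_image (f := fun j : ℕ ↦ Real.exp (-(a * j))) hφ]
  exact sum_exp_neg_mul_le ha _

theorem sum_exp_neg_mul_abs_sub_le {a : ℝ} (ha : 0 < a) (s : Finset ℕ) (m : ℕ) :
    ∑ n ∈ s, Real.exp (-(a * |(n : ℝ) - m|)) ≤ 2 * (1 + 1 / a) := by
  have hright : ∑ n ∈ s with m ≤ n, Real.exp (-(a * |(n : ℝ) - m|)) ≤ 1 + 1 / a := by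
    refine le_trans (Finset.sum_le_sum fun n hn ↦ ?_) (sum_exp_neg_mul_comp_le ha
      (s := s.filter (m ≤ ·)) (φ := fun n ↦ n - m) fun p hp q hq h ↦ ?_)
    · rw [Nat.cast_sub (Finset.mem_filter.mp hn).2, ← Nat.cast_sub (Finset.mem_filter.mp hn).2,
        Nat.abs_cast]
    · have := (Finset.mem_filter.mp hp).2
      have := (Finset.mem_filter.mp hq).2
      simp only at h
      omega
  have hleft : ∑ n ∈ s with ¬ m ≤ n, Real.exp (-(a * |(n : ℝ) - m|)) ≤ 1 + 1 / a := by
    refine le_trans (Finset.sum_le_sum fun n hn ↦ ?_) (sum_exp_neg_mul_comp_le ha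
      (s := s.filter (¬ m ≤ ·)) (φ := fun n ↦ m - n) fun p hp q hq h ↦ ?_)
    · have hnm := (not_le.mp (Finset.mem_filter.mp hn).2).le
      rw [abs_sub_comm, ← Nat.cast_sub hnm, Nat.abs_cast]
    · have := (Finset.mem_filter.mp hp).2
      have := (Finset.mem_filter.mp hq).2
      simp only at h
      omega
  rw [← Finset.sum_filter_add_sum_filter_not s (m ≤ ·)]
  linarith

theorem exp_neg_mul_sq_sqrt_sub_le {T : ℝ} (hT : 1 ≤ T) {m : ℕ} (hm : 0 < m) (n : ℕ) :
    Real.exp (-(4 * π ^ 2 * T * (√m - √n) ^ 2)) ≤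
      Real.exp (-(1 * (n : ℝ))) + 3 * Real.exp (-(√(T / m) * |(n : ℝ) - m|)) := by
  have hm₀ : (0 : ℝ) < m := Nat.cast_pos.mpr hm
  have hsq_m := Real.sq_sqrt hm₀.le
  have hsq_n := Real.sq_sqrt (Nat.cast_nonneg (α := ℝ) n)
  have hsqrt_m := Real.sqrt_nonneg (m : ℝ)
  have hsqrt_n := Real.sqrt_nonneg (n : ℝ)
  have hπ : 9 * T ≤ 4 * π ^ 2 * T := by
    gcongr
    nlinarith [Real.pi_gt_three]
  rcases le_or_gt (2 * √(m : ℝ)) √n with hfar | hnear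
  · have hgap : (n : ℝ) / 4 ≤ (√(m : ℝ) - √n) ^ 2 := by nlinarith
    refine le_add_of_le_of_nonneg (Real.exp_le_exp.mpr (neg_le_neg ?_)) (by positivity)
    calc 1 * (n : ℝ) ≤ 9 * (n / 4) := by linarith [Nat.cast_nonneg (α := ℝ) n]
      _ ≤ 4 * π ^ 2 * T * (√m - √n) ^ 2 := by
        gcongr
        linarith
  · have hexponent : (√(T / m) * |(n : ℝ) - m|) ^ 2 ≤ 4 * π ^ 2 * T * (√m - √n) ^ 2 := by
      calc (√(T / m) * |(n : ℝ) - m|) ^ 2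
          = T / m * ((√m - √n) ^ 2 * (√m + √n) ^ 2) := by
            rw [mul_pow, sq_abs, Real.sq_sqrt (by positivity), ← mul_pow, mul_comm (√m - √n),
              ← sq_sub_sq, hsq_m, hsq_n, ← neg_sub, neg_sq]
        _ ≤ T / m * ((√m - √n) ^ 2 * (9 * m)) := by
            gcongr
            nlinarith
        _ = 9 * T * (√m - √n) ^ 2 := by field_simp
        _ ≤ 4 * π ^ 2 * T * (√m - √n) ^ 2 := by gcongr
    refine le_add_of_nonneg_of_le (by positivity) ?_
    calc Real.exp (-(4 * π ^ 2 * T * (√m - √n) ^ 2))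
        ≤ Real.exp (1 + -(√(T / m) * |(n : ℝ) - m|)) := by
          gcongr
          nlinarith [sq_nonneg (√(T / m) * |(n : ℝ) - m| - 1 / 2)]
      _ ≤ 3 * Real.exp (-(√(T / m) * |(n : ℝ) - m|)) := by
          rw [Real.exp_add]
          gcongr
          exact Real.exp_one_lt_three.le

theorem sum_exp_neg_mul_sq_sqrt_sub_le {T : ℝ} (hT : 1 ≤ T) (s : Finset ℕ) (m : ℕ) :
    ∑ n ∈ s, Real.exp (-(4 * π ^ 2 * T * (√m - √n) ^ 2)) ≤ 8 * (1 + √(m / T)) := by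
  have hgeom := sum_exp_neg_mul_le one_pos s
  have hsqrt := Real.sqrt_nonneg (m / T)
  rcases Nat.eq_zero_or_pos m with rfl | hm
  · refine (Finset.sum_le_sum fun n _ ↦ ?_).trans (hgeom.trans (by linarith))
    rw [Nat.cast_zero, Real.sqrt_zero, zero_sub, neg_sq, Real.sq_sqrt (Nat.cast_nonneg n)]
    gcongr
    nlinarith [Real.pi_gt_three]
  · have hrow := Finset.sum_le_sum fun n (_ : n ∈ s) ↦ exp_neg_mul_sq_sqrt_sub_le hT hm n
    have hnear := sum_exp_neg_mul_abs_sub_le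
      (Real.sqrt_pos.mpr (by positivity : 0 < T / m)) s m
    rw [Finset.sum_add_distrib, ← Finset.mul_sum] at hrow
    rw [one_div, ← Real.sqrt_inv, inv_div] at hnear
    linarith

theorem integrable_exp_neg_mul_sq_mul_cos {b : ℝ} (hb : 0 < b) (β : ℝ) :
    Integrable fun u : ℝ ↦ Real.exp (-b * u ^ 2) * Real.cos (β * u) :=
  integrable_mul_of_abs_le (integrable_exp_neg_mul_sq hb) (by fun_prop)
    fun u ↦ Real.abs_cos_le_one _

theorem integral_exp_neg_mul_sq_mul_cos {b : ℝ} (hb : 0 < b) (β : ℝ) :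
    ∫ u : ℝ, Real.exp (-b * u ^ 2) * Real.cos (β * u) =
      √(π / b) * Real.exp (-β ^ 2 / (4 * b)) := by
  have hre (u : ℝ) : Real.exp (-b * u ^ 2) * Real.cos (β * u) =
      RCLike.re (Complex.exp (Complex.I * β * u) * Complex.exp (-(b : ℂ) * (u : ℂ) ^ 2)) := by
    rw [RCLike.re_eq_complex_re, ← Complex.exp_add, Complex.exp_re]
    simp [pow_two]
  have hint : Integrable fun u : ℝ ↦
      Complex.exp (Complex.I * β * u) * Complex.exp (-(b : ℂ) * (u : ℂ) ^ 2) := by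
    refine (integrable_exp_neg_mul_sq hb).mono' (by fun_prop) (Eventually.of_forall fun u ↦ ?_)
    rw [← Complex.exp_add, Complex.norm_exp]
    simp [pow_two]
  have hsqrt : ((π : ℂ) / b) ^ (1 / 2 : ℂ) = (√(π / b) : ℝ) := by
    rw [Real.sqrt_eq_rpow, Complex.ofReal_cpow (by positivity)]
    push_cast
    rfl
  have hexp : Complex.exp (-(β : ℂ) ^ 2 / (4 * b)) = (Real.exp (-β ^ 2 / (4 * b)) : ℝ) := by
    push_cast
    rfl
  simp only [hre]
  rw [integral_re hint, fourierIntegral_gaussian (by simpa using hb), hsqrt, hexp,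
    ← Complex.ofReal_mul, RCLike.re_eq_complex_re, Complex.ofReal_re]

/-- Schur's test for a symmetric nonnegative kernel. -/
theorem sum_sum_mul_mul_le_sum_sq_mul_sum {ι : Type*} (s : Finset ι) (c : ι → ℝ)
    {K : ι → ι → ℝ} (hK : ∀ m n, 0 ≤ K m n) (hsymm : ∀ m n, K m n = K n m) :
    ∑ m ∈ s, ∑ n ∈ s, c m * c n * K m n ≤ ∑ m ∈ s, c m ^ 2 * ∑ n ∈ s, K m n := by
  have hswap : ∑ m ∈ s, ∑ n ∈ s, c n ^ 2 * K m n = ∑ m ∈ s, ∑ n ∈ s, c m ^ 2 * K m n := by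
    rw [Finset.sum_comm]
    simp only [hsymm]
  have hamgm : ∑ m ∈ s, ∑ n ∈ s, 2 * (c m * c n * K m n) ≤
      ∑ m ∈ s, ∑ n ∈ s, (c m ^ 2 * K m n + c n ^ 2 * K m n) :=
    Finset.sum_le_sum fun m _ ↦ Finset.sum_le_sum fun n _ ↦ by
      nlinarith [mul_nonneg (hK m n) (sq_nonneg (c m - c n))]
  simp only [Finset.sum_add_distrib, hswap, ← Finset.mul_sum] at hamgm
  linarith

theorem sq_sum_mul_cos_le {ι : Type*} (s : Finset ι) (c θ : ι → ℝ) :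
    (∑ m ∈ s, c m * Real.cos (θ m)) ^ 2 ≤
      ∑ m ∈ s, ∑ n ∈ s, c m * c n * Real.cos (θ m - θ n) := by
  have hsplit : ∑ m ∈ s, ∑ n ∈ s, c m * c n * Real.cos (θ m - θ n) =
      (∑ m ∈ s, c m * Real.cos (θ m)) ^ 2 + (∑ m ∈ s, c m * Real.sin (θ m)) ^ 2 := by
    simp only [pow_two, Finset.sum_mul_sum, ← Finset.sum_add_distrib]
    refine Finset.sum_congr rfl fun m _ ↦ Finset.sum_congr rfl fun n _ ↦ ?_
    rw [Real.cos_sub]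
    ring
  rw [hsplit]
  exact le_add_of_nonneg_right (sq_nonneg _)

theorem integral_exp_mul_sq_sum_cos_le {ι : Type*} {b : ℝ} (hb : 0 < b) (s : Finset ι)
    (c ω : ι → ℝ) (θ : ℝ) :
    Integrable (fun u : ℝ ↦
        Real.exp (-b * u ^ 2) * (∑ m ∈ s, c m * Real.cos (ω m * u - θ)) ^ 2) ∧
      ∫ u : ℝ, Real.exp (-b * u ^ 2) * (∑ m ∈ s, c m * Real.cos (ω m * u - θ)) ^ 2 ≤
        √(π / b) * ∑ m ∈ s, c m ^ 2 * ∑ n ∈ s, Real.exp (-(ω m - ω n) ^ 2 / (4 * b)) := by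
  have hterm (m n : ι) : Integrable fun u : ℝ ↦
      c m * c n * (Real.exp (-b * u ^ 2) * Real.cos ((ω m - ω n) * u)) :=
    (integrable_exp_neg_mul_sq_mul_cos hb _).const_mul _
  have hquad : Integrable fun u : ℝ ↦ ∑ m ∈ s, ∑ n ∈ s,
      c m * c n * (Real.exp (-b * u ^ 2) * Real.cos ((ω m - ω n) * u)) :=
    integrable_finsetSum _ fun m _ ↦ integrable_finsetSum _ fun n _ ↦ hterm m n
  have hbound (u : ℝ) : Real.exp (-b * u ^ 2) * (∑ m ∈ s, c m * Real.cos (ω m * u - θ)) ^ 2 ≤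
      ∑ m ∈ s, ∑ n ∈ s, c m * c n * (Real.exp (-b * u ^ 2) * Real.cos ((ω m - ω n) * u)) := by
    refine (mul_le_mul_of_nonneg_left (sq_sum_mul_cos_le s c fun m ↦ ω m * u - θ)
      (Real.exp_pos _).le).trans_eq ?_
    simp only [Finset.mul_sum]
    refine Finset.sum_congr rfl fun m _ ↦ Finset.sum_congr rfl fun n _ ↦ ?_
    rw [sub_sub_sub_cancel_right, ← sub_mul]
    ring
  have hint : Integrable fun u : ℝ ↦
      Real.exp (-b * u ^ 2) * (∑ m ∈ s, c m * Real.cos (ω m * u - θ)) ^ 2 :=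
    hquad.mono' (by fun_prop) (Eventually.of_forall fun u ↦ by
      rw [Real.norm_of_nonneg (by positivity)]
      exact hbound u)
  refine ⟨hint, (integral_mono hint hquad hbound).trans ?_⟩
  rw [integral_finsetSum _ fun m _ ↦ integrable_finsetSum _ fun n _ ↦ hterm m n]
  simp only [integral_finsetSum _ fun n _ ↦ hterm _ n, integral_const_mul,
    integral_exp_neg_mul_sq_mul_cos hb, mul_left_comm _ √(π / b), ← Finset.mul_sum]
  refine mul_le_mul_of_nonneg_left ?_ (Real.sqrt_nonneg _)
  exact sum_sum_mul_mul_le_sum_sq_mul_sum s c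
    (K := fun m n ↦ Real.exp (-(ω m - ω n) ^ 2 / (4 * b))) (fun m n ↦ (Real.exp_pos _).le)
    fun m n ↦ by rw [← neg_sub (ω n), neg_sq]

end GaussianMeanSquare

section SqrtFrequencyMeanSquare

open Set Filter Topology
open scoped Real

theorem intervalIntegral_le_exp_mul_integral_exp_mul {f : ℝ → ℝ} {T : ℝ} (hT : 0 < T)
    (hf : Continuous f) (hf₀ : ∀ u, 0 ≤ f u)
    (hint : Integrable fun u ↦ Real.exp (-T⁻¹ * u ^ 2) * f u) :
    ∫ u in √T..√(2 * T), f u ≤ Real.exp 2 * ∫ u, Real.exp (-T⁻¹ * u ^ 2) * f u := by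
  have hle : √T ≤ √(2 * T) := Real.sqrt_le_sqrt (by linarith)
  have hweight {u : ℝ} (hu : u ∈ Icc √T √(2 * T)) :
      1 ≤ Real.exp 2 * Real.exp (-T⁻¹ * u ^ 2) := by
    have husq : u ^ 2 ≤ 2 * T := by
      rw [← Real.sq_sqrt (by positivity : 0 ≤ 2 * T)]
      exact pow_le_pow_left₀ ((Real.sqrt_nonneg _).trans hu.1) hu.2 2
    have hexponent : T⁻¹ * u ^ 2 ≤ 2 := by
      rw [inv_mul_le_iff₀ hT]
      linarith
    rw [← Real.exp_add]
    exact Real.one_le_exp (by linarith)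
  rw [← integral_const_mul]
  calc ∫ u in √T..√(2 * T), f u
      ≤ ∫ u in √T..√(2 * T), Real.exp 2 * (Real.exp (-T⁻¹ * u ^ 2) * f u) :=
        intervalIntegral.integral_mono_on hle (hf.intervalIntegrable _ _)
          (hint.const_mul _).intervalIntegrable fun u hu ↦ by
            rw [← mul_assoc]
            exact le_mul_of_one_le_left (hf₀ u) (hweight hu)
    _ ≤ ∫ u, Real.exp 2 * (Real.exp (-T⁻¹ * u ^ 2) * f u) := by
        rw [intervalIntegral.integral_of_le hle]
        exact setIntegral_le_integral (hint.const_mul _) (Eventually.of_forall fun u ↦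
          mul_nonneg (Real.exp_pos _).le (mul_nonneg (Real.exp_pos _).le (hf₀ u)))

theorem intervalIntegral_sq_sum_mul_cos_sqrt_le {T : ℝ} (hT : 1 ≤ T) (s : Finset ℕ)
    (c : ℕ → ℝ) (θ : ℝ) :
    ∫ u in √T..√(2 * T), (∑ m ∈ s, c m * Real.cos (4 * π * √m * u - θ)) ^ 2 ≤
      Real.exp 2 * √(π * T) * (8 * ∑ m ∈ s, c m ^ 2 * (1 + √(m / T))) := by
  have hT₀ : 0 < T := one_pos.trans_le hT
  obtain ⟨hint, hle⟩ := integral_exp_mul_sq_sum_cos_le (inv_pos.mpr hT₀) s c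
    (fun m ↦ 4 * π * √m) θ
  have hexponent (m n : ℕ) : -(4 * π * √m - 4 * π * √n) ^ 2 / (4 * T⁻¹) =
      -(4 * π ^ 2 * T * (√m - √n) ^ 2) := by
    field_simp
  simp only [hexponent, div_inv_eq_mul] at hle
  calc ∫ u in √T..√(2 * T), (∑ m ∈ s, c m * Real.cos (4 * π * √m * u - θ)) ^ 2
      ≤ Real.exp 2 * ∫ u, Real.exp (-T⁻¹ * u ^ 2) *
          (∑ m ∈ s, c m * Real.cos (4 * π * √m * u - θ)) ^ 2 :=
        intervalIntegral_le_exp_mul_integral_exp_mul hT₀ (by fun_prop) (fun u ↦ sq_nonneg _) hint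
    _ ≤ Real.exp 2 * (√(π * T) * ∑ m ∈ s, c m ^ 2 * (8 * (1 + √(m / T)))) := by
        refine mul_le_mul_of_nonneg_left (hle.trans ?_) (Real.exp_pos _).le
        gcongr with m
        exact sum_exp_neg_mul_sq_sqrt_sub_le hT s m
    _ = Real.exp 2 * √(π * T) * (8 * ∑ m ∈ s, c m ^ 2 * (1 + √(m / T))) := by
        simp only [mul_left_comm _ (8 : ℝ), ← Finset.mul_sum, mul_assoc]

theorem continuous_tsum_mul_cos {c : ℕ → ℝ} (hc : Summable c) (ω : ℕ → ℝ) (θ : ℝ) :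
    Continuous fun u : ℝ ↦ ∑' m, c m * Real.cos (ω m * u - θ) :=
  continuous_tsum (fun m ↦ by fun_prop) hc.abs fun m u ↦ norm_mul_cos_le _ _

theorem intervalIntegral_sq_tsum_mul_cos_sqrt_le {c : ℕ → ℝ} (hc : Summable c) {T B : ℝ}
    (hT : 1 ≤ T) (hB : ∀ N : ℕ, ∑ m ∈ Finset.range N, c m ^ 2 * (1 + √(m / T)) ≤ B) (θ : ℝ) :
    ∫ u in √T..√(2 * T), (∑' m : ℕ, c m * Real.cos (4 * π * √m * u - θ)) ^ 2 ≤
      Real.exp 2 * √(π * T) * (8 * B) := by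
  have hlim : Tendsto (fun N : ℕ ↦ ∫ u in √T..√(2 * T),
      (∑ m ∈ Finset.range N, c m * Real.cos (4 * π * √m * u - θ)) ^ 2) atTop
      (𝓝 (∫ u in √T..√(2 * T), (∑' m : ℕ, c m * Real.cos (4 * π * √m * u - θ)) ^ 2)) := by
    refine intervalIntegral.tendsto_integral_filter_of_dominated_convergence
      (fun _ ↦ (∑' m, |c m|) ^ 2)
      (Eventually.of_forall fun N ↦ Continuous.aestronglyMeasurable (by fun_prop))
      (Eventually.of_forall fun N ↦ Eventually.of_forall fun u _ ↦ ?_) intervalIntegrable_const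
      (Eventually.of_forall fun u _ ↦ ((summable_mul_cos hc _).tendsto_sum_tsum_nat).pow 2)
    rw [norm_pow]
    refine pow_le_pow_left₀ (norm_nonneg _) ((norm_sum_le _ _).trans ?_) 2
    exact (Finset.sum_le_sum fun m _ ↦ norm_mul_cos_le (c m) _).trans
      (hc.abs.sum_le_tsum _ fun _ _ ↦ abs_nonneg _)
  refine le_of_tendsto' hlim fun N ↦
    (intervalIntegral_sq_sum_mul_cos_sqrt_le hT (Finset.range N) c θ).trans ?_
  gcongr
  exact hB N

theorem intervalIntegral_sqrt_mul_comp_sqrt_le {f : ℝ → ℝ} {T : ℝ} (hT : 0 ≤ T)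
    (hf : Continuous f) (hf₀ : ∀ u, 0 ≤ f u) :
    ∫ x in T..2 * T, √x * f √x ≤ 4 * T * ∫ u in √T..√(2 * T), f u := by
  have hle : √T ≤ √(2 * T) := Real.sqrt_le_sqrt (by linarith)
  have hT₂ : (0 : ℝ) ≤ 2 * T := by positivity
  have hchange := intervalIntegral.integral_comp_mul_deriv (a := √T) (b := √(2 * T))
    (f := fun u : ℝ ↦ u ^ 2) (f' := fun u ↦ 2 * u) (g := fun x ↦ √x * f √x)
    (fun u _ ↦ by simpa using hasDerivAt_pow 2 u) (by fun_prop) (by fun_prop)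
  simp only [Function.comp_apply, Real.sq_sqrt hT, Real.sq_sqrt hT₂] at hchange
  rw [← hchange, ← intervalIntegral.integral_const_mul]
  refine intervalIntegral.integral_mono_on hle
    (Continuous.intervalIntegrable (by fun_prop) _ _)
    (Continuous.intervalIntegrable (by fun_prop) _ _) fun u hu ↦ ?_
  have hu₀ : 0 ≤ u := (Real.sqrt_nonneg T).trans hu.1
  have husq : u ^ 2 ≤ 2 * T := (pow_le_pow_left₀ hu₀ hu.2 2).trans_eq (Real.sq_sqrt hT₂)
  rw [Real.sqrt_sq hu₀]
  calc u * f u * (2 * u) = 2 * u ^ 2 * f u := by ring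
    _ ≤ 4 * T * f u := mul_le_mul_of_nonneg_right (by linarith) (hf₀ u)

end SqrtFrequencyMeanSquare

section DivisorSquareSums

theorem divfun_mul_le (a b : ℕ) : divfun (a * b) ≤ divfun a * divfun b := by
  open scoped Pointwise in
  rw [divfun, Nat.divisors_mul]
  exact Finset.card_mul_le

theorem card_divisorsAntidiagonal (n : ℕ) : n.divisorsAntidiagonal.card = divfun n := by
  rw [← Nat.map_div_right_divisors, Finset.card_map, divfun]

theorem sq_divfun_le_sum_divisorsAntidiagonal (n : ℕ) :
    divfun n ^ 2 ≤ ∑ p ∈ n.divisorsAntidiagonal, divfun p.1 * divfun p.2 := by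
  calc divfun n ^ 2 = ∑ p ∈ n.divisorsAntidiagonal, divfun (p.1 * p.2) := by
        rw [Finset.sum_congr rfl fun p hp ↦ by rw [(Nat.mem_divisorsAntidiagonal.mp hp).1],
          Finset.sum_const, card_divisorsAntidiagonal, smul_eq_mul, pow_two]
    _ ≤ ∑ p ∈ n.divisorsAntidiagonal, divfun p.1 * divfun p.2 :=
        Finset.sum_le_sum fun p _ ↦ divfun_mul_le p.1 p.2

theorem sum_sum_divisorsAntidiagonal {R : Type*} [Semiring R] {f g : ℕ → R} (hf : f 0 = 0)
    (hg : g 0 = 0) (N : ℕ) :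
    ∑ n ∈ Finset.Icc 1 N, ∑ p ∈ n.divisorsAntidiagonal, f p.1 * g p.2 =
      ∑ a ∈ Finset.Icc 1 N, f a * ∑ b ∈ Finset.Icc 1 (N / a), g b :=
  ArithmeticFunction.sum_Ioc_mul_eq_sum_sum ⟨f, hf⟩ ⟨g, hg⟩ N

theorem sum_inv_le_one_add_log (N : ℕ) :
    ∑ a ∈ Finset.Icc 1 N, (a : ℝ)⁻¹ ≤ 1 + Real.log N := by
  have hharmonic := harmonic_le_one_add_log N
  rw [harmonic_eq_sum_Icc] at hharmonic
  push_cast at hharmonic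
  exact hharmonic

theorem sum_divfun_div_le (N : ℕ) :
    ∑ n ∈ Finset.Icc 1 N, divfun n * (n : ℝ)⁻¹ ≤ (1 + Real.log N) ^ 2 := by
  have hterm (n : ℕ) : divfun n * (n : ℝ)⁻¹ =
      ∑ p ∈ n.divisorsAntidiagonal, (p.1 : ℝ)⁻¹ * (p.2 : ℝ)⁻¹ := by
    rw [Finset.sum_congr rfl fun p hp ↦ by
        rw [← mul_inv, ← Nat.cast_mul, (Nat.mem_divisorsAntidiagonal.mp hp).1],
      Finset.sum_const, card_divisorsAntidiagonal, nsmul_eq_mul]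
  simp only [hterm]
  rw [sum_sum_divisorsAntidiagonal (f := fun a ↦ (a : ℝ)⁻¹) (g := fun b ↦ (b : ℝ)⁻¹)
    (by simp) (by simp)]
  calc ∑ a ∈ Finset.Icc 1 N, (a : ℝ)⁻¹ * ∑ b ∈ Finset.Icc 1 (N / a), (b : ℝ)⁻¹
      ≤ ∑ a ∈ Finset.Icc 1 N, (a : ℝ)⁻¹ * ∑ b ∈ Finset.Icc 1 N, (b : ℝ)⁻¹ := by
        gcongr
        exact Nat.div_le_self _ _
    _ = (∑ a ∈ Finset.Icc 1 N, (a : ℝ)⁻¹) ^ 2 := by rw [← Finset.sum_mul, pow_two]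
    _ ≤ (1 + Real.log N) ^ 2 := by
        gcongr
        exact sum_inv_le_one_add_log N

theorem sum_sq_divfun_le (N : ℕ) :
    ∑ n ∈ Finset.Icc 1 N, (divfun n : ℝ) ^ 2 ≤ N * (1 + Real.log N) ^ 3 := by
  have hinner {a : ℕ} (ha : a ∈ Finset.Icc 1 N) :
      ∑ b ∈ Finset.Icc 1 (N / a), (divfun b : ℝ) ≤ N * (a : ℝ)⁻¹ * (1 + Real.log N) := by
    obtain ⟨ha₁, haN⟩ := Finset.mem_Icc.mp ha
    have ha₀ : (1 : ℝ) ≤ a := mod_cast ha₁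
    have hratio : 1 ≤ (N / a : ℝ) := by
      rw [one_le_div (by positivity)]
      exact_mod_cast haN
    have hsum := sum_divfun_le hratio
    rw [Nat.floor_div_eq_div] at hsum
    rw [← div_eq_mul_inv]
    refine hsum.trans ?_
    gcongr
    exact div_le_self (Nat.cast_nonneg N) ha₀
  calc ∑ n ∈ Finset.Icc 1 N, (divfun n : ℝ) ^ 2
      ≤ ∑ n ∈ Finset.Icc 1 N, ∑ p ∈ n.divisorsAntidiagonal,
          (divfun p.1 : ℝ) * (divfun p.2 : ℝ) :=
        Finset.sum_le_sum fun n _ ↦ mod_cast sq_divfun_le_sum_divisorsAntidiagonal n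
    _ = ∑ a ∈ Finset.Icc 1 N, (divfun a : ℝ) * ∑ b ∈ Finset.Icc 1 (N / a), (divfun b : ℝ) :=
        sum_sum_divisorsAntidiagonal (f := fun a ↦ (divfun a : ℝ)) (g := fun b ↦ (divfun b : ℝ))
          (by simp [divfun]) (by simp [divfun]) N
    _ ≤ ∑ a ∈ Finset.Icc 1 N, (divfun a : ℝ) * (N * (a : ℝ)⁻¹ * (1 + Real.log N)) :=
        Finset.sum_le_sum fun a ha ↦ mul_le_mul_of_nonneg_left (hinner ha) (Nat.cast_nonneg _)
    _ = N * (1 + Real.log N) * ∑ a ∈ Finset.Icc 1 N, divfun a * (a : ℝ)⁻¹ := by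
        rw [Finset.mul_sum]
        exact Finset.sum_congr rfl fun a _ ↦ by ring
    _ ≤ N * (1 + Real.log N) * (1 + Real.log N) ^ 2 := by
        have := Real.log_natCast_nonneg N
        gcongr
        exact sum_divfun_div_le N
    _ = N * (1 + Real.log N) ^ 3 := by ring

theorem sum_range_mul_le_sum_range_mul_of_antitone {R : Type*} [CommRing R] [LinearOrder R]
    [IsStrictOrderedRing R] {a b f : ℕ → R} (hf : Antitone f) (hf₀ : ∀ n, 0 ≤ f n)
    (hab : ∀ N, ∑ n ∈ Finset.range N, a n ≤ ∑ n ∈ Finset.range N, b n) (N : ℕ) :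
    ∑ n ∈ Finset.range N, a n * f n ≤ ∑ n ∈ Finset.range N, b n * f n := by
  have hstrong (N : ℕ) : f N * (∑ n ∈ Finset.range N, b n - ∑ n ∈ Finset.range N, a n) ≤
      ∑ n ∈ Finset.range N, b n * f n - ∑ n ∈ Finset.range N, a n * f n := by
    induction N with
    | zero => simp
    | succ N ih =>
      refine (mul_le_mul_of_nonneg_right (hf N.le_succ) (sub_nonneg.mpr (hab (N + 1)))).trans ?_
      simp only [Finset.sum_range_succ]
      linarith
  have hdiff := mul_nonneg (hf₀ N) (sub_nonneg.mpr (hab N))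
  linarith [hstrong N]

theorem mul_sqrt_le_two_mul_sum_sqrt (N : ℕ) :
    (N : ℝ) * √N ≤ 2 * ∑ n ∈ Finset.range N, √(n + 1 : ℕ) := by
  induction N with
  | zero => simp
  | succ N ih =>
    rw [Finset.sum_range_succ]
    push_cast at ih ⊢
    have hr := Real.sq_sqrt (Nat.cast_nonneg (α := ℝ) N)
    have hs := Real.sq_sqrt (by positivity : (0 : ℝ) ≤ N + 1)
    have hr₀ := Real.sqrt_nonneg (N : ℝ)
    have hrs : √(N : ℝ) ≤ √(N + 1) := Real.sqrt_le_sqrt (by linarith)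
    have hstep : (N : ℝ) * (√(N + 1) - √N) ≤ √(N + 1) := by
      calc (N : ℝ) * (√(N + 1) - √N) = √N * (√N * (√(N + 1) - √N)) := by
            rw [← mul_assoc, ← pow_two, hr]
        _ ≤ √N * ((√(N + 1) + √N) * (√(N + 1) - √N)) := by
            have := sub_nonneg.mpr hrs
            gcongr
            linarith
        _ = √N := by rw [← sq_sub_sq, hs, hr, add_sub_cancel_left, mul_one]
        _ ≤ √(N + 1) := hrs
    linarith

theorem one_add_log_pow_three_le {T z : ℝ} (hT : 3 ≤ T) (hz : 0 < z) :
    (1 + Real.log z) ^ 3 ≤ 216 * Real.log T ^ 3 * (1 + √(z / T)) := by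
  have hT₀ : 0 < T := by linarith
  have hw : 1 ≤ 1 + z / T := le_add_of_nonneg_right (by positivity)
  set t := (1 + z / T) ^ (1 / 6 : ℝ)
  have ht : 1 ≤ t := Real.one_le_rpow hw (by norm_num)
  have ht₀ : 0 < t := one_pos.trans_le ht
  have ht_three : t ^ 3 = √(1 + z / T) := by
    rw [← Real.rpow_mul_natCast (by positivity), Real.sqrt_eq_rpow]
    norm_num
  have hlogz : Real.log z ≤ Real.log T + 6 * (t - 1) := by
    calc Real.log z ≤ Real.log (T * (1 + z / T)) :=
          Real.log_le_log hz (by rw [mul_add, mul_div_cancel₀ z hT₀.ne']; linarith)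
      _ = Real.log T + 6 * Real.log t := by
          rw [Real.log_mul (by positivity) (by positivity), Real.log_rpow (by positivity)]
          ring
      _ ≤ Real.log T + 6 * (t - 1) := by
          gcongr
          exact Real.log_le_sub_one_of_pos ht₀
  have hlogT := one_le_log hT
  calc (1 + Real.log z) ^ 3 ≤ (6 * t * Real.log T) ^ 3 :=
        (Odd.strictMono_pow (by decide)).monotone (by nlinarith)
    _ = 216 * Real.log T ^ 3 * √(1 + z / T) := by rw [← ht_three]; ring
    _ ≤ 216 * Real.log T ^ 3 * (1 + √(z / T)) := by
        gcongr
        rw [Real.sqrt_le_left (by positivity)]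
        nlinarith [Real.sq_sqrt (by positivity : 0 ≤ z / T), Real.sqrt_nonneg (z / T)]

theorem sum_sq_divfun_succ_le {T : ℝ} (hT : 3 ≤ T) (N : ℕ) :
    ∑ n ∈ Finset.range N, (divfun (n + 1) : ℝ) ^ 2 ≤
      ∑ n ∈ Finset.range N, 216 * Real.log T ^ 3 * (1 + 2 * √((n + 1 : ℕ) / T)) := by
  have hT₀ : 0 < T := by linarith
  have hlogT := one_le_log hT
  have hshift : ∑ n ∈ Finset.range N, (divfun (n + 1) : ℝ) ^ 2 =
      ∑ n ∈ Finset.Icc 1 N, (divfun n : ℝ) ^ 2 := by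
    rw [Finset.range_eq_Ico, Finset.sum_Ico_add' (fun n ↦ (divfun n : ℝ) ^ 2) 0 N 1]
    rfl
  have hsqrt : (N : ℝ) * √(N / T) ≤ 2 * ∑ n ∈ Finset.range N, √((n + 1 : ℕ) / T) := by
    simp only [Real.sqrt_div' _ hT₀.le, ← Finset.sum_div, ← mul_div_assoc]
    exact div_le_div_of_nonneg_right (mul_sqrt_le_two_mul_sum_sqrt N) (Real.sqrt_nonneg T)
  have hpow : (N : ℝ) * (1 + Real.log N) ^ 3 ≤
      N * (216 * Real.log T ^ 3 * (1 + √(N / T))) := by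
    rcases Nat.eq_zero_or_pos N with rfl | hN
    · simp
    · gcongr
      exact one_add_log_pow_three_le hT (Nat.cast_pos.mpr hN)
  calc ∑ n ∈ Finset.range N, (divfun (n + 1) : ℝ) ^ 2
      ≤ 216 * Real.log T ^ 3 * (N + N * √(N / T)) := by
        rw [hshift]
        exact ((sum_sq_divfun_le N).trans hpow).trans_eq (by ring)
    _ ≤ 216 * Real.log T ^ 3 * (N + 2 * ∑ n ∈ Finset.range N, √((n + 1 : ℕ) / T)) := by gcongr
    _ = ∑ n ∈ Finset.range N, 216 * Real.log T ^ 3 * (1 + 2 * √((n + 1 : ℕ) / T)) := by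
        rw [← Finset.mul_sum, Finset.sum_add_distrib, ← Finset.mul_sum, Finset.sum_const,
          Finset.card_range, nsmul_eq_mul, mul_one]

theorem sum_sq_divfun_succ_mul_le {T : ℝ} (hT : 3 ≤ T) {f : ℕ → ℝ} (hf : Antitone f)
    (hf₀ : ∀ n, 0 ≤ f n) (N : ℕ) :
    ∑ n ∈ Finset.range N, (divfun (n + 1) : ℝ) ^ 2 * f n ≤
      216 * Real.log T ^ 3 * ∑ n ∈ Finset.range N, (1 + 2 * √((n + 1 : ℕ) / T)) * f n := by
  simp only [Finset.mul_sum, ← mul_assoc]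
  exact sum_range_mul_le_sum_range_mul_of_antitone hf hf₀ (sum_sq_divfun_succ_le hT) N

end DivisorSquareSums

section ResidualCoefficients

open scoped Real

theorem sum_inv_sqrt_le (N : ℕ) : ∑ n ∈ Finset.range N, 1 / √(n + 1 : ℕ) ≤ 2 * √N := by
  induction N with
  | zero => simp
  | succ N ih =>
    rw [Finset.sum_range_succ]
    push_cast at ih ⊢
    have hs := Real.sqrt_pos.mpr (by positivity : (0 : ℝ) < N + 1)
    have hstep : 1 / √((N : ℝ) + 1) ≤ 2 * √(N + 1) - 2 * √N := by
      rw [div_le_iff₀ hs]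
      nlinarith [sq_nonneg (√((N : ℝ) + 1) - √N), Real.sq_sqrt (Nat.cast_nonneg (α := ℝ) N),
        Real.sq_sqrt (by positivity : (0 : ℝ) ≤ N + 1)]
    linarith

theorem one_div_mul_sqrt_succ_le {x : ℝ} (hx : 0 < x) :
    1 / ((x + 1) * √(x + 1)) ≤ 2 / √x - 2 / √(x + 1) := by
  have hr := Real.sqrt_pos.mpr hx
  have hs := Real.sqrt_pos.mpr (by linarith : 0 < x + 1)
  have hrs : √x ≤ √(x + 1) := Real.sqrt_le_sqrt (by linarith)
  have hgap : (√(x + 1) - √x) * (√(x + 1) + √x) = 1 := by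
    rw [mul_comm, ← sq_sub_sq, Real.sq_sqrt hx.le, Real.sq_sqrt (by linarith),
      add_sub_cancel_left]
  have hcube : (x + 1) * √(x + 1) = √(x + 1) ^ 3 := by
    rw [pow_succ, Real.sq_sqrt (by linarith)]
  rw [hcube, div_sub_div _ _ hr.ne' hs.ne', div_le_div_iff₀ (by positivity) (by positivity)]
  calc 1 * (√x * √(x + 1)) ≤ 1 * √(x + 1) ^ 2 := by
        rw [pow_two]
        gcongr
    _ = (√(x + 1) - √x) * (√(x + 1) + √x) * √(x + 1) ^ 2 := by rw [hgap]
    _ ≤ (√(x + 1) - √x) * (√(x + 1) + √(x + 1)) * √(x + 1) ^ 2 := by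
        have := sub_nonneg.mpr hrs
        gcongr
    _ = (2 * √(x + 1) - √x * 2) * √(x + 1) ^ 3 := by ring

theorem sum_one_div_add_mul_sqrt_le {y : ℝ} (hy : 0 < y) (N : ℕ) :
    ∑ n ∈ Finset.range N, 1 / (((n + 1 : ℕ) + y) * √((n + 1 : ℕ) + y)) ≤ 2 / √y := by
  have htelescope :
      ∑ n ∈ Finset.range N, 1 / (((n + 1 : ℕ) + y) * √((n + 1 : ℕ) + y)) ≤
        ∑ n ∈ Finset.range N, (2 / √((n : ℕ) + y) - 2 / √((n + 1 : ℕ) + y)) :=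
    Finset.sum_le_sum fun n _ ↦ by
      push_cast
      rw [add_right_comm]
      exact one_div_mul_sqrt_succ_le (by positivity)
  rw [Finset.sum_range_sub' (fun n : ℕ ↦ 2 / √((n : ℝ) + y)), Nat.cast_zero, zero_add]
    at htelescope
  exact htelescope.trans (sub_le_self _ (by positivity))

theorem sq_voronoiAmplitude (m : ℕ) :
    voronoiAmplitude m ^ 2 = 1 / (2 * π ^ 2) * (divfun m ^ 2 / (m * √m)) := by
  have hpow : ((m : ℝ) ^ (3 / 4 : ℝ)) ^ 2 = m * √m := by
    rw [← Real.rpow_mul_natCast (Nat.cast_nonneg m), Real.sqrt_eq_rpow,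
      ← Real.rpow_one_add' (Nat.cast_nonneg m) (by norm_num)]
    norm_num
  rw [voronoiAmplitude, mul_pow, div_pow, div_pow, hpow, mul_pow, Real.sq_sqrt zero_le_two,
    one_pow]

variable {T : ℝ} {m : ℕ}

theorem residualAmplitude_one_div_four_mul_sqrt (hT : 0 < T) (y : ℝ) (m : ℕ) :
    residualAmplitude (1 / (4 * √T)) y m = voronoiAmplitude m *
      (cosineTransform mollifier (√(m / T) / 2) - if m ≤ ⌊y⌋₊ then 1 else 0) := by
  have harg : 2 * (1 / (4 * √T)) * √m = √(m / T) / 2 := by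
    rw [Real.sqrt_div' _ hT.le]
    field_simp
    norm_num
  rw [residualAmplitude, harg]

theorem sq_residualAmplitude_mul_le_of_le {y : ℝ} (hm : 0 < m) (hmy : m ≤ ⌊y⌋₊) (hmT : m ≤ T) :
    residualAmplitude (1 / (4 * √T)) y m ^ 2 * (1 + √(m / T)) ≤ divfun m ^ 2 / (T * √m) := by
  have hm₀ : (0 : ℝ) < m := Nat.cast_pos.mpr hm
  have hT : 0 < T := hm₀.trans_le hmT
  have hq : √(m / T) ≤ 1 := Real.sqrt_le_one.mpr ((div_le_one hT).mpr hmT)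
  have hdefect : (cosineTransform mollifier (√(m / T) / 2) - 1) ^ 2 ≤ π ^ 2 * (m / T) :=
    calc (cosineTransform mollifier (√(m / T) / 2) - 1) ^ 2
        = |cosineTransform mollifier (√(m / T) / 2) - 1| ^ 2 := (sq_abs _).symm
      _ ≤ (2 * π * (√(m / T) / 2)) ^ 2 := by
          gcongr
          exact abs_cosineTransform_mollifier_sub_one_le (by positivity)
      _ = π ^ 2 * (m / T) := by
          rw [show 2 * π * (√(m / T) / 2) = π * √(m / T) by ring, mul_pow,
            Real.sq_sqrt (by positivity)]
  rw [residualAmplitude_one_div_four_mul_sqrt hT, if_pos hmy, mul_pow, sq_voronoiAmplitude]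
  calc 1 / (2 * π ^ 2) * (divfun m ^ 2 / (m * √m)) *
        (cosineTransform mollifier (√(m / T) / 2) - 1) ^ 2 * (1 + √(m / T))
      ≤ 1 / (2 * π ^ 2) * (divfun m ^ 2 / (m * √m)) * (π ^ 2 * (m / T)) * (1 + 1) := by gcongr
    _ = divfun m ^ 2 / (T * √m) := by
        field_simp
        ring

theorem exists_sq_cosineTransform_mollifier_mul_sq_le :
    ∃ A, 0 < A ∧ ∀ q, cosineTransform mollifier (q / 2) ^ 2 * (1 + q) ^ 2 ≤ A := by
  obtain ⟨C, hC, hdecay⟩ := exists_sq_mul_abs_cosineTransform_le mollifier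
  refine ⟨2 + 8 * C, by positivity, fun q ↦ ?_⟩
  have hle_one := abs_cosineTransform_mollifier_le_one (q / 2)
  have hnonneg := abs_nonneg (cosineTransform mollifier (q / 2))
  rw [← sq_abs]
  calc |cosineTransform mollifier (q / 2)| ^ 2 * (1 + q) ^ 2
      ≤ |cosineTransform mollifier (q / 2)| * (2 + 2 * q ^ 2) := by
        gcongr
        · nlinarith
        · nlinarith [sq_nonneg (1 - q)]
    _ = 2 * |cosineTransform mollifier (q / 2)| +
          8 * ((q / 2) ^ 2 * |cosineTransform mollifier (q / 2)|) := by ring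
    _ ≤ 2 + 8 * C := by linarith [hdecay (q / 2)]

theorem add_mul_sqrt_add_le {x y : ℝ} (hy : 0 ≤ y) (hyx : y ≤ x) :
    (x + y) * √(x + y) ≤ 4 * (x * √x) := by
  have hx : 0 ≤ x := hy.trans hyx
  calc (x + y) * √(x + y) ≤ (2 * x) * √(2 ^ 2 * x) := by
        gcongr <;> linarith
    _ = 4 * (x * √x) := by
        rw [Real.sqrt_mul (by norm_num), Real.sqrt_sq zero_le_two]
        ring

theorem exists_sq_residualAmplitude_mul_le_of_lt :
    ∃ A : ℝ, 0 < A ∧ ∀ (T y : ℝ) (m : ℕ), 0 < T → 0 ≤ y → y < m →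
      residualAmplitude (1 / (4 * √T)) y m ^ 2 * (1 + √(m / T)) ≤
        A * (divfun m ^ 2 / ((m + y) * √(m + y) * (1 + √(m / T)))) := by
  obtain ⟨A, hA, hdecay⟩ := exists_sq_cosineTransform_mollifier_mul_sq_le
  refine ⟨4 * A, by positivity, fun T y m hT hy hym ↦ ?_⟩
  have hm₀ : (0 : ℝ) < m := hy.trans_lt hym
  have hπ : 1 / (2 * π ^ 2) ≤ 1 := by
    rw [div_le_one (by positivity)]
    nlinarith [Real.pi_gt_three]
  have hdenominator : 1 / (m * √m) ≤ 4 / ((m + y) * √(m + y)) := by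
    rw [div_le_div_iff₀ (by positivity) (by positivity), one_mul]
    exact add_mul_sqrt_add_le hy hym.le
  have hsmall : cosineTransform mollifier (√(m / T) / 2) ^ 2 * (1 + √(m / T)) ≤
      A / (1 + √(m / T)) := by
    rw [le_div_iff₀ (by positivity), mul_assoc, ← pow_two]
    exact hdecay _
  rw [residualAmplitude_one_div_four_mul_sqrt hT, if_neg (not_le.mpr ((Nat.floor_lt hy).mpr hym)),
    sub_zero, mul_pow, sq_voronoiAmplitude]
  calc 1 / (2 * π ^ 2) * (divfun m ^ 2 / (m * √m)) *
        cosineTransform mollifier (√(m / T) / 2) ^ 2 * (1 + √(m / T))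
      = 1 / (2 * π ^ 2) * (divfun m ^ 2 * (1 / (m * √m)) *
          (cosineTransform mollifier (√(m / T) / 2) ^ 2 * (1 + √(m / T)))) := by ring
    _ ≤ 1 * (divfun m ^ 2 * (4 / ((m + y) * √(m + y))) * (A / (1 + √(m / T)))) := by gcongr
    _ = 4 * A * (divfun m ^ 2 / ((m + y) * √(m + y) * (1 + √(m / T)))) := by
        field_simp

theorem sum_sq_divfun_div_mul_sqrt_le {y : ℝ} (hT : 3 ≤ T) (hy : 0 < y) (hyT : y ≤ T) :
    ∑ n ∈ Finset.range ⌊y⌋₊, (divfun (n + 1) : ℝ) ^ 2 / (T * √(n + 1 : ℕ)) ≤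
      1296 * (Real.log T ^ 3 / √y) := by
  have hT₀ : 0 < T := by linarith
  have hlogT := one_le_log hT
  have hterm {n : ℕ} (hn : n ∈ Finset.range ⌊y⌋₊) :
      (1 + 2 * √((n + 1 : ℕ) / T)) * (1 / (T * √(n + 1 : ℕ))) ≤
        3 / T * (1 / √(n + 1 : ℕ)) := by
    have hnT : ((n + 1 : ℕ) : ℝ) ≤ T :=
      ((Nat.le_floor_iff hy.le).mp (Finset.mem_range.mp hn)).trans hyT
    have hq : √((n + 1 : ℕ) / T) ≤ 1 := Real.sqrt_le_one.mpr ((div_le_one hT₀).mpr hnT)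
    calc (1 + 2 * √((n + 1 : ℕ) / T)) * (1 / (T * √(n + 1 : ℕ)))
        ≤ (1 + 2 * 1) * (1 / (T * √(n + 1 : ℕ))) := by gcongr
      _ = 3 / T * (1 / √(n + 1 : ℕ)) := by
          rw [div_mul_div_comm, mul_one_div]
          norm_num
  have hantitone : Antitone fun n : ℕ ↦ 1 / (T * √(n + 1 : ℕ)) := fun a b hab ↦ by
    dsimp only
    gcongr
  calc ∑ n ∈ Finset.range ⌊y⌋₊, (divfun (n + 1) : ℝ) ^ 2 / (T * √(n + 1 : ℕ))
      = ∑ n ∈ Finset.range ⌊y⌋₊, (divfun (n + 1) : ℝ) ^ 2 * (1 / (T * √(n + 1 : ℕ))) := by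
        simp only [mul_one_div]
    _ ≤ 216 * Real.log T ^ 3 * ∑ n ∈ Finset.range ⌊y⌋₊, 3 / T * (1 / √(n + 1 : ℕ)) := by
        refine (sum_sq_divfun_succ_mul_le hT hantitone (fun n ↦ by positivity) _).trans ?_
        exact mul_le_mul_of_nonneg_left (Finset.sum_le_sum fun n hn ↦ hterm hn) (by positivity)
    _ ≤ 216 * Real.log T ^ 3 * (3 / T * (2 * √y)) := by
        rw [← Finset.mul_sum]
        gcongr
        refine (sum_inv_sqrt_le _).trans ?_
        gcongr
        exact Nat.floor_le hy.le
    _ = 1296 * (Real.log T ^ 3 / √y) * (y / T) := by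
        field_simp
        linarith [Real.mul_self_sqrt hy.le]
    _ ≤ 1296 * (Real.log T ^ 3 / √y) :=
        mul_le_of_le_one_right (by positivity) ((div_le_one hT₀).mpr hyT)

theorem sum_sq_divfun_div_add_mul_sqrt_le {y : ℝ} (hT : 3 ≤ T) (hy : 0 < y) (N : ℕ) :
    ∑ n ∈ Finset.range N, (divfun (n + 1) : ℝ) ^ 2 /
        (((n + 1 : ℕ) + y) * √((n + 1 : ℕ) + y) * (1 + √((n + 1 : ℕ) / T))) ≤
      864 * (Real.log T ^ 3 / √y) := by
  have hlogT := one_le_log hT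
  set g : ℕ → ℝ := fun n ↦ ((n + 1 : ℕ) + y) * √((n + 1 : ℕ) + y)
  have hantitone : Antitone fun n : ℕ ↦ 1 / (g n * (1 + √((n + 1 : ℕ) / T))) := fun a b hab ↦ by
    dsimp only [g]
    gcongr
  calc ∑ n ∈ Finset.range N, (divfun (n + 1) : ℝ) ^ 2 / (g n * (1 + √((n + 1 : ℕ) / T)))
      = ∑ n ∈ Finset.range N,
          (divfun (n + 1) : ℝ) ^ 2 * (1 / (g n * (1 + √((n + 1 : ℕ) / T)))) := by
        simp only [mul_one_div]
    _ ≤ 216 * Real.log T ^ 3 * ∑ n ∈ Finset.range N, 2 * (1 / g n) := by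
        refine (sum_sq_divfun_succ_mul_le hT hantitone (fun n ↦ by positivity) _).trans ?_
        refine mul_le_mul_of_nonneg_left (Finset.sum_le_sum fun n _ ↦ ?_) (by positivity)
        rw [mul_one_div, mul_one_div, div_le_div_iff₀ (by positivity) (by positivity)]
        have : 0 < g n := by positivity
        nlinarith
    _ ≤ 216 * Real.log T ^ 3 * (2 * (2 / √y)) := by
        rw [← Finset.mul_sum]
        gcongr
        exact sum_one_div_add_mul_sqrt_le hy N
    _ = 864 * (Real.log T ^ 3 / √y) := by ring

theorem exists_sum_sq_residualAmplitude_mul_le :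
    ∃ C : ℝ, 0 < C ∧ ∀ (T y : ℝ) (N : ℕ), 3 ≤ T → 0 < y → y ≤ T →
      ∑ m ∈ Finset.range N, residualAmplitude (1 / (4 * √T)) y m ^ 2 * (1 + √(m / T)) ≤
        C * (Real.log T ^ 3 / √y) := by
  obtain ⟨A, hA, hfar⟩ := exists_sq_residualAmplitude_mul_le_of_lt
  refine ⟨1296 + 864 * A, by positivity, fun T y N hT hy hyT ↦ ?_⟩
  set a : ℕ → ℝ := fun m ↦ residualAmplitude (1 / (4 * √T)) y m ^ 2 * (1 + √(m / T))
  have ha (m : ℕ) : 0 ≤ a m := by positivity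
  have ha_zero : a 0 = 0 := by simp [a, residualAmplitude, voronoiAmplitude_zero]
  have hterm (n : ℕ) : a (n + 1) ≤
      (if n < ⌊y⌋₊ then (divfun (n + 1) : ℝ) ^ 2 / (T * √(n + 1 : ℕ)) else 0) +
        A * ((divfun (n + 1) : ℝ) ^ 2 /
          (((n + 1 : ℕ) + y) * √((n + 1 : ℕ) + y) * (1 + √((n + 1 : ℕ) / T)))) := by
    split_ifs with hn
    · exact (sq_residualAmplitude_mul_le_of_le n.succ_pos hn
        (((Nat.le_floor_iff hy.le).mp hn).trans hyT)).trans
          (le_add_of_nonneg_right (by positivity))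
    · rw [zero_add]
      exact hfar T y (n + 1) (by linarith) hy.le
        ((Nat.floor_lt hy.le).mp (Nat.lt_succ_of_le (not_lt.mp hn)))
  have hnear : ∑ n ∈ Finset.range N,
      (if n < ⌊y⌋₊ then (divfun (n + 1) : ℝ) ^ 2 / (T * √(n + 1 : ℕ)) else 0) ≤
        1296 * (Real.log T ^ 3 / √y) := by
    rw [← Finset.sum_filter]
    refine (Finset.sum_le_sum_of_subset_of_nonneg (fun n hn ↦ Finset.mem_range.mpr
      (Finset.mem_filter.mp hn).2) fun n _ _ ↦ ?_).trans (sum_sq_divfun_div_mul_sqrt_le hT hy hyT)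
    have : 0 < T := by linarith
    positivity
  calc ∑ m ∈ Finset.range N, a m ≤ ∑ m ∈ Finset.range (N + 1), a m := by
        rw [Finset.sum_range_succ]
        exact le_add_of_nonneg_right (ha N)
    _ = ∑ n ∈ Finset.range N, a (n + 1) := by rw [Finset.sum_range_succ', ha_zero, add_zero]
    _ ≤ 1296 * (Real.log T ^ 3 / √y) + A * (864 * (Real.log T ^ 3 / √y)) := by
        refine (Finset.sum_le_sum fun n _ ↦ hterm n).trans ?_
        rw [Finset.sum_add_distrib, ← Finset.mul_sum]
        gcongr
        exact sum_sq_divfun_div_add_mul_sqrt_le hT hy N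
    _ = (1296 + 864 * A) * (Real.log T ^ 3 / √y) := by ring

end ResidualCoefficients

section MeanSquare

open scoped Real

section FloorIntegral

variable (h : ℕ → ℝ)

theorem eqOn_comp_natFloor_uIoo (n : ℕ) :
    Set.EqOn (fun _ : ℝ ↦ h n) (fun x ↦ h ⌊x⌋₊) (Set.uIoo (n : ℝ) (n + 1 : ℕ)) := fun x hx ↦ by
  rw [Set.uIoo_of_le (by simp), Nat.cast_succ] at hx
  dsimp only
  rw [(Nat.floor_eq_iff (n.cast_nonneg.trans hx.1.le)).mpr ⟨hx.1.le, hx.2⟩]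

theorem intervalIntegrable_comp_natFloor (M : ℕ) :
    IntervalIntegrable (fun x : ℝ ↦ h ⌊x⌋₊) volume 0 M := by
  rw [← Nat.cast_zero]
  exact IntervalIntegrable.trans_iterate fun n _ ↦
    intervalIntegrable_const.congr_uIoo (eqOn_comp_natFloor_uIoo h n)

theorem integral_comp_natFloor (M : ℕ) :
    ∫ x in (0 : ℝ)..M, h ⌊x⌋₊ = ∑ n ∈ Finset.range M, h n := by
  rw [← Nat.cast_zero, ← intervalIntegral.sum_integral_adjacent_intervals fun n _ ↦
    intervalIntegrable_const.congr_uIoo (eqOn_comp_natFloor_uIoo h n)]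
  refine Finset.sum_congr rfl fun n _ ↦ ?_
  rw [← intervalIntegral.integral_congr_uIoo (eqOn_comp_natFloor_uIoo h n)]
  simp

variable {h} {a b : ℝ} {M : ℕ}

theorem intervalIntegrable_comp_natFloor_of_le (ha : 0 ≤ a) (hab : a ≤ b) (hb : b ≤ M) :
    IntervalIntegrable (fun x : ℝ ↦ h ⌊x⌋₊) volume a b :=
  (intervalIntegrable_comp_natFloor h M).mono_set (by
    rw [Set.uIcc_of_le hab, Set.uIcc_of_le (ha.trans (hab.trans hb))]
    exact Set.Icc_subset_Icc ha hb)

theorem integral_comp_natFloor_le_sum (hh : ∀ n, 0 ≤ h n) (ha : 0 ≤ a) (hab : a ≤ b)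
    (hb : b ≤ M) : ∫ x in a..b, h ⌊x⌋₊ ≤ ∑ n ∈ Finset.range M, h n := by
  rw [← integral_comp_natFloor]
  exact intervalIntegral.integral_mono_interval ha hab hb
    (Filter.Eventually.of_forall fun x ↦ hh ⌊x⌋₊) (intervalIntegrable_comp_natFloor h M)

end FloorIntegral

variable {T y : ℝ}

theorem sum_sq_divfun_succ_le_mul_log_pow (hT : 3 ≤ T) {M : ℕ} (hM : (M : ℝ) ≤ 3 * T) :
    ∑ n ∈ Finset.range M, (divfun (n + 1) : ℝ) ^ 2 ≤ 3240 * (T * Real.log T ^ 3) := by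
  have hT₀ : 0 < T := by linarith
  have hlogT := one_le_log hT
  have hterm {n : ℕ} (hn : n ∈ Finset.range M) : √((n + 1 : ℕ) / T) ≤ 2 := by
    rw [Real.sqrt_le_left zero_le_two, div_le_iff₀ hT₀]
    have : ((n + 1 : ℕ) : ℝ) ≤ M := Nat.cast_le.mpr (Finset.mem_range.mp hn)
    linarith
  calc ∑ n ∈ Finset.range M, (divfun (n + 1) : ℝ) ^ 2
      ≤ ∑ n ∈ Finset.range M, 216 * Real.log T ^ 3 * (1 + 2 * √((n + 1 : ℕ) / T)) :=
        sum_sq_divfun_succ_le hT M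
    _ ≤ ∑ n ∈ Finset.range M, 216 * Real.log T ^ 3 * (1 + 2 * 2) :=
        Finset.sum_le_sum fun n hn ↦ by
          have := hterm hn
          gcongr
    _ = M * (216 * Real.log T ^ 3 * (1 + 2 * 2)) := by simp
    _ ≤ 3 * T * (216 * Real.log T ^ 3 * (1 + 2 * 2)) := by gcongr
    _ = 3240 * (T * Real.log T ^ 3) := by ring

theorem sum_sq_divfun_le_sum_sq_divfun_succ (M : ℕ) :
    ∑ n ∈ Finset.range M, (divfun n : ℝ) ^ 2 ≤ ∑ n ∈ Finset.range M, (divfun (n + 1) : ℝ) ^ 2 :=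
  calc ∑ n ∈ Finset.range M, (divfun n : ℝ) ^ 2
      ≤ ∑ n ∈ Finset.range (M + 1), (divfun n : ℝ) ^ 2 := by
        rw [Finset.sum_range_succ]
        exact le_add_of_nonneg_right (sq_nonneg _)
    _ = ∑ n ∈ Finset.range M, (divfun (n + 1) : ℝ) ^ 2 := by
        rw [Finset.sum_range_succ']
        simp [divfun]

theorem natCast_ceil_two_mul_le (hT : 1 ≤ T) : (⌈2 * T⌉₊ : ℝ) ≤ 3 * T := by
  linarith [Nat.ceil_lt_add_one (by linarith : 0 ≤ 2 * T)]

theorem integral_sq_divfun_floor_le (hT : 3 ≤ T) :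
    ∫ x in T..2 * T, (divfun ⌊x⌋₊ : ℝ) ^ 2 ≤ 3240 * (T * Real.log T ^ 3) :=
  (integral_comp_natFloor_le_sum (h := fun n ↦ (divfun n : ℝ) ^ 2) (fun n ↦ sq_nonneg _)
      (by linarith) (by linarith) (Nat.le_ceil _)).trans <|
    (sum_sq_divfun_le_sum_sq_divfun_succ _).trans <|
      sum_sq_divfun_succ_le_mul_log_pow hT (natCast_ceil_two_mul_le (by linarith))

theorem integral_sq_divfun_floor_succ_le (hT : 3 ≤ T) :
    ∫ x in T..2 * T, (divfun (⌊x⌋₊ + 1) : ℝ) ^ 2 ≤ 3240 * (T * Real.log T ^ 3) :=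
  (integral_comp_natFloor_le_sum (h := fun n ↦ (divfun (n + 1) : ℝ) ^ 2) (fun n ↦ sq_nonneg _)
      (by linarith) (by linarith) (Nat.le_ceil _)).trans <|
    sum_sq_divfun_succ_le_mul_log_pow hT (natCast_ceil_two_mul_le (by linarith))

theorem continuous_residualSeries {δ : ℝ} (hδ : 0 < δ) (y : ℝ) :
    Continuous (residualSeries δ y) :=
  continuous_tsum_mul_cos (summable_residualAmplitude hδ y) _ _

theorem exists_integral_sqrt_mul_sq_residualSeries_le :
    ∃ C : ℝ, 0 < C ∧ ∀ T y : ℝ, 3 ≤ T → 0 < y → y ≤ T →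
      ∫ x in T..2 * T, √x * residualSeries (1 / (4 * √T)) y √x ^ 2 ≤
        C * (T * √T / √y * Real.log T ^ 3) := by
  obtain ⟨C, hC, hsum⟩ := exists_sum_sq_residualAmplitude_mul_le
  refine ⟨576 * C, by positivity, fun T y hT hy hyT ↦ ?_⟩
  have hT₀ : 0 < T := by linarith
  have hδ : 0 < 1 / (4 * √T) := by positivity
  have hlogT := one_le_log hT
  have hsqrt : √(π * T) ≤ 2 * √T := by
    rw [Real.sqrt_le_left (by positivity), mul_pow, Real.sq_sqrt hT₀.le]
    nlinarith [Real.pi_lt_four]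
  calc ∫ x in T..2 * T, √x * residualSeries (1 / (4 * √T)) y √x ^ 2
      ≤ 4 * T * ∫ u in √T..√(2 * T), residualSeries (1 / (4 * √T)) y u ^ 2 :=
        intervalIntegral_sqrt_mul_comp_sqrt_le hT₀.le ((continuous_residualSeries hδ y).pow 2)
          fun u ↦ sq_nonneg _
    _ ≤ 4 * T * (Real.exp 2 * √(π * T) * (8 * (C * (Real.log T ^ 3 / √y)))) := by
        gcongr
        exact intervalIntegral_sq_tsum_mul_cos_sqrt_le (summable_residualAmplitude hδ y)
          (by linarith) (fun N ↦ hsum T y N hT hy hyT) _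
    _ ≤ 4 * T * (9 * (2 * √T) * (8 * (C * (Real.log T ^ 3 / √y)))) := by
        gcongr
        rw [← one_add_one_eq_two, Real.exp_add]
        nlinarith [Real.exp_one_lt_three, Real.exp_pos 1]
    _ = 576 * C * (T * √T / √y * Real.log T ^ 3) := by ring

theorem sq_add_add_add_le (a b c d : ℝ) :
    (a + b + c + d) ^ 2 ≤ 4 * (a ^ 2 + b ^ 2 + c ^ 2 + d ^ 2) := by
  nlinarith [sq_nonneg (a - b), sq_nonneg (a - c), sq_nonneg (a - d), sq_nonneg (b - c),
    sq_nonneg (b - d), sq_nonneg (c - d)]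

theorem sq_log_le_of_mem_Icc {x : ℝ} (hT : 3 ≤ T) (hx : x ∈ Set.Icc T (2 * T)) :
    Real.log x ^ 2 ≤ 4 * Real.log T ^ 3 := by
  have hx₀ : 0 < x := by linarith [hx.1]
  have hlogx : 0 ≤ Real.log x := Real.log_nonneg (by linarith [hx.1])
  have hlog : Real.log x ≤ 2 * Real.log T := by
    rw [← Nat.cast_two, ← Real.log_pow]
    exact Real.log_le_log hx₀ (by nlinarith [hx.2])
  calc Real.log x ^ 2 ≤ (2 * Real.log T) ^ 2 := by gcongr
    _ = 4 * Real.log T ^ 2 := by ring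
    _ ≤ 4 * Real.log T ^ 3 := by
        gcongr 4 * ?_
        exact pow_le_pow_right₀ (one_le_log hT) (by norm_num)

theorem exists_sq_r2_le :
    ∃ C : ℝ, 0 < C ∧ ∀ T y x : ℝ, 9 ≤ T → x ∈ Set.Icc T (2 * T) →
      R2 y x ^ 2 ≤ 4 * ((divfun ⌊x⌋₊ : ℝ) ^ 2 + (divfun (⌊x⌋₊ + 1) : ℝ) ^ 2 +
        C * Real.log T ^ 3 + √x * residualSeries (1 / (4 * √T)) y √x ^ 2) := by
  obtain ⟨C, hC, hR2⟩ := exists_abs_r2_le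
  refine ⟨C ^ 2 * 4, by positivity, fun T y x hT hx ↦ ?_⟩
  have hT₀ : 0 < T := by linarith
  have hTx := hx.1
  have hwidth : 8 * (1 / (4 * √T) * √x) ≤ 3 := by
    have hsqrt : √x ≤ 3 / 2 * √T := by
      rw [Real.sqrt_le_left (by positivity), mul_pow, Real.sq_sqrt hT₀.le]
      linarith [hx.2]
    rw [← mul_assoc, mul_one_div, div_mul_eq_mul_div, div_le_iff₀ (by positivity)]
    linarith
  have hbound := hR2 √x (1 / (4 * √T)) y (Real.le_sqrt' (by norm_num) |>.mpr (by linarith))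
    (by positivity) hwidth
  rw [Real.sq_sqrt (hT₀.le.trans hTx)] at hbound
  calc R2 y x ^ 2 = |R2 y x| ^ 2 := (sq_abs _).symm
    _ ≤ (divfun ⌊x⌋₊ + divfun (⌊x⌋₊ + 1) + C * Real.log x +
          √√x * |residualSeries (1 / (4 * √T)) y √x|) ^ 2 := by gcongr
    _ ≤ 4 * ((divfun ⌊x⌋₊ : ℝ) ^ 2 + (divfun (⌊x⌋₊ + 1) : ℝ) ^ 2 + (C * Real.log x) ^ 2 +
          (√√x * |residualSeries (1 / (4 * √T)) y √x|) ^ 2) := sq_add_add_add_le _ _ _ _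
    _ = 4 * ((divfun ⌊x⌋₊ : ℝ) ^ 2 + (divfun (⌊x⌋₊ + 1) : ℝ) ^ 2 + C ^ 2 * Real.log x ^ 2 +
          √x * residualSeries (1 / (4 * √T)) y √x ^ 2) := by
        rw [mul_pow √√x, Real.sq_sqrt (Real.sqrt_nonneg x), sq_abs, mul_pow C]
    _ ≤ _ := by
        rw [mul_assoc (C ^ 2)]
        gcongr
        exact sq_log_le_of_mem_Icc (by linarith) hx

theorem intervalIntegral_mono_of_nonneg {f g : ℝ → ℝ} {a b : ℝ} (hab : a ≤ b)
    (hf : ∀ x, 0 ≤ f x) (hg : IntervalIntegrable g volume a b)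
    (hfg : ∀ x ∈ Set.Icc a b, f x ≤ g x) : ∫ x in a..b, f x ≤ ∫ x in a..b, g x := by
  rw [intervalIntegral.integral_of_le hab, intervalIntegral.integral_of_le hab]
  exact integral_mono_of_nonneg (Filter.Eventually.of_forall hf) hg.1
    ((ae_restrict_iff' measurableSet_Ioc).mpr (Filter.Eventually.of_forall fun x hx ↦
      hfg x (Set.Ioc_subset_Icc_self hx)))

theorem exists_integral_sq_r2_le :
    ∃ C : ℝ, 0 < C ∧ ∀ T y : ℝ, 9 ≤ T → ∫ x in T..2 * T, R2 y x ^ 2 ≤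
      C * (T * Real.log T ^ 3) +
        4 * ∫ x in T..2 * T, √x * residualSeries (1 / (4 * √T)) y √x ^ 2 := by
  obtain ⟨C, hC, hR2⟩ := exists_sq_r2_le
  refine ⟨4 * (6480 + C), by positivity, fun T y hT ↦ ?_⟩
  have hTT : T ≤ 2 * T := by linarith
  have hfloor (h : ℕ → ℝ) : IntervalIntegrable (fun x ↦ h ⌊x⌋₊) volume T (2 * T) :=
    intervalIntegrable_comp_natFloor_of_le (by linarith) hTT (Nat.le_ceil _)
  have hd := hfloor fun n ↦ (divfun n : ℝ) ^ 2
  have hd' := hfloor fun n ↦ (divfun (n + 1) : ℝ) ^ 2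
  have hconst : IntervalIntegrable (fun _ ↦ C * Real.log T ^ 3) volume T (2 * T) :=
    intervalIntegrable_const
  have hresidual : IntervalIntegrable (fun x ↦ √x * residualSeries (1 / (4 * √T)) y √x ^ 2)
      volume T (2 * T) := by
    have := continuous_residualSeries (δ := 1 / (4 * √T)) (by positivity) y
    exact Continuous.intervalIntegrable (by fun_prop) _ _
  have hle := intervalIntegral_mono_of_nonneg hTT (fun x ↦ sq_nonneg (R2 y x))
    ((((hd.add hd').add hconst).add hresidual).const_mul 4) fun x ↦ hR2 T y x hT
  rw [intervalIntegral.integral_const_mul,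
    intervalIntegral.integral_add ((hd.add hd').add hconst) hresidual,
    intervalIntegral.integral_add (hd.add hd') hconst, intervalIntegral.integral_add hd hd',
    intervalIntegral.integral_const, smul_eq_mul] at hle
  linarith [integral_sq_divfun_floor_le (T := T) (by linarith),
    integral_sq_divfun_floor_succ_le (T := T) (by linarith)]

theorem le_mul_sqrt_div_sqrt (hy : 0 < y) (hyT : y ≤ T) : T ≤ T * √T / √y := by
  rw [mul_div_assoc]
  exact le_mul_of_one_le_right (hy.le.trans hyT)
    ((one_le_div (Real.sqrt_pos.mpr hy)).mpr (Real.sqrt_le_sqrt hyT))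

theorem rpow_three_halves_mul_rpow_neg_half (hT : 0 ≤ T) (hy : 0 ≤ y) :
    T ^ ((3 : ℝ) / 2) * y ^ (-(1 : ℝ) / 2) = T * √T / √y := by
  rw [show (3 : ℝ) / 2 = 1 + 1 / 2 by norm_num, Real.rpow_one_add' hT (by norm_num), neg_div,
    Real.rpow_neg hy, ← Real.sqrt_eq_rpow, ← Real.sqrt_eq_rpow, div_eq_mul_inv]

end MeanSquare

theorem R2_mean_square :
    ∃ C : ℝ, 0 < C ∧ ∀ T y : ℝ, 10 ≤ T → 2 ≤ y → y ≤ T →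
      (∫ x in T..(2 * T), R2 y x ^ 2) ≤
        C * T ^ ((3 : ℝ) / 2) * y ^ (-(1 : ℝ) / 2) * Real.log T ^ 3 := by
  obtain ⟨A, hA, hR2⟩ := exists_integral_sq_r2_le
  obtain ⟨B, hB, hresidual⟩ := exists_integral_sqrt_mul_sq_residualSeries_le
  refine ⟨A + 4 * B, by positivity, fun T y hT hy hyT ↦ ?_⟩
  have hy₀ : 0 < y := by linarith
  have hlogT := one_le_log (by linarith : 3 ≤ T)
  rw [mul_assoc (A + 4 * B), rpow_three_halves_mul_rpow_neg_half (by linarith) hy₀.le]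
  calc ∫ x in T..2 * T, R2 y x ^ 2
      ≤ A * (T * Real.log T ^ 3) +
          4 * ∫ x in T..2 * T, √x * residualSeries (1 / (4 * √T)) y √x ^ 2 :=
        hR2 T y (by linarith)
    _ ≤ A * (T * √T / √y * Real.log T ^ 3) + 4 * (B * (T * √T / √y * Real.log T ^ 3)) := by
        gcongr
        · exact le_mul_sqrt_div_sqrt hy₀ hyT
        · exact hresidual T y (by linarith) hy₀ hyT
    _ = (A + 4 * B) * (T * √T / √y) * Real.log T ^ 3 := by ring
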